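/- arXiv:2403.02030 — 9 statements merged into one kernel-verified Lean document; each statement's English description precedes it below -/
import Mathlib

section
/- Let O be the origin of ℝ², let P, P' ∈ ℝ² be linearly independent over ℝ, and let J = { Q ∈ ℝ² : ‖Q‖² ∈ ℚ, ‖Q−P‖² ∈ ℚ, ‖Q−P'‖² ∈ ℚ }. If J is Zariski-dense in ℝ² and J contains two points of ℚ² that are linearly independent over ℝ, then J = ℚ². -/
/-!
Write `p = ‖P‖²`, `p' = ‖P'‖²`. For `Q ∈ J` the numbers `x = 2⟨Q, P⟩ - p` and `y = 2⟨Q, P'⟩ - p'`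
are rational, and `(x, y)` is an affine coordinate system on the plane, in which `‖Q‖²` is a
quadratic polynomial `a x² + b x y + c y² + e x + f y + h`. This polynomial takes rational values at
the rational points `(x, y)` coming from the Zariski-dense set `J`, so its coefficients are
rational: a `ℚ`-linear map `φ : ℝ → ℚ` killing `1` turns it into a polynomial with coefficients
`φ a, φ b, …` that vanishes on `J`, hence is zero (`coeffs_killed`), and a real number killed by
all such `φ` is rational (`isRat_of_forall_dual`). Now `2 a p + b p' = e` and `b p + 2 c p' = f`
with `4 a c - b² ≠ 0`, so `p` and `p'` are rational (`isRat_norms`).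

Hence `⟨Q, P⟩` and `⟨Q, P'⟩` are rational for all `Q ∈ J`. Taking for `Q` the two independent
rational points of `J`, Cramer's rule (`isRat_of_dot`) shows that `P` and `P'` are rational.
Cramer's rule for `P, P'` then shows that every point of `J` is rational, and the converse inclusion
is clear.
-/

noncomputable section

/-- A real number is rational. -/
def IsRat (x : ℝ) : Prop := ∃ q : ℚ, (q : ℝ) = x

/-- A subset of the plane is Zariski-dense if the only real polynomial in two
variables vanishing identically on it is the zero polynomial. -/
def ZariskiDense (S : Set (EuclideanSpace ℝ (Fin 2))) : Prop :=
  ∀ f : MvPolynomial (Fin 2) ℝ,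
    (∀ Q ∈ S, MvPolynomial.eval (fun i => Q i) f = 0) → f = 0

namespace IsRat

lemma add {x y : ℝ} (hx : IsRat x) (hy : IsRat y) : IsRat (x + y) := by
  obtain ⟨a, rfl⟩ := hx
  obtain ⟨b, rfl⟩ := hy
  exact ⟨a + b, by push_cast; rfl⟩

lemma sub {x y : ℝ} (hx : IsRat x) (hy : IsRat y) : IsRat (x - y) := by
  obtain ⟨a, rfl⟩ := hx
  obtain ⟨b, rfl⟩ := hy
  exact ⟨a - b, by push_cast; rfl⟩

lemma mul {x y : ℝ} (hx : IsRat x) (hy : IsRat y) : IsRat (x * y) := by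
  obtain ⟨a, rfl⟩ := hx
  obtain ⟨b, rfl⟩ := hy
  exact ⟨a * b, by push_cast; rfl⟩

lemma div {x y : ℝ} (hx : IsRat x) (hy : IsRat y) : IsRat (x / y) := by
  obtain ⟨a, rfl⟩ := hx
  obtain ⟨b, rfl⟩ := hy
  exact ⟨a / b, by push_cast; rfl⟩

lemma two : IsRat 2 := ⟨2, by norm_num⟩

end IsRat

lemma isRat_of_forall_dual {r : ℝ} (h : ∀ φ : ℝ →ₗ[ℚ] ℚ, φ 1 = 0 → φ r = 0) : IsRat r := by
  by_contra hr
  have hmem : r ∉ Submodule.span ℚ {(1 : ℝ)} := by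
    intro hm
    obtain ⟨q, hq⟩ := Submodule.mem_span_singleton.1 hm
    exact hr ⟨q, by rw [← hq, Rat.smul_def, mul_one]⟩
  obtain ⟨φ, hφ, hle⟩ := Submodule.exists_le_ker_of_notMem hmem
  exact hφ (h φ (hle (Submodule.mem_span_singleton_self 1)))

/-- A `ℚ`-linear functional killing `1` kills every coefficient of a quadratic polynomial whose
values are rational at those rational pairs `(x, y)` which are the affine coordinates of the points
of a Zariski-dense set. The coordinates used are `x = 2 (m Q₀ + n Q₁) - p` and
`y = 2 (m' Q₀ + n' Q₁) - p'`. -/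
lemma coeffs_killed {S : Set (EuclideanSpace ℝ (Fin 2))} (hS : ZariskiDense S)
    {m n m' n' p p' : ℝ} (hdet : m * n' - n * m' ≠ 0) {a b c e f h : ℝ}
    (hx : ∀ Q ∈ S, IsRat (2 * (m * Q 0 + n * Q 1) - p))
    (hy : ∀ Q ∈ S, IsRat (2 * (m' * Q 0 + n' * Q 1) - p'))
    (hN : ∀ Q ∈ S, ∀ x y : ℝ, x = 2 * (m * Q 0 + n * Q 1) - p →
      y = 2 * (m' * Q 0 + n' * Q 1) - p' →
      IsRat (a * x ^ 2 + b * (x * y) + c * y ^ 2 + e * x + f * y + h))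
    (φ : ℝ →ₗ[ℚ] ℚ) (hφ : φ 1 = 0) :
    φ a = 0 ∧ φ b = 0 ∧ φ c = 0 ∧ φ e = 0 ∧ φ f = 0 := by
  have hrat : ∀ r : ℝ, IsRat r → φ r = 0 := by
    rintro _ ⟨q, rfl⟩
    have := φ.map_smul q 1
    rwa [Rat.smul_def, mul_one, hφ, smul_zero] at this
  have hmul : ∀ (r : ℝ) (q : ℚ), φ (r * q) = φ r * q := by
    intro r q
    rw [mul_comm r, ← Rat.smul_def, φ.map_smul, smul_eq_mul, mul_comm]
  let X : MvPolynomial (Fin 2) ℝ := .C 2 * (.C m * .X 0 + .C n * .X 1) - .C p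
  let Y : MvPolynomial (Fin 2) ℝ := .C 2 * (.C m' * .X 0 + .C n' * .X 1) - .C p'
  let F : MvPolynomial (Fin 2) ℝ := .C (φ a : ℝ) * X ^ 2 + .C (φ b : ℝ) * (X * Y)
    + .C (φ c : ℝ) * Y ^ 2 + .C (φ e : ℝ) * X + .C (φ f : ℝ) * Y + .C (φ h : ℝ)
  have hF : F = 0 := by
    apply hS
    intro Q hQ
    obtain ⟨x, hx'⟩ := hx Q hQ
    obtain ⟨y, hy'⟩ := hy Q hQ
    have h0 := hrat _ (hN Q hQ x y hx' hy')
    have hxx : ((x : ℝ)) ^ 2 = ((x ^ 2 : ℚ) : ℝ) := by push_cast; rfl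
    have hyy : ((y : ℝ)) ^ 2 = ((y ^ 2 : ℚ) : ℝ) := by push_cast; rfl
    have hxy : (x : ℝ) * y = ((x * y : ℚ) : ℝ) := by push_cast; rfl
    simp only [hxx, hyy, hxy, map_add, hmul] at h0
    simp only [F, X, Y, map_add, map_sub, map_mul, map_pow, MvPolynomial.eval_C,
      MvPolynomial.eval_X, ← hx', ← hy']
    exact_mod_cast h0
  -- Every pair of reals is the coordinate pair of a point, so `F = 0` holds as a function of `x, y`.
  have hval : ∀ x y : ℝ, φ a * x ^ 2 + φ b * (x * y) + φ c * y ^ 2 + φ e * x + φ f * y + φ h = 0 := by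
    intro x y
    have hev := congrArg (MvPolynomial.eval
      ![(n' * (x + p) - n * (y + p')) / (2 * (m * n' - n * m')),
        (m * (y + p') - m' * (x + p)) / (2 * (m * n' - n * m'))]) hF
    generalize hD : m * n' - n * m' = D at hdet hev
    have e1 : 2 * (m * ((n' * (x + p) - n * (y + p')) / (2 * D)) +
        n * ((m * (y + p') - m' * (x + p)) / (2 * D))) - p = x := by
      field_simp
      linear_combination (x + p) * hD
    have e2 : 2 * (m' * ((n' * (x + p) - n * (y + p')) / (2 * D)) +
        n' * ((m * (y + p') - m' * (x + p)) / (2 * D))) - p' = y := by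
      field_simp
      linear_combination (y + p') * hD
    simpa only [F, X, Y, map_add, map_sub, map_mul, map_pow, MvPolynomial.eval_C,
      MvPolynomial.eval_X, Matrix.cons_val_zero, Matrix.cons_val_one, e1, e2, map_zero] using hev
  have v0 := hval 0 0
  have v1 := hval 1 0
  have v2 := hval (-1) 0
  have v3 := hval 0 1
  have v4 := hval 0 (-1)
  have v5 := hval 1 1
  refine ⟨?_, ?_, ?_, ?_, ?_⟩ <;> rify <;> linarith

/-- If the points of a Zariski-dense set have rational squared distances to `0`, `(m, n)` and
`(m', n')`, then the squared norms of `(m, n)` and `(m', n')` are rational. The distances to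
`(m, n)` and `(m', n')` enter through `‖Q‖² - ‖Q - R‖² = 2 ⟨R, Q⟩ - ‖R‖²`. -/
lemma isRat_norms {S : Set (EuclideanSpace ℝ (Fin 2))} (hS : ZariskiDense S)
    {m n m' n' : ℝ} (hdet : m * n' - n * m' ≠ 0)
    (hx : ∀ Q ∈ S, IsRat (2 * (m * Q 0 + n * Q 1) - (m ^ 2 + n ^ 2)))
    (hy : ∀ Q ∈ S, IsRat (2 * (m' * Q 0 + n' * Q 1) - (m' ^ 2 + n' ^ 2)))
    (hN : ∀ Q ∈ S, IsRat (Q 0 ^ 2 + Q 1 ^ 2)) :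
    IsRat (m ^ 2 + n ^ 2) ∧ IsRat (m' ^ 2 + n' ^ 2) := by
  set p := m ^ 2 + n ^ 2 with hp
  set p' := m' ^ 2 + n' ^ 2 with hp'
  set g := m * m' + n * n' with hg
  set d := m * n' - n * m' with hd
  -- Lagrange's identity `p p' - g² = d²` is the Gram determinant of the two vectors; inverting the
  -- Gram matrix expresses the squared norm in the coordinates `x, y`.
  set a := p' / (4 * d ^ 2) with ha
  set b := -2 * g / (4 * d ^ 2) with hb
  set c := p / (4 * d ^ 2) with hc
  have hgram : p * p' - g ^ 2 = d ^ 2 := by rw [hp, hp', hg, hd]; ring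
  have hkill := coeffs_killed (a := a) (b := b) (c := c) (e := 2 * a * p + b * p')
    (f := b * p + 2 * c * p') (h := a * p ^ 2 + b * (p * p') + c * p' ^ 2) hS hdet hx hy (by
      rintro Q hQ x y hx' hy'
      convert hN Q hQ using 1
      have hx2 : x + p = 2 * (m * Q 0 + n * Q 1) := by rw [hx']; ring
      have hy2 : y + p' = 2 * (m' * Q 0 + n' * Q 1) := by rw [hy']; ring
      calc _ = a * (x + p) ^ 2 + b * ((x + p) * (y + p')) + c * (y + p') ^ 2 := by ring
        _ = _ := by
          rw [hx2, hy2, ha, hb, hc]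
          field_simp
          rw [hp, hp', hg, hd]
          ring)
  have ra : IsRat a := isRat_of_forall_dual fun φ hφ => (hkill φ hφ).1
  have rb : IsRat b := isRat_of_forall_dual fun φ hφ => (hkill φ hφ).2.1
  have rc : IsRat c := isRat_of_forall_dual fun φ hφ => (hkill φ hφ).2.2.1
  have re : IsRat (2 * a * p + b * p') := isRat_of_forall_dual fun φ hφ => (hkill φ hφ).2.2.2.1
  have rf : IsRat (b * p + 2 * c * p') := isRat_of_forall_dual fun φ hφ => (hkill φ hφ).2.2.2.2
  have hdisc : 2 * a * (2 * c) - b * b ≠ 0 := by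
    have : 2 * a * (2 * c) - b * b = 1 / (4 * d ^ 2) := by
      rw [ha, hb, hc]
      field_simp
      linear_combination 4 * hgram
    rw [this]
    positivity
  have r2a := IsRat.two.mul ra
  have r2c := IsRat.two.mul rc
  have rdisc := (r2a.mul r2c).sub (rb.mul rb)
  constructor
  · convert ((r2c.mul re).sub (rb.mul rf)).div rdisc using 1
    rw [eq_div_iff hdisc]
    ring
  · convert ((r2a.mul rf).sub (rb.mul re)).div rdisc using 1
    rw [eq_div_iff hdisc]
    ring

/-- Cramer's rule over `ℚ`: a vector `(u, v)` whose dot products with two independent rational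
vectors are rational is itself rational. -/
lemma isRat_of_dot {m n m' n' u v : ℝ} (hdet : m * n' - n * m' ≠ 0)
    (hm : IsRat m) (hn : IsRat n) (hm' : IsRat m') (hn' : IsRat n')
    (h : IsRat (m * u + n * v)) (h' : IsRat (m' * u + n' * v)) : IsRat u ∧ IsRat v := by
  have rd := (hm.mul hn').sub (hn.mul hm')
  constructor
  · convert ((hn'.mul h).sub (hn.mul h')).div rd using 1
    rw [eq_div_iff hdet]
    ring
  · convert ((hm.mul h').sub (hm'.mul h)).div rd using 1
    rw [eq_div_iff hdet]
    ring

lemma det_ne_zero_of_linearIndependent {A B : EuclideanSpace ℝ (Fin 2)}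
    (h : LinearIndependent ℝ ![A, B]) : A 0 * B 1 - A 1 * B 0 ≠ 0 := by
  intro h0
  rw [LinearIndependent.pair_iff] at h
  have h1 := h (B 0) (-A 0) (by
    ext i
    fin_cases i <;> simp <;> linarith)
  have h2 := h (B 1) (-A 1) (by
    ext i
    fin_cases i <;> simp <;> linarith)
  have hA : A = 0 := by
    ext i
    fin_cases i
    · simpa using h1.2
    · simpa using h2.2
  have h3 := h 1 0 (by simp [hA])
  exact one_ne_zero h3.1

theorem J_eq_rational_points_of_two_rational_points
    (P P' : EuclideanSpace ℝ (Fin 2)) (hind : LinearIndependent ℝ ![P, P'])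
    (J : Set (EuclideanSpace ℝ (Fin 2)))
    (hJ : J = {Q : EuclideanSpace ℝ (Fin 2) |
      IsRat (‖Q‖ ^ 2) ∧ IsRat (‖Q - P‖ ^ 2) ∧ IsRat (‖Q - P'‖ ^ 2)})
    (hZD : ZariskiDense J)
    (Q₁ Q₂ : EuclideanSpace ℝ (Fin 2)) (hQ₁ : Q₁ ∈ J) (hQ₂ : Q₂ ∈ J)
    (hQ₁rat : ∀ i, IsRat (Q₁ i)) (hQ₂rat : ∀ i, IsRat (Q₂ i))
    (hQind : LinearIndependent ℝ ![Q₁, Q₂]) :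
    J = {Q : EuclideanSpace ℝ (Fin 2) | ∀ i, IsRat (Q i)} := by
  have hnorm : ∀ Q : EuclideanSpace ℝ (Fin 2), ‖Q‖ ^ 2 = Q 0 ^ 2 + Q 1 ^ 2 := by
    intro Q
    simp [EuclideanSpace.norm_sq_eq, Fin.sum_univ_two]
  have hdP := det_ne_zero_of_linearIndependent hind
  have hdQ := det_ne_zero_of_linearIndependent hQind
  have hN : ∀ Q ∈ J, IsRat (Q 0 ^ 2 + Q 1 ^ 2) := by
    intro Q hQ
    rw [hJ] at hQ
    rw [← hnorm]
    exact hQ.1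
  -- The polarization identity `‖Q‖² - ‖Q - R‖² = 2 ⟨R, Q⟩ - ‖R‖²`.
  have hpol : ∀ Q R : EuclideanSpace ℝ (Fin 2), IsRat (‖Q‖ ^ 2) → IsRat (‖Q - R‖ ^ 2) →
      IsRat (2 * (R 0 * Q 0 + R 1 * Q 1) - (R 0 ^ 2 + R 1 ^ 2)) := by
    intro Q R h1 h2
    convert h1.sub h2 using 1
    rw [hnorm, hnorm]
    simp only [PiLp.sub_apply]
    ring
  have hx : ∀ Q ∈ J, IsRat (2 * (P 0 * Q 0 + P 1 * Q 1) - (P 0 ^ 2 + P 1 ^ 2)) := by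
    intro Q hQ
    rw [hJ] at hQ
    exact hpol Q P hQ.1 hQ.2.1
  have hy : ∀ Q ∈ J, IsRat (2 * (P' 0 * Q 0 + P' 1 * Q 1) - (P' 0 ^ 2 + P' 1 ^ 2)) := by
    intro Q hQ
    rw [hJ] at hQ
    exact hpol Q P' hQ.1 hQ.2.2
  obtain ⟨hp, hp'⟩ := isRat_norms hZD hdP hx hy hN
  have hu : ∀ Q ∈ J, IsRat (P 0 * Q 0 + P 1 * Q 1) := by
    intro Q hQ
    convert ((hx Q hQ).add hp).div IsRat.two using 1
    ring
  have hv : ∀ Q ∈ J, IsRat (P' 0 * Q 0 + P' 1 * Q 1) := by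
    intro Q hQ
    convert ((hy Q hQ).add hp').div IsRat.two using 1
    ring
  obtain ⟨hP0, hP1⟩ : IsRat (P 0) ∧ IsRat (P 1) :=
    isRat_of_dot hdQ (hQ₁rat 0) (hQ₁rat 1) (hQ₂rat 0) (hQ₂rat 1)
      (by simpa only [mul_comm] using hu Q₁ hQ₁) (by simpa only [mul_comm] using hu Q₂ hQ₂)
  obtain ⟨hP'0, hP'1⟩ : IsRat (P' 0) ∧ IsRat (P' 1) :=
    isRat_of_dot hdQ (hQ₁rat 0) (hQ₁rat 1) (hQ₂rat 0) (hQ₂rat 1)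
      (by simpa only [mul_comm] using hv Q₁ hQ₁) (by simpa only [mul_comm] using hv Q₂ hQ₂)
  have hnr : ∀ Q : EuclideanSpace ℝ (Fin 2), IsRat (Q 0) → IsRat (Q 1) → IsRat (‖Q‖ ^ 2) := by
    intro Q h0 h1
    rw [hnorm, sq, sq]
    exact (h0.mul h0).add (h1.mul h1)
  apply Set.Subset.antisymm
  · intro Q hQ
    obtain ⟨h0, h1⟩ := isRat_of_dot hdP hP0 hP1 hP'0 hP'1 (hu Q hQ) (hv Q hQ)
    exact Fin.forall_fin_two.2 ⟨h0, h1⟩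
  · intro Q hQ
    rw [hJ]
    exact ⟨hnr Q (hQ 0) (hQ 1), hnr _ ((hQ 0).sub hP0) ((hQ 1).sub hP1),
      hnr _ ((hQ 0).sub hP'0) ((hQ 1).sub hP'1)⟩
end
end

section
/- Let P, P' ∈ ℝ² be linearly independent over ℝ, and suppose that ‖P‖², ⟨P,P'⟩ and ‖P'‖² are all rational. Let J* = { Q ∈ ℝ² : ‖Q‖ ∈ ℚ, ‖Q−P‖ ∈ ℚ, ‖Q−P'‖ ∈ ℚ } be the set of points with rational distances from the origin, P and P'. Then J* is Zariski-dense in ℝ² if and only if there exist t, u ∈ ℚ such that the point Q = t·P + u·P' satisfies ‖Q‖ ∈ ℚ and ‖Q‖ ≠ 0. -/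
/-!
If the set of points at rational distance from `0`, `P`, `P'` is Zariski-dense it contains a nonzero
point `Q`; the law of cosines makes `⟪Q, P⟫` and `⟪Q, P'⟫` rational, so `Q` is a rational
combination of `P` and `P'` (`rat_coords_of_rat_distances`).

Conversely, a rational combination of nonzero rational norm yields an orthogonal basis `e₁, e₂` of
the rational span of `P, P'` with `‖x e₁ + y e₂‖² = x² + d y²` (`exists_orthogonal_frame`), hence
the usual rational parametrization `m ↦ w(m)` of the unit ellipse (`dirX`, `dirY`).  On the line
`ℝ w` through the origin with `w = w(m)`, `m` rational, `c w` has rational norm for rational `c`.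
Let `A`, `B` be the squared distances of `P`, `P'` from that line.  Writing
`c - ⟪P, w⟫ = (A / s - s) / 2` gives `‖c w - P‖ = |A / s + s| / 2`, and likewise for `P'` with
`B` and a parameter `t`.  So the required points on the line correspond to the rational points of
the genus one curve `A / s - s = B / t - t + h`, where `h = 2 ⟪P' - P, w⟫`.

Take `s = t = 0` as the origin `O` of this elliptic curve.  It carries the explicit point
`S : s = t = -(B - A) / h`.  As the line approaches the direction of `P' - P`, the quantity
`k = B - A` tends to `0` and `S` tends to `O`.  In the rescaled coordinate `x = s / k`, addition of
`S` becomes in the limit the translation by `-1 / h`, so the multiple `n S` has `x → -n / h`, and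
the multiples `S, 2 S, …, N S` are distinct once the line is close enough to the limit position.
The two involutions `Q ↦ -Q` and `Q ↦ S - Q`, whose composite is addition of `S`, are given by
rational formulas (`OnCurve.neg`, `OnCurve.flip`), so no group law is needed
(`exists_curve_points`, `eventually_many_points`).

Thus for every `N`, all rational `m` close to but different from the limit value `m₀` give lines
carrying at least `N` points of the set.  A polynomial vanishing on the set vanishes on each of
these lines as soon as `N` exceeds its degree, and these lines being infinitely many, it vanishes
everywhere (`eval_eq_zero_of_lines`).
-/

open scoped RealInnerProductSpace

noncomputable section

open Filter Topology

/-! ### The genus one curve of a line -/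

/-- The curve `A / s - s = B / t - t + h` with `B = A + k`, in the rescaled coordinates `x`, `v`
given by `s = k x` and `t = s + k² v = k (x + k v)`, after clearing denominators and dividing
by `k²`. -/
def OnCurve (A k h x v : ℝ) : Prop :=
  A * v - x = x * (x + k * v) * (h - k ^ 2 * v)

/-- `OnCurve.neg` with names for the recurring expressions. In the original coordinates the
new point is `(-t M / N, -s N / M)`, where `M = s t + A` and `N = s t + B`. -/
lemma onCurve_neg_aux {A k h x v y M N : ℝ} (hy : y = x + k * v) (hM : M = k ^ 2 * x * y + A)
    (hN : N = M + k) (hM0 : M ≠ 0) (hN0 : N ≠ 0) (H : A * v - x = x * y * (h - k ^ 2 * v)) :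
    OnCurve A k h (-y * M / N) (v - y / N - x / M) := by
  unfold OnCurve
  have hA : A = M - k ^ 2 * x * y := by linarith
  have hk : k = N - M := by linarith
  have hy' : -y * M / N + k * (v - y / N - x / M) = -x * N / M := by
    have : k * v = y - x := by linarith
    rw [mul_sub, mul_sub, this, hk]
    field_simp
    ring
  have hxy : -y * M / N * (-x * N / M) = x * y := by
    field_simp
  have e1 : y * M / N = k ^ 2 * x * y * (y / N) + A * (y / N) := by
    rw [hA]; ring
  have e2 : x = k ^ 2 * x * y * (x / M) + A * (x / M) := by
    rw [hA, ← add_mul, add_sub_cancel]; field_simp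
  have e3 : -y * M / N = -(y * M / N) := by ring
  rw [hy', hxy, e3]
  linear_combination H + e1 + e2

/-- Negation `Q ↦ -Q` on the curve, with origin `s = t = 0`. -/
lemma OnCurve.neg {A k h x v : ℝ} (H : OnCurve A k h x v)
    (hM : k ^ 2 * x * (x + k * v) + A ≠ 0) (hN : k ^ 2 * x * (x + k * v) + A + k ≠ 0) :
    OnCurve A k h
      (-(x + k * v) * (k ^ 2 * x * (x + k * v) + A) / (k ^ 2 * x * (x + k * v) + A + k))
      (v - (x + k * v) / (k ^ 2 * x * (x + k * v) + A + k)
        - x / (k ^ 2 * x * (x + k * v) + A)) :=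
  onCurve_neg_aux rfl rfl rfl hM hN H

/-- The involution `Q ↦ S - Q` on the curve: it preserves `t - s`, that is `v`, and exchanges the
two roots `x` of the equation of the curve, which is quadratic in `x` for fixed `v`. -/
lemma OnCurve.flip {A k h x v : ℝ} (H : OnCurve A k h x v) (hd : A * v - x ≠ 0) :
    OnCurve A k h (-(A * (x + k * v) * v) / (A * v - x)) v := by
  unfold OnCurve at *
  obtain ⟨g, hg⟩ : ∃ g, g = h - k ^ 2 * v := ⟨_, rfl⟩
  rw [← hg] at H ⊢
  have h1 : x ≠ 0 := by rintro rfl; exact hd (by simpa using H)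
  have h2 : x + k * v ≠ 0 := by intro h0; rw [h0] at H; apply hd; rw [H]; ring
  have h3 : g ≠ 0 := by intro h0; rw [h0] at H; apply hd; rw [H]; ring
  rw [H]
  have : -(A * (x + k * v) * v) / (x * (x + k * v) * g) = -(A * v) / (x * g) := by
    field_simp
  rw [this]
  field_simp
  linear_combination (-(A * v)) * H

lemma tendsto_div_of_eq {ι : Type*} {l : Filter ι} {f g : ι → ℝ} {a b c : ℝ}
    (hf : Tendsto f l (𝓝 a)) (hg : Tendsto g l (𝓝 b)) (hb : b ≠ 0) (e : a / b = c) :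
    Tendsto (fun i => f i / g i) l (𝓝 c) :=
  e ▸ hf.div hg hb

lemma tendsto_of_eq {ι : Type*} {l : Filter ι} {f : ι → ℝ} {a b : ℝ}
    (hf : Tendsto f l (𝓝 a)) (e : a = b) : Tendsto f l (𝓝 b) := e ▸ hf

/-- The multiples `(n + 1) S` of the point `S : x = -1 / h, v = 0`, for curves whose coefficient `k`
tends to `0`: their coordinates converge, with limits `x = -(n + 1) / h₀` that are pairwise
distinct, and they lie in any subfield containing the coefficients of the curve. -/
lemma exists_curve_points {ι : Type*} (l : Filter ι) (A k h : ι → ℝ) (A₀ h₀ : ℝ)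
    (hA₀ : A₀ ≠ 0) (hh₀ : h₀ ≠ 0) (tA : Tendsto A l (𝓝 A₀)) (tk : Tendsto k l (𝓝 0))
    (th : Tendsto h l (𝓝 h₀)) (K : Subfield ℝ) (n : ℕ) :
    ∃ x v : ι → ℝ, Tendsto x l (𝓝 (-(n + 1) / h₀)) ∧
      Tendsto v l (𝓝 ((n + 1) * n / (A₀ * h₀))) ∧
      (∀ᶠ i in l, OnCurve (A i) (k i) (h i) (x i) (v i)) ∧
      ∀ i, A i ∈ K → k i ∈ K → h i ∈ K → x i ∈ K ∧ v i ∈ K := by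
  induction n with
  | zero =>
    refine ⟨fun i => -1 / h i, fun _ => 0, ?_, ?_, ?_, ?_⟩
    · exact tendsto_div_of_eq tendsto_const_nhds th hh₀ (by simp)
    · simpa using tendsto_const_nhds
    · filter_upwards [th.eventually_ne hh₀] with i hi
      unfold OnCurve
      field_simp
      ring
    · intro i _ _ hh
      exact ⟨div_mem (neg_mem (one_mem K)) hh, zero_mem K⟩
  | succ n ih =>
    obtain ⟨x, v, tx, tv, hc, hK⟩ := ih
    have ty : Tendsto (fun i => x i + k i * v i) l (𝓝 (-(n + 1) / h₀)) := by
      simpa using tx.add (tk.mul tv)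
    have tM : Tendsto (fun i => k i ^ 2 * x i * (x i + k i * v i) + A i) l (𝓝 A₀) := by
      simpa using (((tk.pow 2).mul tx).mul ty).add tA
    have tN : Tendsto (fun i => k i ^ 2 * x i * (x i + k i * v i) + A i + k i) l (𝓝 A₀) := by
      simpa using tM.add tk
    -- Negate the point `(x, v)`, and then apply `Q ↦ S - Q`.
    obtain ⟨x₁, hx₁⟩ : ∃ f : ι → ℝ, f = fun i =>
      -(x i + k i * v i) * (k i ^ 2 * x i * (x i + k i * v i) + A i) /
        (k i ^ 2 * x i * (x i + k i * v i) + A i + k i) := ⟨_, rfl⟩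
    obtain ⟨v₁, hv₁⟩ : ∃ f : ι → ℝ, f = fun i =>
      v i - (x i + k i * v i) / (k i ^ 2 * x i * (x i + k i * v i) + A i + k i)
        - x i / (k i ^ 2 * x i * (x i + k i * v i) + A i) := ⟨_, rfl⟩
    have tx₁ : Tendsto x₁ l (𝓝 ((n + 1) / h₀)) := by
      rw [hx₁]
      exact tendsto_div_of_eq (ty.neg.mul tM) tN hA₀ (by field_simp)
    have tv₁ : Tendsto v₁ l (𝓝 ((n + 2) * (n + 1) / (A₀ * h₀))) := by
      rw [hv₁]
      exact tendsto_of_eq ((tv.sub (ty.div tN hA₀)).sub (tx.div tM hA₀))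
        (by field_simp; ring)
    have hc₁ : ∀ᶠ i in l, OnCurve (A i) (k i) (h i) (x₁ i) (v₁ i) := by
      filter_upwards [hc, tM.eventually_ne hA₀, tN.eventually_ne hA₀] with i h1 h2 h3
      rw [hx₁, hv₁]
      exact h1.neg h2 h3
    have hK₁ : ∀ i, A i ∈ K → k i ∈ K → h i ∈ K → x₁ i ∈ K ∧ v₁ i ∈ K := by
      intro i ha hk hh
      obtain ⟨a1, a2⟩ := hK i ha hk hh
      have a3 : x i + k i * v i ∈ K := add_mem a1 (mul_mem hk a2)
      have a4 : k i ^ 2 * x i * (x i + k i * v i) + A i ∈ K :=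
        add_mem (mul_mem (mul_mem (pow_mem hk 2) a1) a3) ha
      have a5 := add_mem a4 hk
      rw [hx₁, hv₁]
      exact ⟨div_mem (mul_mem (neg_mem a3) a4) a5,
        sub_mem (sub_mem a2 (div_mem a3 a5)) (div_mem a1 a4)⟩
    have hn1 : (n : ℝ) + 1 ≠ 0 := by positivity
    have tD : Tendsto (fun i => A i * v₁ i - x₁ i) l (𝓝 ((n + 1) ^ 2 / h₀)) := by
      exact tendsto_of_eq ((tA.mul tv₁).sub tx₁) (by field_simp; ring)
    have hD : ((n : ℝ) + 1) ^ 2 / h₀ ≠ 0 := div_ne_zero (pow_ne_zero 2 hn1) hh₀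
    refine ⟨fun i => -(A i * (x₁ i + k i * v₁ i) * v₁ i) / (A i * v₁ i - x₁ i), v₁,
      ?_, ?_, ?_, ?_⟩
    · refine tendsto_div_of_eq ((tA.mul (tx₁.add (tk.mul tv₁))).mul tv₁).neg tD hD ?_
      push_cast
      field_simp
      ring
    · refine tendsto_of_eq tv₁ ?_
      push_cast
      ring
    · filter_upwards [hc₁, tD.eventually_ne hD] with i h1 h2
      exact h1.flip h2
    · intro i ha hk hh
      obtain ⟨a1, a2⟩ := hK₁ i ha hk hh
      exact ⟨div_mem (neg_mem (mul_mem (mul_mem ha (add_mem a1 (mul_mem hk a2))) a2))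
        (sub_mem (mul_mem ha a2) a1), a2⟩

/-! ### Points on lines through the origin -/

/-- First coordinate of the point with parameter `m` on the ellipse `x² + d y² = 1`. -/
def dirX (d m : ℝ) : ℝ := (1 - d * m ^ 2) / (1 + d * m ^ 2)

/-- Second coordinate of the point with parameter `m` on the ellipse `x² + d y² = 1`. -/
def dirY (d m : ℝ) : ℝ := 2 * m / (1 + d * m ^ 2)

lemma dir_norm {d m : ℝ} (hd : 0 < d) : dirX d m ^ 2 + d * dirY d m ^ 2 = 1 := by
  have : 1 + d * m ^ 2 ≠ 0 := by positivity
  unfold dirX dirY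
  field_simp
  ring

lemma continuous_dirX {d : ℝ} (hd : 0 < d) : Continuous (dirX d) := by
  unfold dirX
  exact Continuous.div (by fun_prop) (by fun_prop) fun m => by positivity

lemma continuous_dirY {d : ℝ} (hd : 0 < d) : Continuous (dirY d) := by
  unfold dirY
  exact Continuous.div (by fun_prop) (by fun_prop) fun m => by positivity

/-- Every vector lies on a line of direction `(dirX d m, dirY d m)` for some `m`; denominators are
cleared here. -/
lemma exists_dir {d : ℝ} (hd : 0 < d) (x y : ℝ) :
    ∃ m c : ℝ, c * (1 - d * m ^ 2) = x ∧ c * (2 * m) = y := by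
  by_cases hy : y = 0
  · exact ⟨0, x, by simp, by simp [hy]⟩
  have hs : √(x ^ 2 + d * y ^ 2) ^ 2 = x ^ 2 + d * y ^ 2 := Real.sq_sqrt (by positivity)
  obtain ⟨r, hr⟩ : ∃ r, r = √(x ^ 2 + d * y ^ 2) := ⟨_, rfl⟩
  rw [← hr] at hs
  have hrx : r - x ≠ 0 := by
    intro h0
    have : r = x := by linarith
    rw [this] at hs
    have : 0 < d * y ^ 2 := by positivity
    linarith
  refine ⟨(r - x) / (d * y), d * y ^ 2 / (2 * (r - x)), ?_, ?_⟩
  · field_simp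
    linear_combination (-1 : ℝ) * hs
  · field_simp

/-- If `(X, Y)` is a unit vector for the form `x² + d y²` and `A` is the squared distance of
`p = (p₁, p₂)` from the line it spans, the point of the line with parameter `s` is at distance
`|A / s + s| / 2` from `p`. -/
lemma dist_sq_of_slope {d X Y p₁ p₂ c A s : ℝ} (hn : X ^ 2 + d * Y ^ 2 = 1) (hs : s ≠ 0)
    (hA : A = d * (p₁ * Y - p₂ * X) ^ 2)
    (hc : c = (A / s - s) / 2 + (p₁ * X + d * p₂ * Y)) :
    (c * X - p₁) ^ 2 + d * (c * Y - p₂) ^ 2 = ((A / s + s) / 2) ^ 2 := by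
  have e : ((A / s + s) / 2) ^ 2 = ((A / s - s) / 2) ^ 2 + A := by field_simp; ring
  have e2 : (A / s - s) / 2 = c - (p₁ * X + d * p₂ * Y) := by linarith
  rw [e, e2, hA]
  linear_combination (c ^ 2 - p₁ ^ 2 - d * p₂ ^ 2) * hn

/-- In coordinates for the form `x² + d y²`, let `m₀` be the parameter of the direction of `q - p`.
For `m` in `K` near `m₀` but different from it, the line of parameter `m` carries `N` distinct points
with coordinate `c` in `K` whose distances from `p` and `q` are in `K`. -/
lemma eventually_many_points {d p₁ p₂ q₁ q₂ m₀ c₀ : ℝ} (K : Subfield ℝ) (hd : 0 < d)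
    (hdK : d ∈ K) (hp₁ : p₁ ∈ K) (hp₂ : p₂ ∈ K) (hq₁ : q₁ ∈ K) (hq₂ : q₂ ∈ K)
    (hD : p₁ * q₂ - p₂ * q₁ ≠ 0)
    (h₁ : c₀ * (1 - d * m₀ ^ 2) = q₁ - p₁) (h₂ : c₀ * (2 * m₀) = q₂ - p₂) (N : ℕ) :
    ∀ᶠ m in 𝓝[≠] m₀, ∃ c : Fin N → ℝ, Function.Injective c ∧ (m ∈ K → ∀ j,
      c j ∈ K ∧
      (∃ r ∈ K, (c j * dirX d m - p₁) ^ 2 + d * (c j * dirY d m - p₂) ^ 2 = r ^ 2) ∧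
      ∃ r ∈ K, (c j * dirX d m - q₁) ^ 2 + d * (c j * dirY d m - q₂) ^ 2 = r ^ 2) := by
  have tX : Tendsto (dirX d) (𝓝[≠] m₀) (𝓝 (dirX d m₀)) :=
    ((continuous_dirX hd).tendsto m₀).mono_left nhdsWithin_le_nhds
  have tY : Tendsto (dirY d) (𝓝[≠] m₀) (𝓝 (dirY d m₀)) :=
    ((continuous_dirY hd).tendsto m₀).mono_left nhdsWithin_le_nhds
  have hρ : ∀ m : ℝ, 1 + d * m ^ 2 ≠ 0 := fun m => by positivity
  have hpar : (q₁ - p₁) * dirY d m₀ = (q₂ - p₂) * dirX d m₀ := by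
    unfold dirX dirY
    have := hρ m₀
    field_simp
    rw [← h₁, ← h₂]
    ring
  have hc₀ : c₀ ≠ 0 := by
    rintro rfl
    apply hD
    have e1 : q₁ = p₁ := by linarith
    have e2 : q₂ = p₂ := by linarith
    rw [e1, e2]; ring
  have hn₀ := dir_norm (m := m₀) hd
  obtain ⟨A, hA⟩ : ∃ A : ℝ → ℝ, A = fun m => d * (p₁ * dirY d m - p₂ * dirX d m) ^ 2 := ⟨_, rfl⟩
  obtain ⟨B, hB⟩ : ∃ B : ℝ → ℝ, B = fun m => d * (q₁ * dirY d m - q₂ * dirX d m) ^ 2 := ⟨_, rfl⟩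
  obtain ⟨k, hk⟩ : ∃ k : ℝ → ℝ, k = fun m => B m - A m := ⟨_, rfl⟩
  obtain ⟨a, ha⟩ : ∃ a : ℝ → ℝ, a = fun m => p₁ * dirX d m + d * p₂ * dirY d m := ⟨_, rfl⟩
  obtain ⟨h, hh⟩ : ∃ h : ℝ → ℝ, h = fun m =>
    2 * ((q₁ - p₁) * dirX d m + d * (q₂ - p₂) * dirY d m) := ⟨_, rfl⟩
  have tA : Tendsto A (𝓝[≠] m₀) (𝓝 (A m₀)) := by
    rw [hA]; exact (((tY.const_mul p₁).sub (tX.const_mul p₂)).pow 2).const_mul d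
  have tB : Tendsto B (𝓝[≠] m₀) (𝓝 (B m₀)) := by
    rw [hB]; exact (((tY.const_mul q₁).sub (tX.const_mul q₂)).pow 2).const_mul d
  have ta : Tendsto a (𝓝[≠] m₀) (𝓝 (a m₀)) := by
    rw [ha]; exact (tX.const_mul p₁).add (tY.const_mul (d * p₂))
  have th : Tendsto h (𝓝[≠] m₀) (𝓝 (h m₀)) := by
    rw [hh]
    exact ((tX.const_mul (q₁ - p₁)).add (tY.const_mul (d * (q₂ - p₂)))).const_mul 2
  have kfac : ∀ m, k m = d * ((q₁ - p₁) * dirY d m - (q₂ - p₂) * dirX d m) *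
      ((q₁ + p₁) * dirY d m - (q₂ + p₂) * dirX d m) := by
    intro m; rw [hk, hA, hB]; ring
  have hk0 : k m₀ = 0 := by rw [kfac, hpar]; ring
  have tk : Tendsto k (𝓝[≠] m₀) (𝓝 0) := by
    rw [← hk0, hk]; exact tB.sub tA
  have hcross : p₁ * dirY d m₀ - p₂ * dirX d m₀ ≠ 0 := by
    intro h0
    have h0' : q₁ * dirY d m₀ - q₂ * dirX d m₀ = 0 := by linarith
    have eX : (p₁ * q₂ - p₂ * q₁) * dirX d m₀ = 0 := by
      linear_combination q₁ * h0 - p₁ * h0'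
    have eY : (p₁ * q₂ - p₂ * q₁) * dirY d m₀ = 0 := by
      linear_combination q₂ * h0 - p₂ * h0'
    rw [(mul_eq_zero.mp eX).resolve_left hD, (mul_eq_zero.mp eY).resolve_left hD] at hn₀
    norm_num at hn₀
  have hA0 : A m₀ ≠ 0 := by rw [hA]; exact mul_ne_zero hd.ne' (pow_ne_zero 2 hcross)
  have hh0 : h m₀ ≠ 0 := by
    have e1 : q₁ - p₁ = c₀ * (1 + d * m₀ ^ 2) * dirX d m₀ := by
      rw [← h₁]; unfold dirX; field_simp [hρ m₀]
    have e2 : q₂ - p₂ = c₀ * (1 + d * m₀ ^ 2) * dirY d m₀ := by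
      rw [← h₂]; unfold dirY; field_simp [hρ m₀]
    have : h m₀ = 2 * (c₀ * (1 + d * m₀ ^ 2)) := by
      rw [hh]; dsimp only; rw [e1, e2]
      linear_combination (2 * (c₀ * (1 + d * m₀ ^ 2))) * hn₀
    rw [this]
    exact mul_ne_zero two_ne_zero (mul_ne_zero hc₀ (hρ m₀))
  -- In the numerator of `k`, the factor vanishing at `m₀` is quadratic in `m` with a simple root
  -- there.
  have hkne : ∀ᶠ m in 𝓝[≠] m₀, k m ≠ 0 := by
    have t1 : Tendsto (fun m => d * (q₂ - p₂) * (m + m₀) + 2 * (q₁ - p₁)) (𝓝[≠] m₀)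
        (𝓝 (d * (q₂ - p₂) * (m₀ + m₀) + 2 * (q₁ - p₁))) :=
      (Continuous.tendsto (by fun_prop) m₀).mono_left nhdsWithin_le_nhds
    have n1 : d * (q₂ - p₂) * (m₀ + m₀) + 2 * (q₁ - p₁) ≠ 0 := by
      have : d * (q₂ - p₂) * (m₀ + m₀) + 2 * (q₁ - p₁) = 2 * c₀ * (1 + d * m₀ ^ 2) := by
        rw [← h₁, ← h₂]; ring
      rw [this]
      exact mul_ne_zero (mul_ne_zero two_ne_zero hc₀) (hρ m₀)
    have t2 := (tY.const_mul (q₁ + p₁)).sub (tX.const_mul (q₂ + p₂))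
    have n2 : (q₁ + p₁) * dirY d m₀ - (q₂ + p₂) * dirX d m₀ ≠ 0 := by
      have : (q₁ + p₁) * dirY d m₀ - (q₂ + p₂) * dirX d m₀
          = 2 * (p₁ * dirY d m₀ - p₂ * dirX d m₀) := by linarith
      rw [this]
      exact mul_ne_zero two_ne_zero hcross
    filter_upwards [t1.eventually_ne n1, t2.eventually_ne n2, self_mem_nhdsWithin]
      with m e1 e2 e3
    have e3' : m - m₀ ≠ 0 := sub_ne_zero.mpr e3
    have : (q₁ - p₁) * dirY d m - (q₂ - p₂) * dirX d m
        = (m - m₀) * (d * (q₂ - p₂) * (m + m₀) + 2 * (q₁ - p₁)) / (1 + d * m ^ 2) := by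
      unfold dirX dirY
      have := hρ m
      field_simp
      rw [← h₁, ← h₂]
      ring
    rw [kfac, this]
    exact mul_ne_zero (mul_ne_zero hd.ne' (div_ne_zero (mul_ne_zero e3' e1) (hρ m))) e2
  choose x v tx tv hcur hK using
    exists_curve_points (𝓝[≠] m₀) A k h (A m₀) (h m₀) hA0 hh0 tA tk th K
  have hj : ∀ n : ℕ, -((n : ℝ) + 1) / h m₀ ≠ 0 := fun n =>
    div_ne_zero (neg_ne_zero.mpr (by positivity)) hh0
  have ty : ∀ n, Tendsto (fun m => x n m + k m * v n m) (𝓝[≠] m₀)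
      (𝓝 (-((n : ℝ) + 1) / h m₀)) := fun n => by
    simpa using (tx n).add (tk.mul (tv n))
  -- The position `c` of the point number `n` on the line is unbounded, but `k * c` converges, and the
  -- limits for different `n` are different.
  have tc : ∀ n : ℕ, Tendsto (fun m => (A m / x n m - k m ^ 2 * x n m) / 2 + k m * a m)
      (𝓝[≠] m₀) (𝓝 (-(A m₀ * h m₀ / 2) / (n + 1))) := fun n => by
    have hn : (n : ℝ) + 1 ≠ 0 := by positivity
    refine tendsto_of_eq (((((tA.div (tx n) (hj n)).sub ((tk.pow 2).mul (tx n))).div_const 2)).add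
      (tk.mul ta)) ?_
    field_simp
    ring
  have hsep : ∀ i j : Fin N, i ≠ j → ∀ᶠ m in 𝓝[≠] m₀,
      (A m / x i m - k m ^ 2 * x i m) / 2 + k m * a m
        ≠ (A m / x j m - k m ^ 2 * x j m) / 2 + k m * a m := by
    intro i j hij
    have hne : -(A m₀ * h m₀ / 2) / ((i : ℕ) + 1) - -(A m₀ * h m₀ / 2) / ((j : ℕ) + 1) ≠ 0 := by
      intro h0
      have hi : ((i : ℕ) : ℝ) + 1 ≠ 0 := by positivity
      have hj' : ((j : ℕ) : ℝ) + 1 ≠ 0 := by positivity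
      have hAh : A m₀ * h m₀ ≠ 0 := mul_ne_zero hA0 hh0
      apply hij
      rw [sub_eq_zero, div_eq_div_iff hi hj'] at h0
      have h0' : A m₀ * h m₀ * (((j : ℕ) : ℝ) - (i : ℕ)) = 0 := by linear_combination -2 * h0
      have h0'' := sub_eq_zero.mp ((mul_eq_zero.mp h0').resolve_left hAh)
      exact Fin.ext (by exact_mod_cast h0''.symm)
    filter_upwards [((tc i).sub (tc j)).eventually_ne hne] with m hm
    exact sub_ne_zero.mp hm
  have hall : ∀ᶠ m in 𝓝[≠] m₀, ∀ i j : Fin N, i ≠ j →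
      (A m / x i m - k m ^ 2 * x i m) / 2 + k m * a m
        ≠ (A m / x j m - k m ^ 2 * x j m) / 2 + k m * a m := by
    simp only [eventually_all]
    exact hsep
  have hgood : ∀ᶠ m in 𝓝[≠] m₀, ∀ j : Fin N, OnCurve (A m) (k m) (h m) (x j m) (v j m) ∧
      x j m ≠ 0 ∧ x j m + k m * v j m ≠ 0 := by
    rw [eventually_all]
    intro j
    exact (hcur j).and (((tx j).eventually_ne (hj j)).and ((ty j).eventually_ne (hj j)))
  filter_upwards [hall, hgood, hkne] with m m1 m2 m3
  refine ⟨fun j => (A m / (k m * x j m) - k m * x j m) / 2 + a m, ?_, ?_⟩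
  · intro i j hij
    by_contra hne
    apply m1 i j hne
    have hxi := (m2 i).2.1
    have hxj := (m2 j).2.1
    have : ∀ z : ℝ, z ≠ 0 → (A m / z - k m ^ 2 * z) / 2 + k m * a m
        = k m * ((A m / (k m * z) - k m * z) / 2 + a m) := by
      intro z hz; field_simp
    rw [this _ hxi, this _ hxj]
    exact congrArg _ hij
  · intro hm j
    obtain ⟨hcv, hx0, hy0⟩ := m2 j
    have h1K := one_mem K
    have h2K : (2 : ℝ) ∈ K := ofNat_mem K 2
    have hdm : d * m ^ 2 ∈ K := mul_mem hdK (pow_mem hm 2)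
    have hX : dirX d m ∈ K := div_mem (sub_mem h1K hdm) (add_mem h1K hdm)
    have hY : dirY d m ∈ K := div_mem (mul_mem h2K hm) (add_mem h1K hdm)
    have hAK : A m ∈ K := by
      rw [hA]
      exact mul_mem hdK (pow_mem (sub_mem (mul_mem hp₁ hY) (mul_mem hp₂ hX)) 2)
    have hBK : B m ∈ K := by
      rw [hB]
      exact mul_mem hdK (pow_mem (sub_mem (mul_mem hq₁ hY) (mul_mem hq₂ hX)) 2)
    have hkK : k m ∈ K := by rw [hk]; exact sub_mem hBK hAK
    have haK : a m ∈ K := by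
      rw [ha]; exact add_mem (mul_mem hp₁ hX) (mul_mem (mul_mem hdK hp₂) hY)
    have hhK : h m ∈ K := by
      rw [hh]
      exact mul_mem h2K (add_mem (mul_mem (sub_mem hq₁ hp₁) hX)
        (mul_mem (mul_mem hdK (sub_mem hq₂ hp₂)) hY))
    obtain ⟨hxK, hvK⟩ := hK j m hAK hkK hhK
    have hsK : k m * x j m ∈ K := mul_mem hkK hxK
    have htK : k m * (x j m + k m * v j m) ∈ K := mul_mem hkK (add_mem hxK (mul_mem hkK hvK))
    refine ⟨add_mem (div_mem (sub_mem (div_mem hAK hsK) hsK) h2K) haK,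
      ⟨_, div_mem (add_mem (div_mem hAK hsK) hsK) h2K,
        dist_sq_of_slope (dir_norm hd) (mul_ne_zero m3 hx0) (by rw [hA]) (by rw [ha])⟩,
      ⟨_, div_mem (add_mem (div_mem hBK htK) htK) h2K,
        dist_sq_of_slope (dir_norm hd) (mul_ne_zero m3 hy0) (by rw [hB]) ?_⟩⟩
    have hBA : B m = A m + k m := by rw [hk]; ring
    have hha : h m = 2 * (q₁ * dirX d m + d * q₂ * dirY d m - a m) := by rw [hh, ha]; ring
    have key : A m / (k m * x j m) - k m * x j m - h m
        = B m / (k m * (x j m + k m * v j m)) - k m * (x j m + k m * v j m) := by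
      rw [hBA]
      unfold OnCurve at hcv
      field_simp
      linear_combination k m * hcv
    linarith

/-! ### Polynomials vanishing on many lines -/

lemma eval_aeval_polynomial {σ : Type*} (f : MvPolynomial σ ℝ) (g : σ → Polynomial ℝ) (t : ℝ) :
    (MvPolynomial.aeval g f).eval t = MvPolynomial.eval (fun i => (g i).eval t) f := by
  induction f using MvPolynomial.induction_on with
  | C a => simp
  | add p q hp hq => simp [hp, hq]
  | mul_X p i hp => simp [hp]

lemma frequently_isRat (m₀ : ℝ) : ∃ᶠ m in 𝓝[≠] m₀, IsRat m := by
  have h : Dense (Set.range ((↑) : ℚ → ℝ)) := Rat.denseRange_cast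
  have h2 := h.sdiff_singleton m₀
  have h3 := mem_closure_iff_frequently.mp (h2 m₀)
  rw [frequently_nhdsWithin_iff]
  exact h3.mono fun m hm => ⟨hm.1, hm.2⟩

/-- A polynomial `f` with more than `f.totalDegree` zeros on every line of rational parameter close
to `m₀` vanishes on the span of `e₁` and `e₂`. -/
lemma eval_eq_zero_of_lines {d m₀ : ℝ} (hd : 0 < d) (e₁ e₂ : Fin 2 → ℝ)
    (f : MvPolynomial (Fin 2) ℝ)
    (H : ∀ᶠ m in 𝓝[≠] m₀, ∃ c : Fin (f.totalDegree + 1) → ℝ, Function.Injective c ∧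
      (IsRat m → ∀ j, MvPolynomial.eval
        (fun i => c j * dirX d m * e₁ i + c j * dirY d m * e₂ i) f = 0)) (x y : ℝ) :
    MvPolynomial.eval (fun i => x * e₁ i + y * e₂ i) f = 0 := by
  -- On each of these lines `f` restricts to a univariate polynomial with too many roots.
  have hline : ∀ᶠ m in 𝓝[≠] m₀, IsRat m → ∀ c : ℝ, MvPolynomial.eval
      (fun i => c * dirX d m * e₁ i + c * dirY d m * e₂ i) f = 0 := by
    filter_upwards [H] with m ⟨c, hc, hz⟩ hm b
    obtain ⟨g, hg⟩ : ∃ g : Fin 2 → Polynomial ℝ,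
      g = fun i => Polynomial.C (dirX d m * e₁ i + dirY d m * e₂ i) * Polynomial.X := ⟨_, rfl⟩
    have hev : ∀ t, (MvPolynomial.aeval g f).eval t = MvPolynomial.eval
        (fun i => t * dirX d m * e₁ i + t * dirY d m * e₂ i) f := by
      intro t
      rw [eval_aeval_polynomial]
      congr 2
      funext i
      rw [hg]
      simp
      ring
    have hdeg : (MvPolynomial.aeval g f).natDegree ≤ f.totalDegree * 1 := by
      apply MvPolynomial.aeval_natDegree_le _ le_rfl
      intro i
      rw [hg]
      exact (Polynomial.natDegree_C_mul_le _ _).trans Polynomial.natDegree_X_le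
    have h0 : MvPolynomial.aeval g f = 0 :=
      Polynomial.eq_zero_of_natDegree_lt_card_of_eval_eq_zero _ hc
        (fun j => by rw [hev]; exact hz hm j) (by simp; omega)
    rw [← hev, h0, Polynomial.eval_zero]
  -- Along the conic `m ↦ c (1 - d m², 2 m)`, which meets all the lines, `f` restricts to a
  -- polynomial in `m` with infinitely many roots, since `m₀` is an accumulation point of them.
  obtain ⟨m, c, rfl, rfl⟩ := exists_dir hd x y
  obtain ⟨g, hg⟩ : ∃ g : Fin 2 → Polynomial ℝ, g = fun i =>
    Polynomial.C (c * e₁ i) * (1 - Polynomial.C d * Polynomial.X ^ 2)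
      + Polynomial.C (c * 2 * e₂ i) * Polynomial.X := ⟨_, rfl⟩
  have hev : ∀ t, (MvPolynomial.aeval g f).eval t = MvPolynomial.eval
      (fun i => c * (1 - d * t ^ 2) * e₁ i + c * (2 * t) * e₂ i) f := by
    intro t
    rw [eval_aeval_polynomial]
    congr 2
    funext i
    rw [hg]
    simp
    ring
  have h0 : MvPolynomial.aeval g f = 0 := by
    by_contra hne
    have hfin : ∀ᶠ t in 𝓝[≠] m₀, (MvPolynomial.aeval g f).eval t ≠ 0 := by
      have : ({t | (MvPolynomial.aeval g f).IsRoot t} \ {m₀}).Finite :=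
        (Polynomial.finite_setOfPred_isRoot hne).subset Set.sdiff_subset
      have h2 := this.isClosed.isOpen_compl.mem_nhds (x := m₀) (by simp)
      filter_upwards [nhdsWithin_le_nhds h2, self_mem_nhdsWithin] with t ht ht'
      intro h
      exact ht ⟨h, ht'⟩
    obtain ⟨t, ht, hl, hr⟩ := ((frequently_isRat m₀).and_eventually (hline.and hfin)).exists
    apply hr
    rw [hev]
    have := hl ht (c * (1 + d * t ^ 2))
    have hρ : 1 + d * t ^ 2 ≠ 0 := by positivity
    have eX : c * (1 - d * t ^ 2) = c * (1 + d * t ^ 2) * dirX d t := by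
      unfold dirX; field_simp
    have eY : c * (2 * t) = c * (1 + d * t ^ 2) * dirY d t := by
      unfold dirY; field_simp
    rw [eX, eY]
    exact this
  rw [← hev, h0, Polynomial.eval_zero]

/-! ### The rational quadratic space spanned by the two vectors -/

/-- The subfield `ℚ` of `ℝ`; membership in it unfolds to `IsRat`. -/
def ratSubfield : Subfield ℝ := (Rat.castHom ℝ).fieldRange

lemma mem_ratSubfield {x : ℝ} : x ∈ ratSubfield ↔ IsRat x := Iff.rfl

lemma norm_mem_of_sq_eq {E : Type*} [NormedAddCommGroup E] {K : Subfield ℝ} {v : E} {r : ℝ}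
    (hr : r ∈ K) (h : ‖v‖ ^ 2 = r ^ 2) : ‖v‖ ∈ K := by
  rcases sq_eq_sq_iff_eq_or_eq_neg.mp h with h | h
  · rw [h]; exact hr
  · rw [h]; exact neg_mem hr

section

variable {P P' : EuclideanSpace ℝ (Fin 2)}

lemma gram_det_ne_zero (hind : LinearIndependent ℝ ![P, P']) :
    ‖P‖ ^ 2 * ‖P'‖ ^ 2 - ⟪P, P'⟫ ^ 2 ≠ 0 := by
  intro h0
  have hpair := LinearIndependent.pair_iff.mp hind
  have hz : ‖(‖P'‖ ^ 2) • P + (-⟪P, P'⟫) • P'‖ ^ 2 = 0 := by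
    rw [norm_add_sq_real, norm_smul, norm_smul, inner_smul_left, inner_smul_right, mul_pow,
      mul_pow, Real.norm_eq_abs, Real.norm_eq_abs, sq_abs, sq_abs]
    simp only [conj_trivial]
    linear_combination ‖P'‖ ^ 2 * h0
  have hz' := norm_eq_zero.mp (pow_eq_zero_iff two_ne_zero |>.mp hz)
  have hP' : P' ≠ 0 := hind.ne_zero 1
  exact pow_ne_zero 2 (norm_ne_zero_iff.mpr hP') (hpair _ _ hz').1

lemma exists_coords (hind : LinearIndependent ℝ ![P, P']) (Q : EuclideanSpace ℝ (Fin 2)) :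
    ∃ a b : ℝ, a • P + b • P' = Q := by
  have hspan := hind.span_eq_top_of_card_eq_finrank' (by simp)
  have hQ : Q ∈ Submodule.span ℝ (Set.range ![P, P']) := by rw [hspan]; trivial
  rw [Matrix.range_cons_cons_empty] at hQ
  exact Submodule.mem_span_pair.mp hQ

/-- A point at rational distance from `0`, `P` and `P'` has rational inner products with `P` and
`P'`, hence rational coordinates by Cramer's rule for the Gram matrix. -/
lemma rat_coords_of_rat_distances (hind : LinearIndependent ℝ ![P, P'])
    (hp : IsRat (‖P‖ ^ 2)) (hs : IsRat (⟪P, P'⟫)) (hp' : IsRat (‖P'‖ ^ 2))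
    {Q : EuclideanSpace ℝ (Fin 2)} (h0 : IsRat ‖Q‖) (h1 : IsRat ‖Q - P‖)
    (h2 : IsRat ‖Q - P'‖) : ∃ t u : ℚ, (t : ℝ) • P + (u : ℝ) • P' = Q := by
  rw [← mem_ratSubfield] at *
  have hdet := gram_det_ne_zero hind
  have two : (2 : ℝ) ∈ ratSubfield := ofNat_mem _ 2
  have i1 : ⟪Q, P⟫ ∈ ratSubfield := by
    have : ⟪Q, P⟫ = (‖Q‖ ^ 2 + ‖P‖ ^ 2 - ‖Q - P‖ ^ 2) / 2 := by
      rw [norm_sub_sq_real]; ring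
    rw [this]
    exact div_mem (sub_mem (add_mem (pow_mem h0 2) hp) (pow_mem h1 2)) two
  have i2 : ⟪Q, P'⟫ ∈ ratSubfield := by
    have : ⟪Q, P'⟫ = (‖Q‖ ^ 2 + ‖P'‖ ^ 2 - ‖Q - P'‖ ^ 2) / 2 := by
      rw [norm_sub_sq_real]; ring
    rw [this]
    exact div_mem (sub_mem (add_mem (pow_mem h0 2) hp') (pow_mem h2 2)) two
  have hdetK : ‖P‖ ^ 2 * ‖P'‖ ^ 2 - ⟪P, P'⟫ ^ 2 ∈ ratSubfield :=
    sub_mem (mul_mem hp hp') (pow_mem hs 2)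
  obtain ⟨a, b, hab⟩ := exists_coords hind Q
  have j1 : ⟪Q, P⟫ = a * ‖P‖ ^ 2 + b * ⟪P, P'⟫ := by
    rw [← hab, inner_add_left, inner_smul_left, inner_smul_left, real_inner_self_eq_norm_sq,
      real_inner_comm P P']
    simp
  have j2 : ⟪Q, P'⟫ = a * ⟪P, P'⟫ + b * ‖P'‖ ^ 2 := by
    rw [← hab, inner_add_left, inner_smul_left, inner_smul_left, real_inner_self_eq_norm_sq]
    simp
  have ha : a ∈ ratSubfield := by
    have : a = (⟪Q, P⟫ * ‖P'‖ ^ 2 - ⟪Q, P'⟫ * ⟪P, P'⟫) /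
        (‖P‖ ^ 2 * ‖P'‖ ^ 2 - ⟪P, P'⟫ ^ 2) := by
      rw [eq_div_iff hdet, j1, j2]; ring
    rw [this]
    exact div_mem (sub_mem (mul_mem i1 hp') (mul_mem i2 hs)) hdetK
  have hb : b ∈ ratSubfield := by
    have : b = (⟪Q, P'⟫ * ‖P‖ ^ 2 - ⟪Q, P⟫ * ⟪P, P'⟫) /
        (‖P‖ ^ 2 * ‖P'‖ ^ 2 - ⟪P, P'⟫ ^ 2) := by
      rw [eq_div_iff hdet, j1, j2]; ring
    rw [this]
    exact div_mem (sub_mem (mul_mem i2 hp) (mul_mem i1 hs)) hdetK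
  obtain ⟨t, rfl⟩ := ha
  obtain ⟨u, rfl⟩ := hb
  exact ⟨t, u, hab⟩

/-- A vector `t • P + u • P'` of nonzero rational norm, scaled to norm `1`, is completed to an
orthogonal basis of the rational span of `P` and `P'`. -/
lemma exists_orthogonal_frame (hp : IsRat (‖P‖ ^ 2)) (hs : IsRat (⟪P, P'⟫))
    (hp' : IsRat (‖P'‖ ^ 2)) (hind : LinearIndependent ℝ ![P, P']) {t u : ℚ}
    (hr : IsRat ‖(t : ℝ) • P + (u : ℝ) • P'‖) (hne : ‖(t : ℝ) • P + (u : ℝ) • P'‖ ≠ 0) :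
    ∃ (e₁ e₂ : EuclideanSpace ℝ (Fin 2)) (d p₁ p₂ q₁ q₂ : ℝ), 0 < d ∧
      IsRat d ∧ IsRat p₁ ∧ IsRat p₂ ∧ IsRat q₁ ∧ IsRat q₂ ∧
      p₁ * q₂ - p₂ * q₁ ≠ 0 ∧ P = p₁ • e₁ + p₂ • e₂ ∧ P' = q₁ • e₁ + q₂ • e₂ ∧
      ∀ x y : ℝ, ‖x • e₁ + y • e₂‖ ^ 2 = x ^ 2 + d * y ^ 2 := by
  simp only [← mem_ratSubfield] at *
  obtain ⟨R, hR⟩ : ∃ R, R = ‖(t : ℝ) • P + (u : ℝ) • P'‖ := ⟨_, rfl⟩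
  rw [← hR] at hr hne
  have htK : (t : ℝ) ∈ ratSubfield := ⟨t, rfl⟩
  have huK : (u : ℝ) ∈ ratSubfield := ⟨u, rfl⟩
  obtain ⟨a, ha⟩ : ∃ a : ℝ, a = t / R := ⟨_, rfl⟩
  obtain ⟨b, hb⟩ : ∃ b : ℝ, b = u / R := ⟨_, rfl⟩
  have haK : a ∈ ratSubfield := by rw [ha]; exact div_mem htK hr
  have hbK : b ∈ ratSubfield := by rw [hb]; exact div_mem huK hr
  obtain ⟨α, hα⟩ : ∃ α : ℝ, α = a * ‖P‖ ^ 2 + b * ⟪P, P'⟫ := ⟨_, rfl⟩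
  obtain ⟨β, hβ⟩ : ∃ β : ℝ, β = a * ⟪P, P'⟫ + b * ‖P'‖ ^ 2 := ⟨_, rfl⟩
  have hαK : α ∈ ratSubfield := by rw [hα]; exact add_mem (mul_mem haK hp) (mul_mem hbK hs)
  have hβK : β ∈ ratSubfield := by rw [hβ]; exact add_mem (mul_mem haK hs) (mul_mem hbK hp')
  have nsq : ∀ x y : ℝ, ‖x • P + y • P'‖ ^ 2
      = x ^ 2 * ‖P‖ ^ 2 + 2 * x * y * ⟪P, P'⟫ + y ^ 2 * ‖P'‖ ^ 2 := by
    intro x y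
    rw [norm_add_sq_real, norm_smul, norm_smul, inner_smul_left, inner_smul_right, mul_pow,
      mul_pow, Real.norm_eq_abs, Real.norm_eq_abs, sq_abs, sq_abs]
    simp only [conj_trivial]
    ring
  have hunit : a * α + b * β = 1 := by
    have h1 : R ^ 2 = (t : ℝ) ^ 2 * ‖P‖ ^ 2 + 2 * t * u * ⟪P, P'⟫ + (u : ℝ) ^ 2 * ‖P'‖ ^ 2 := by
      rw [hR, nsq]
    have h2 : a * α + b * β
        = ((t : ℝ) ^ 2 * ‖P‖ ^ 2 + 2 * t * u * ⟪P, P'⟫ + (u : ℝ) ^ 2 * ‖P'‖ ^ 2) / R ^ 2 := by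
      rw [hα, hβ, ha, hb]
      field_simp
      ring
    rw [h2, ← h1]
    exact div_self (pow_ne_zero 2 hne)
  -- `β P - α P'` is orthogonal to `a P + b P'`, since `α`, `β` are the inner products of the
  -- latter with `P`, `P'`.
  refine ⟨a • P + b • P', β • P + (-α) • P', ‖β • P + (-α) • P'‖ ^ 2, α, b, β, -a,
    ?_, ?_, hαK, hbK, hβK, neg_mem haK, ?_, ?_, ?_, ?_⟩
  · have : β • P + (-α) • P' ≠ 0 := by
      intro h0
      obtain ⟨h1, h2⟩ := LinearIndependent.pair_iff.mp hind _ _ h0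
      rw [h1, neg_eq_zero.mp h2] at hunit
      norm_num at hunit
    have := norm_pos_iff.mpr this
    positivity
  · rw [nsq]
    exact add_mem (add_mem (mul_mem (pow_mem hβK 2) hp) (mul_mem (mul_mem (mul_mem
      (ofNat_mem _ 2) hβK) (neg_mem hαK)) hs)) (mul_mem (pow_mem (neg_mem hαK) 2) hp')
  · have : α * -a - b * β = -1 := by linarith
    rw [this]
    norm_num
  · have : α • (a • P + b • P') + b • (β • P + (-α) • P') = (a * α + b * β) • P := by module
    rw [this, hunit, one_smul]
  · have : β • (a • P + b • P') + (-a) • (β • P + (-α) • P') = (a * α + b * β) • P' := by module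
    rw [this, hunit, one_smul]
  · intro x y
    have : x • (a • P + b • P') + y • (β • P + (-α) • P')
        = (x * a + y * β) • P + (x * b - y * α) • P' := by module
    rw [this, nsq, nsq]
    have e1 : a ^ 2 * ‖P‖ ^ 2 + 2 * a * b * ⟪P, P'⟫ + b ^ 2 * ‖P'‖ ^ 2 = 1 := by
      rw [← hunit, hα, hβ]; ring
    have e2 : a * β * ‖P‖ ^ 2 + (b * β - a * α) * ⟪P, P'⟫ - b * α * ‖P'‖ ^ 2 = 0 := by
      rw [hα, hβ]; ring
    linear_combination x ^ 2 * e1 + 2 * x * y * e2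

end

theorem rational_distances_noncollinear_zariski_dense_iff
    (P P' : EuclideanSpace ℝ (Fin 2)) (hind : LinearIndependent ℝ ![P, P'])
    (hp : IsRat (‖P‖ ^ 2)) (hs : IsRat (⟪P, P'⟫)) (hp' : IsRat (‖P'‖ ^ 2)) :
    (ZariskiDense {Q : EuclideanSpace ℝ (Fin 2) |
        IsRat ‖Q‖ ∧ IsRat ‖Q - P‖ ∧ IsRat ‖Q - P'‖} ↔
      ∃ t u : ℚ, IsRat ‖(t : ℝ) • P + (u : ℝ) • P'‖ ∧
        ‖(t : ℝ) • P + (u : ℝ) • P'‖ ≠ 0) := by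
  constructor
  · intro hdense
    obtain ⟨Q, ⟨h0, h1, h2⟩, hQ⟩ : ∃ Q ∈ {Q : EuclideanSpace ℝ (Fin 2) |
        IsRat ‖Q‖ ∧ IsRat ‖Q - P‖ ∧ IsRat ‖Q - P'‖}, Q ≠ 0 := by
      by_contra! hall
      -- If `0` were the only point of the set, a coordinate function would vanish on it.
      refine MvPolynomial.X_ne_zero (R := ℝ) (0 : Fin 2) (hdense _ fun Q hQ => ?_)
      simp [hall Q hQ]
    obtain ⟨t, u, rfl⟩ := rat_coords_of_rat_distances hind hp hs hp' h0 h1 h2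
    exact ⟨t, u, h0, norm_ne_zero_iff.mpr hQ⟩
  · rintro ⟨t, u, hr, hne⟩ f hf
    obtain ⟨e₁, e₂, d, p₁, p₂, q₁, q₂, hd, hdK, hp₁, hp₂, hq₁, hq₂, hD, hP, hP', hnorm⟩ :=
      exists_orthogonal_frame hp hs hp' hind hr hne
    obtain ⟨m₀, c₀, h₁, h₂⟩ := exists_dir hd (q₁ - p₁) (q₂ - p₂)
    have hzero := eval_eq_zero_of_lines (m₀ := m₀) hd (fun i => e₁ i) (fun i => e₂ i) f (by
      filter_upwards [eventually_many_points ratSubfield hd hdK hp₁ hp₂ hq₁ hq₂ hD h₁ h₂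
        (f.totalDegree + 1)] with m ⟨c, hc, hcK⟩
      refine ⟨c, hc, fun hm j => ?_⟩
      obtain ⟨hj, ⟨r, hrK, hr⟩, ⟨r', hrK', hr'⟩⟩ := hcK hm j
      have hmem := hf ((c j * dirX d m) • e₁ + (c j * dirY d m) • e₂) ⟨?_, ?_, ?_⟩
      · simpa using hmem
      · refine norm_mem_of_sq_eq (K := ratSubfield) hj ?_
        rw [hnorm]
        linear_combination (c j) ^ 2 * dir_norm (m := m) hd
      · refine norm_mem_of_sq_eq (K := ratSubfield) hrK ?_
        rw [← hr, ← hnorm, hP]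
        congr 2
        module
      · refine norm_mem_of_sq_eq (K := ratSubfield) hrK' ?_
        rw [← hr', ← hnorm, hP']
        congr 2
        module)
    refine MvPolynomial.funext fun z => ?_
    obtain ⟨a, b, hab⟩ := exists_coords hind (WithLp.toLp 2 z)
    rw [map_zero, ← hzero (a * p₁ + b * q₁) (a * p₂ + b * q₂)]
    congr 2
    funext i
    have : z i = (a • P + b • P') i := by rw [hab]
    rw [this, hP, hP']
    simp
    ring
end
end

section
/- Let O be the origin of ℝ², let P ∈ ℝ² with P ≠ O and ‖P‖² ∈ ℚ, let q ∈ ℚ with q ≠ 0 and q ≠ 1, and set P' = q·P (so that O, P, P' are collinear). Then the set J* = { Q ∈ ℝ² : ‖Q‖ ∈ ℚ, ‖Q−P‖ ∈ ℚ, ‖Q−P'‖ ∈ ℚ } of points with rational distances from O, P and P' is Zariski-dense in ℝ². -/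
/-!
The set `J*` is dense in `ℝ²` even for the Euclidean topology. Write `a = ‖P‖²` and let `r, s, t` be
the distances from `Q` to `O`, `P`, `qP`. Stewart's theorem gives the quadric
`t² = (1 - q) r² + q s² - q (1 - q) a`, which has the rational point `(1 : 1 : 1)` at infinity, hence a
rational parametrization: in terms of `d = s - r` and `δ = r + q d - t`, it reads
`2 δ (r + q d) = q (1 - q) (a - d²) + δ²`.
So `(d, δ)` determines `r`, `s`, `t` rationally, and then `Q`, up to reflection in the line `OP`, as soon
as a square root is extracted. If `Q` lies off the line `OP`, then `a - d² ≠ 0`, so `δ ≠ 0`, and `Q`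
depends continuously on `(d, δ)` nearby. Approximating `(d, δ)` by rational pairs gives points of `J*`
tending to `Q`; this is `mem_closure_rational_points`.

A polynomial vanishing on `J*` therefore vanishes off the line `OP`, so its product with a linear
equation of that line vanishes everywhere, and the polynomial is zero.
-/

noncomputable section

/-- Every point `(x, y)` off the line through `O` and `P = (u, v)` is a Euclidean limit of points with
rational distances from `O`, `P` and `q P`. -/
lemma mem_closure_rational_points (u v x y : ℝ) (a q : ℚ) (ha : u ^ 2 + v ^ 2 = a)
    (ha0 : (a : ℝ) ≠ 0) (hq0 : q ≠ 0) (hq1 : q ≠ 1) (hxy : u * y - v * x ≠ 0) :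
    (x, y) ∈ closure {z : ℝ × ℝ | ∃ r s t : ℚ, z.1 ^ 2 + z.2 ^ 2 = (r : ℝ) ^ 2 ∧
      (z.1 - u) ^ 2 + (z.2 - v) ^ 2 = (s : ℝ) ^ 2 ∧
      (z.1 - q * u) ^ 2 + (z.2 - q * v) ^ 2 = (t : ℝ) ^ 2} := by
  have hq0' : (q : ℝ) ≠ 0 := by exact_mod_cast hq0
  have hq1' : (1 - q : ℝ) ≠ 0 := by
    intro h
    apply hq1
    have : (q : ℝ) = 1 := by linarith
    exact_mod_cast this
  obtain ⟨σ, hσ2, hσ⟩ : ∃ σ : ℝ, σ ^ 2 = 1 ∧ σ * |u * y - v * x| = u * y - v * x := by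
    rcases abs_cases (u * y - v * x) with ⟨h, -⟩ | ⟨h, -⟩
    · exact ⟨1, by norm_num, by rw [h]; ring⟩
    · exact ⟨-1, by norm_num, by rw [h]; ring⟩
  -- `z = (d, δ)` are the parameters; `X` and `σ √E` are the inner product and the cross product
  -- of `P` with the parametrized point `Φ`.
  let w : ℝ × ℝ → ℝ := fun z => (q * (1 - q) * (a - z.1 ^ 2) + z.2 ^ 2) / (2 * z.2)
  let r : ℝ × ℝ → ℝ := fun z => w z - q * z.1
  let X : ℝ × ℝ → ℝ := fun z => (r z ^ 2 + a - (r z + z.1) ^ 2) / 2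
  let E : ℝ × ℝ → ℝ := fun z => a * r z ^ 2 - X z ^ 2
  let Φ : ℝ × ℝ → ℝ × ℝ := fun z =>
    ((X z * u - σ * √(E z) * v) / a, (X z * v + σ * √(E z) * u) / a)
  obtain ⟨r0, hr0⟩ : ∃ r0 : ℝ, r0 ^ 2 = x ^ 2 + y ^ 2 := ⟨_, Real.sq_sqrt (by positivity)⟩
  obtain ⟨s0, hs0⟩ : ∃ s0 : ℝ, s0 ^ 2 = (x - u) ^ 2 + (y - v) ^ 2 :=
    ⟨_, Real.sq_sqrt (by positivity)⟩
  obtain ⟨t0, ht0⟩ : ∃ t0 : ℝ, t0 ^ 2 = (x - q * u) ^ 2 + (y - q * v) ^ 2 :=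
    ⟨_, Real.sq_sqrt (by positivity)⟩
  obtain ⟨d, hd⟩ : ∃ d, d = s0 - r0 := ⟨_, rfl⟩
  obtain ⟨δ, hδ⟩ : ∃ δ, δ = r0 + q * d - t0 := ⟨_, rfl⟩
  have hs : s0 = r0 + d := by linarith
  have ht : t0 = r0 + q * d - δ := by linarith
  subst hs
  subst ht
  have hX0 : (r0 ^ 2 + a - (r0 + d) ^ 2) / 2 = u * x + v * y := by
    rw [hr0, hs0, ← ha]; ring
  have hE0 : a * r0 ^ 2 - (u * x + v * y) ^ 2 = (u * y - v * x) ^ 2 := by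
    rw [hr0, ← ha]; ring
  have hquad : q * (1 - q) * (a - d ^ 2) + δ ^ 2 = 2 * δ * (r0 + q * d) := by
    linear_combination ht0 - (1 - q) * hr0 - q * hs0 - q * (1 - q) * ha
  have hδ0 : δ ≠ 0 := by
    intro h
    rw [h] at hquad
    have h1 : (a : ℝ) - d ^ 2 = 0 := by
      have : (q : ℝ) * (1 - q) * (a - d ^ 2) = 0 := by linear_combination hquad
      simpa [hq0', hq1'] using this
    apply hxy
    rw [← hX0] at hE0
    have h2 : (a : ℝ) = d ^ 2 := by linarith
    rw [h2] at hE0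
    have : (u * y - v * x) ^ 2 = 0 := by rw [← hE0]; ring
    exact pow_eq_zero_iff (two_ne_zero) |>.1 this
  have hr : r (d, δ) = r0 := by
    simp only [r, w, hquad]; field_simp; ring
  have hX : X (d, δ) = u * x + v * y := by simp only [X, hr, hX0]
  have hE : E (d, δ) = (u * y - v * x) ^ 2 := by simp only [E, hr, hX, hE0]
  have hΦ : Φ (d, δ) = (x, y) := by
    simp only [Φ, hX, hE, Real.sqrt_sq_eq_abs, hσ, ← ha]
    rw [← ha] at ha0
    ext
    · simp only; field_simp; ring
    · simp only; field_simp; ring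
  have hwc : ContinuousAt w (d, δ) := by
    apply ContinuousAt.div (by fun_prop) (by fun_prop)
    simpa using hδ0
  have hrc : ContinuousAt r (d, δ) := by fun_prop
  have hXc : ContinuousAt X (d, δ) := by fun_prop
  have hEc : ContinuousAt E (d, δ) := by fun_prop
  have hΦc : ContinuousAt Φ (d, δ) := by
    have : ContinuousAt (fun z => √(E z)) (d, δ) := hEc.sqrt
    fun_prop (disch := exact ha0)
  rw [mem_closure_iff_nhds]
  intro U hU
  rw [← hΦ] at hU
  have h1 : ∀ᶠ z in nhds (d, δ), 0 < E z :=
    hEc.eventually (lt_mem_nhds (by rw [hE]; positivity))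
  have h2 : ∀ᶠ z : ℝ × ℝ in nhds (d, δ), z.2 ≠ 0 :=
    continuousAt_snd.eventually_ne hδ0
  have hN := (hΦc.eventually_mem hU).and (h1.and h2)
  have hdense : DenseRange (Prod.map (fun x : ℚ => (x : ℝ)) (fun x : ℚ => (x : ℝ))) :=
    Rat.denseRange_cast.prodMap Rat.denseRange_cast
  obtain ⟨_, ⟨⟨d', δ'⟩, rfl⟩, hzU, hzE, hz2⟩ := hdense.inter_nhds_nonempty hN
  simp only [Prod.map_apply] at hzU hzE hz2
  refine ⟨_, hzU, ?_⟩
  obtain ⟨w', hw'⟩ : ∃ w' : ℚ, (w' : ℝ) = w (d', δ') :=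
    ⟨(q * (1 - q) * (a - d' ^ 2) + δ' ^ 2) / (2 * δ'), by simp only [w]; push_cast; rfl⟩
  have hC : √(E (d', δ')) ^ 2 = E (d', δ') := Real.sq_sqrt hzE.le
  have hquad' : 2 * δ' * w' = q * (1 - q) * (a - d' ^ 2 : ℝ) + δ' ^ 2 := by
    rw [hw']; simp only [w]; field_simp
  have hEq : E (d', δ') = a * (w' - q * d' : ℝ) ^ 2 - X (d', δ') ^ 2 := by
    simp only [E, r, hw']
  have hXq : 2 * X (d', δ') = (w' - q * d' : ℝ) ^ 2 + a - (w' - q * d' + d') ^ 2 := by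
    simp only [X, r, hw']; ring
  rw [hEq] at hC
  -- The norm and the inner product with `P` of the parametrized point.
  have hnorm : (Φ (d', δ')).1 ^ 2 + (Φ (d', δ')).2 ^ 2 = (w' - q * d' : ℝ) ^ 2 := by
    simp only [Φ, hEq]
    field_simp
    linear_combination (X (d', δ') ^ 2 + σ ^ 2 * √(a * (w' - q * d' : ℝ) ^ 2 - X (d', δ') ^ 2) ^ 2) * ha
      + a * σ ^ 2 * hC + a * (a * (w' - q * d' : ℝ) ^ 2 - X (d', δ') ^ 2) * hσ2
  have hinner : u * (Φ (d', δ')).1 + v * (Φ (d', δ')).2 = X (d', δ') := by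
    simp only [Φ]
    field_simp
    linear_combination X (d', δ') * ha
  refine ⟨w' - q * d', w' - q * d' + d', w' - δ', ?_, ?_, ?_⟩ <;> push_cast
  · exact hnorm
  · linear_combination hnorm - 2 * hinner + ha - hXq
  · linear_combination hnorm - 2 * q * hinner + q ^ 2 * ha - q * hXq + hquad'

lemma isRat_norm_of_sq (z : EuclideanSpace ℝ (Fin 2)) (r : ℚ)
    (h : z 0 ^ 2 + z 1 ^ 2 = (r : ℝ) ^ 2) : IsRat ‖z‖ := by
  refine ⟨|r|, ?_⟩
  rw [EuclideanSpace.norm_eq]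
  simp [Fin.sum_univ_two, h, Real.sqrt_sq_eq_abs]

theorem rational_distances_collinear_zariski_dense
    (P : EuclideanSpace ℝ (Fin 2)) (hP : P ≠ 0) (hp : IsRat (‖P‖ ^ 2))
    (q : ℚ) (hq0 : q ≠ 0) (hq1 : q ≠ 1) :
    ZariskiDense {Q : EuclideanSpace ℝ (Fin 2) |
      IsRat ‖Q‖ ∧ IsRat ‖Q - P‖ ∧ IsRat ‖Q - (q : ℝ) • P‖} := by
  intro f hf
  obtain ⟨a, ha⟩ := hp
  have ha0 : (a : ℝ) ≠ 0 := by rw [ha]; simpa using hP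
  have ha' : P 0 ^ 2 + P 1 ^ 2 = a := by
    rw [ha, EuclideanSpace.norm_sq_eq]; simp [Fin.sum_univ_two]
  have hcont : Continuous fun z : ℝ × ℝ => MvPolynomial.eval ![z.1, z.2] f := by
    have hv : Continuous fun z : ℝ × ℝ => (![z.1, z.2] : Fin 2 → ℝ) := by
      refine continuous_pi fun i => ?_
      fin_cases i
      · exact continuous_fst
      · exact continuous_snd
    exact (MvPolynomial.continuous_eval f).comp hv
  have hoff : ∀ x y : ℝ, P 0 * y - P 1 * x ≠ 0 → MvPolynomial.eval ![x, y] f = 0 := by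
    intro x y hxy
    have hcl := mem_closure_rational_points (P 0) (P 1) x y a q ha' ha0 hq0 hq1 hxy
    have hclosed : IsClosed {z : ℝ × ℝ | MvPolynomial.eval ![z.1, z.2] f = 0} :=
      isClosed_eq hcont continuous_const
    have hsub := closure_minimal (fun z hz => ?_) hclosed hcl
    · exact hsub
    · obtain ⟨r, s, t, hr, hs, ht⟩ := hz
      have h := hf !₂[z.1, z.2] ⟨isRat_norm_of_sq _ r (by simpa using hr),
        isRat_norm_of_sq _ s (by simpa using hs), isRat_norm_of_sq _ t (by simpa using ht)⟩
      have hv : (fun i => (!₂[z.1, z.2] : EuclideanSpace ℝ (Fin 2)) i) = ![z.1, z.2] := by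
        ext i; fin_cases i <;> rfl
      rw [hv] at h
      exact h
  -- A linear equation of the line `OP`.
  let L : MvPolynomial (Fin 2) ℝ :=
    MvPolynomial.C (P 0) * MvPolynomial.X 1 - MvPolynomial.C (P 1) * MvPolynomial.X 0
  have hfL : f * L = 0 := by
    apply MvPolynomial.funext
    intro z
    by_cases hz : P 0 * z 1 - P 1 * z 0 = 0
    · simp [L, hz]
    · have hzz : ![z 0, z 1] = z := by ext i; fin_cases i <;> rfl
      have := hoff (z 0) (z 1) hz
      rw [hzz] at this
      simp [this]
  refine (mul_eq_zero.1 hfL).resolve_right fun hL => ha0 ?_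
  have := congrArg (MvPolynomial.eval ![-P 1, P 0]) hL
  simp [L] at this
  rw [← ha']
  linear_combination this
end
end

section
/- Let p, r be positive real numbers, c ∈ ℝ, and let λ, μ ∈ ℂ with μ ≠ 0 and μ² = p + r·λ². Set η = p·c + r·λ and p' = p·c² + r, and define the homogeneous cubic F(K,K',H) = (p·H² − K²)·(η·H − μ·K') − (p'·H² − K'²)·(p·H − μ·K) in ℂ[K,K',H]. Then the points A = (1,0,0) and B = (0,1,0) are smooth points of the curve F = 0 (i.e. F vanishes at them and the gradient ∇F is nonzero there), and the tangent line of the curve at each of A and B passes through the point N = (p, η, μ): that is, ∇F(1,0,0)·(p,η,μ) = 0 and ∇F(0,1,0)·(p,η,μ) = 0. -/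
/-!
On each line through `A` or `B` parallel to a coordinate axis, `F` restricts to a cubic in one
variable without constant term, so its partial derivatives are read off as linear coefficients
(`deriv_cubic_zero`); along the axes `K' = H = 0` and `K = H = 0` it vanishes identically. This gives
`∇F(A) = (0, μ, -η)` and `∇F(B) = (-μ, 0, p)`. Both are nonzero because `μ ≠ 0`, and both are
orthogonal to `N = (p, η, μ)`.
-/

noncomputable section

/-- The derivative at `0` of a cubic without constant term is its linear coefficient. -/
lemma deriv_cubic_zero (a b d : ℂ) :
    deriv (fun t : ℂ => a * t + b * t ^ 2 + d * t ^ 3) 0 = a := by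
  have h := (((hasDerivAt_id (0 : ℂ)).const_mul a).add
    (((hasDerivAt_id (0 : ℂ)).pow 2).const_mul b)).add
      (((hasDerivAt_id (0 : ℂ)).pow 3).const_mul d)
  have h' : HasDerivAt (fun t : ℂ => a * t + b * t ^ 2 + d * t ^ 3) a 0 :=
    h.congr_deriv (by simp)
  exact h'.deriv

theorem tangents_at_A_and_B_pass_through_N
    (p r c : ℝ) (hp : 0 < p) (hr : 0 < r)
    (lam mu : ℂ) (hmu : mu ≠ 0) (hmu2 : mu ^ 2 = (p : ℂ) + (r : ℂ) * lam ^ 2)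
    (eta : ℂ) (heta : eta = (p : ℂ) * (c : ℂ) + (r : ℂ) * lam)
    (p' : ℂ) (hp' : p' = (p : ℂ) * (c : ℂ) ^ 2 + (r : ℂ))
    (F : ℂ → ℂ → ℂ → ℂ)
    (hF : F = fun K K' H =>
      ((p : ℂ) * H ^ 2 - K ^ 2) * (eta * H - mu * K') -
        (p' * H ^ 2 - K' ^ 2) * ((p : ℂ) * H - mu * K))
    (gradF : ℂ × ℂ × ℂ → ℂ × ℂ × ℂ)
    (hgrad : gradF = fun v =>
      (deriv (fun t => F t v.2.1 v.2.2) v.1,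
       deriv (fun t => F v.1 t v.2.2) v.2.1,
       deriv (fun t => F v.1 v.2.1 t) v.2.2)) :
    (F 1 0 0 = 0 ∧ gradF (1, 0, 0) ≠ 0 ∧
      (gradF (1, 0, 0)).1 * (p : ℂ) + (gradF (1, 0, 0)).2.1 * eta +
        (gradF (1, 0, 0)).2.2 * mu = 0) ∧
    (F 0 1 0 = 0 ∧ gradF (0, 1, 0) ≠ 0 ∧
      (gradF (0, 1, 0)).1 * (p : ℂ) + (gradF (0, 1, 0)).2.1 * eta +
        (gradF (0, 1, 0)).2.2 * mu = 0) := by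
  have hA : gradF (1, 0, 0) = (0, mu, -eta) := by
    have h1 : (fun t => F t 0 0) = fun _ => 0 := by
      funext t; rw [hF]; ring
    have h2 : (fun t => F 1 t 0) = fun t => mu * t + (-mu) * t ^ 2 + 0 * t ^ 3 := by
      funext t; rw [hF]; ring
    have h3 : (fun t => F 1 0 t) =
        fun t => (-eta) * t + (p' * mu) * t ^ 2 + (p * eta - p' * p) * t ^ 3 := by
      funext t; rw [hF]; ring
    simp only [hgrad, h1, h2, h3, deriv_cubic_zero, deriv_const]
  have hB : gradF (0, 1, 0) = (-mu, 0, (p : ℂ)) := by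
    have h1 : (fun t => F t 1 0) = fun t => (-mu) * t + mu * t ^ 2 + 0 * t ^ 3 := by
      funext t; rw [hF]; ring
    have h2 : (fun t => F 0 t 0) = fun _ => 0 := by
      funext t; rw [hF]; ring
    have h3 : (fun t => F 0 1 t) =
        fun t => (p : ℂ) * t + (-(p * mu)) * t ^ 2 + (p * eta - p' * p) * t ^ 3 := by
      funext t; rw [hF]; ring
    simp only [hgrad, h1, h2, h3, deriv_cubic_zero, deriv_const]
  rw [hA, hB]
  refine ⟨⟨by simp [hF], by simp [hmu], by ring⟩, ⟨by simp [hF], by simp [hmu], by ring⟩⟩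
end
end

section
/- Let p, r be positive real numbers and c ∈ ℝ; set p' = p·c² + r. For λ, μ ∈ ℂ with μ ≠ 0 and μ² = p + r·λ², set η = p·c + r·λ and define f(k,k') = (p − k²)·(η − μ·k') − (p' − k'²)·(p − μ·k). Then the point N = (p/μ, η/μ) lies on the curve f = 0 and is a smooth point of it: indeed μ·∇f(p/μ, η/μ) = p·r·((c·λ − 1)², −λ²), and this vector is nonzero for every complex λ. Consequently the gradient ∇f(p/μ, η/μ) is never zero. -/
noncomputable section

/-! At `N = (p/μ, η/μ)` both linear factors `η - μ k'` and `p - μ k` of `f` vanish, so `f(N) = 0`, and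
by the product rule only the terms differentiating a linear factor survive:
`μ ∇f(N) = (μ² p' - η², p² - μ² p)`. Substituting `μ² = p + r λ²` gives the stated vector.
Its second coordinate vanishes only at `λ = 0`, where the first is `p r ≠ 0`. -/

theorem N_is_smooth_point_of_affine_cubic
    (p r c : ℝ) (hp : 0 < p) (hr : 0 < r)
    (lam mu : ℂ) (hmu : mu ≠ 0) (hmu2 : mu ^ 2 = (p : ℂ) + (r : ℂ) * lam ^ 2)
    (eta : ℂ) (heta : eta = (p : ℂ) * (c : ℂ) + (r : ℂ) * lam)
    (p' : ℂ) (hp' : p' = (p : ℂ) * (c : ℂ) ^ 2 + (r : ℂ))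
    (f : ℂ → ℂ → ℂ)
    (hf : f = fun k k' =>
      ((p : ℂ) - k ^ 2) * (eta - mu * k') - (p' - k' ^ 2) * ((p : ℂ) - mu * k)) :
    f ((p : ℂ) / mu) (eta / mu) = 0 ∧
    (mu * deriv (fun t => f t (eta / mu)) ((p : ℂ) / mu),
        mu * deriv (fun t => f ((p : ℂ) / mu) t) (eta / mu)) =
      ((p : ℂ) * (r : ℂ) * ((c : ℂ) * lam - 1) ^ 2,
        (p : ℂ) * (r : ℂ) * (-(lam ^ 2))) ∧
    (∀ l : ℂ, ((((c : ℂ) * l - 1) ^ 2, -(l ^ 2)) : ℂ × ℂ) ≠ (0, 0)) ∧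
    (deriv (fun t => f t (eta / mu)) ((p : ℂ) / mu),
        deriv (fun t => f ((p : ℂ) / mu) t) (eta / mu)) ≠ ((0 : ℂ), (0 : ℂ)) := by
  subst hf
  have h1 : mu * ((p : ℂ) / mu) = p := mul_div_cancel₀ _ hmu
  have h2 : mu * (eta / mu) = eta := mul_div_cancel₀ _ hmu
  generalize (p : ℂ) / mu = x at *
  generalize eta / mu = y at *
  have hd1 : deriv (fun t : ℂ => ((p : ℂ) - t ^ 2) * (eta - mu * y)
      - (p' - y ^ 2) * ((p : ℂ) - mu * t)) x = (p' - y ^ 2) * mu := by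
    have h := (((hasDerivAt_pow 2 x).const_sub (p : ℂ)).mul_const (eta - mu * y)).sub
      ((((hasDerivAt_id x).const_mul mu).const_sub (p : ℂ)).const_mul (p' - y ^ 2))
    refine h.deriv.trans ?_
    rw [h2]
    ring
  have hd2 : deriv (fun t : ℂ => ((p : ℂ) - x ^ 2) * (eta - mu * t)
      - (p' - t ^ 2) * ((p : ℂ) - mu * x)) y = -((p : ℂ) - x ^ 2) * mu := by
    have h := ((((hasDerivAt_id y).const_mul mu).const_sub eta).const_mul ((p : ℂ) - x ^ 2)).sub
      (((hasDerivAt_pow 2 y).const_sub p').mul_const ((p : ℂ) - mu * x))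
    refine h.deriv.trans ?_
    rw [h1]
    ring
  have e1 : mu * ((p' - y ^ 2) * mu) = (p : ℂ) * r * ((c : ℂ) * lam - 1) ^ 2 := by
    calc mu * ((p' - y ^ 2) * mu) = p' * mu ^ 2 - (mu * y) ^ 2 := by ring
      _ = _ := by rw [h2, hmu2, heta, hp']; ring
  have e2 : mu * (-((p : ℂ) - x ^ 2) * mu) = (p : ℂ) * r * (-(lam ^ 2)) := by
    calc mu * (-((p : ℂ) - x ^ 2) * mu) = (mu * x) ^ 2 - p * mu ^ 2 := by ring
      _ = _ := by rw [h1, hmu2]; ring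
  have hne : ∀ l : ℂ, ((((c : ℂ) * l - 1) ^ 2, -(l ^ 2)) : ℂ × ℂ) ≠ (0, 0) := by
    intro l h
    obtain ⟨ha, hb⟩ := Prod.mk.inj h
    have hl : l = 0 := by simpa using hb
    simp [hl] at ha
  have hpr : (p : ℂ) * r ≠ 0 := by
    exact_mod_cast (mul_pos hp hr).ne'
  beta_reduce
  rw [hd1, hd2]
  refine ⟨by rw [h1, h2]; ring, by rw [e1, e2], hne, fun h => hne lam ?_⟩
  obtain ⟨ha, hb⟩ := Prod.mk.inj h
  rw [ha, mul_zero] at e1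
  rw [hb, mul_zero] at e2
  exact Prod.ext ((mul_eq_zero.mp e1.symm).resolve_left hpr)
    ((mul_eq_zero.mp e2.symm).resolve_left hpr)
end
end

section
/- Let F ∈ ℂ[X,Y,Z] be an irreducible homogeneous polynomial of degree 3, and let Q, A, B, C ∈ ℂ³ ∖ {0} be representatives of points of the projective plane lying on the curve F = 0 (i.e. F vanishes on each). Suppose that A, B, C represent three pairwise distinct projective points, each distinct from the projective point of Q, that each of A, B, C is a smooth point of the curve (∇F ≠ 0 there), and that the tangent line at each of A, B, C contains Q: ∇F(A)·Q = ∇F(B)·Q = ∇F(C)·Q = 0. Then the curve F = 0 is smooth: for every v ∈ ℂ³ ∖ {0} with F(v) = 0 one has ∇F(v) ≠ 0. If moreover A, B, C lie on a common projective line (equivalently, A, B, C are linearly dependent in ℂ³), then Q is a flex of the curve: the determinant of the Hessian matrix of F evaluated at Q is zero. -/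
/-!
Polarize `F` to a symmetric trilinear form `T` (`polarForm`). On the line `QP` the cubic
restricts to `3 s² L(P) + 3 s M(P) + N(P)` with `L = T Q Q ·`, `M(P) = T P P Q`, `N = F`.
The only use of irreducibility is that `F` contains no line (`polarForm_line`).

For `P = A, B, C` both `M` and `N` vanish, so `L(P) ≠ 0`; the same holds at a singular point `v`.
Hence the lines from `Q` to these points are distinct (`indep_of_tangent`), and each is a root of
the binary quartic `3 M² - 4 L N`, the discriminant of `F` along lines through `Q`. The root
coming from a singular point `v` is double, so together with `A, B, C` there would be five roots:
the quartic is zero. In the basis `Q, v, A` this forces `T Q v A = T v A A = 0`, and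
then `F` vanishes on the tangent line at `Q`, which is impossible (`no_singular`).

If `A, B, C` are collinear, `M` vanishes at three points of the line `AB`, hence on all of it.
So the Hessian form at `Q`, which is `6 T Q · ·`, kills the point where `AB` meets the
tangent line at `Q` (`hessian_det_eq_zero`).
-/

noncomputable section

/-- The gradient of a polynomial in three variables, evaluated at a point. -/
def gradEval (F : MvPolynomial (Fin 3) ℂ) (v : Fin 3 → ℂ) : Fin 3 → ℂ :=
  fun i => MvPolynomial.eval v (MvPolynomial.pderiv i F)

/-- The Hessian matrix of a polynomial in three variables, evaluated at a point. -/
def hessianEval (F : MvPolynomial (Fin 3) ℂ) (v : Fin 3 → ℂ) :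
    Matrix (Fin 3) (Fin 3) ℂ :=
  Matrix.of fun i j => MvPolynomial.eval v (MvPolynomial.pderiv i (MvPolynomial.pderiv j F))

open MvPolynomial

/-! ### Polarization of a ternary cubic -/

/-- The symmetric trilinear form `T` polarizing a ternary cubic form `F`, normalized so that
`T v v v = F v`: its coefficients are the (constant) third partial derivatives of `F`,
divided by `6`. -/
def polarForm (F : MvPolynomial (Fin 3) ℂ) :
    (Fin 3 → ℂ) →ₗ[ℂ] (Fin 3 → ℂ) →ₗ[ℂ] (Fin 3 → ℂ) →ₗ[ℂ] ℂ :=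
  ∑ i, ∑ j, ∑ k, (eval 0 (pderiv i (pderiv j (pderiv k F))) / 6) •
    (LinearMap.proj i).smulRight ((LinearMap.proj j).smulRight (LinearMap.proj k))

lemma polarForm_apply (F : MvPolynomial (Fin 3) ℂ) (u v w : Fin 3 → ℂ) :
    polarForm F u v w = ∑ i, ∑ j, ∑ k,
      eval 0 (pderiv i (pderiv j (pderiv k F))) / 6 * (u i * v j * w k) := by
  simp [polarForm, LinearMap.sum_apply, mul_assoc]

lemma pderiv_comm_apply (i j : Fin 3) (F : MvPolynomial (Fin 3) ℂ) :
    pderiv i (pderiv j F) = pderiv j (pderiv i F) := by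
  have h : ⁅pderiv (R := ℂ) i, pderiv (R := ℂ) j⁆ = 0 := by
    apply MvPolynomial.derivation_ext
    intro k
    simp [Derivation.commutator_apply, pderiv_X, Pi.single_apply, apply_ite]
  have := congrArg (fun D => D F) h
  simpa [Derivation.commutator_apply, sub_eq_zero] using this

lemma polarForm_swap₁₂ (F : MvPolynomial (Fin 3) ℂ) (u v w : Fin 3 → ℂ) :
    polarForm F u v w = polarForm F v u w := by
  rw [polarForm_apply, polarForm_apply, Finset.sum_comm]
  refine Finset.sum_congr rfl fun i _ => Finset.sum_congr rfl fun j _ =>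
    Finset.sum_congr rfl fun k _ => ?_
  rw [pderiv_comm_apply j i]; ring

lemma polarForm_swap₂₃ (F : MvPolynomial (Fin 3) ℂ) (u v w : Fin 3 → ℂ) :
    polarForm F u v w = polarForm F u w v := by
  rw [polarForm_apply, polarForm_apply]
  refine Finset.sum_congr rfl fun i _ => ?_
  rw [Finset.sum_comm]
  refine Finset.sum_congr rfl fun j _ => Finset.sum_congr rfl fun k _ => ?_
  rw [pderiv_comm_apply k j]; ring

lemma eval_eq_eval_zero {p : MvPolynomial (Fin 3) ℂ} (hp : p.IsHomogeneous 0)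
    (v : Fin 3 → ℂ) : eval v p = eval 0 p := by
  rw [← totalDegree_zero_iff_isHomogeneous, totalDegree_eq_zero_iff_eq_C] at hp
  rw [hp]; simp

lemma eval_euler {p : MvPolynomial (Fin 3) ℂ} {n : ℕ} (hp : p.IsHomogeneous n)
    (v : Fin 3 → ℂ) : ∑ i, v i * eval v (pderiv i p) = n * eval v p := by
  have := congrArg (eval v) hp.sum_X_mul_pderiv
  simpa [map_sum] using this

section cubic

variable {F : MvPolynomial (Fin 3) ℂ}

lemma hessianEval_eq (hF : F.IsHomogeneous 3) (v : Fin 3 → ℂ) (i j : Fin 3) :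
    hessianEval F v i j = ∑ k, eval 0 (pderiv k (pderiv i (pderiv j F))) * v k := by
  have h1 : (pderiv i (pderiv j F)).IsHomogeneous 1 := (hF.pderiv (i := j)).pderiv
  have := eval_euler h1 v
  simp only [hessianEval, Matrix.of_apply]
  rw [Nat.cast_one, one_mul] at this
  rw [← this]
  refine Finset.sum_congr rfl fun k _ => ?_
  rw [eval_eq_eval_zero (h1.pderiv (i := k)), mul_comm]

lemma gradEval_eq (hF : F.IsHomogeneous 3) (v : Fin 3 → ℂ) (i : Fin 3) :
    2 * gradEval F v i = ∑ j, hessianEval F v j i * v j := by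
  have h1 : (pderiv i F).IsHomogeneous 2 := hF.pderiv
  have := eval_euler h1 v
  simp only [hessianEval, gradEval, Matrix.of_apply]
  push_cast at this
  rw [← this]
  exact Finset.sum_congr rfl fun k _ => mul_comm _ _

lemma hessianEval_mulVec (hF : F.IsHomogeneous 3) (v w : Fin 3 → ℂ) (i : Fin 3) :
    (hessianEval F v).mulVec w i = 6 * polarForm F v (Pi.single i 1) w := by
  rw [polarForm_apply]
  simp only [Matrix.mulVec, dotProduct, hessianEval_eq hF]
  fin_cases i <;> simp [Fin.sum_univ_three] <;> ring

lemma sum_gradEval_mul (hF : F.IsHomogeneous 3) (v w : Fin 3 → ℂ) :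
    ∑ i, gradEval F v i * w i = 3 * polarForm F v v w := by
  have h := gradEval_eq hF v
  simp only [hessianEval_eq hF] at h
  rw [polarForm_apply]
  simp only [Fin.sum_univ_three] at h ⊢
  linear_combination (h 0 * w 0 + h 1 * w 1 + h 2 * w 2) / 2

lemma eval_eq_polarForm (hF : F.IsHomogeneous 3) (v : Fin 3 → ℂ) :
    eval v F = polarForm F v v v := by
  have h := eval_euler hF v
  have h2 := sum_gradEval_mul hF v v
  simp only [gradEval, Fin.sum_univ_three] at h h2
  push_cast at h
  linear_combination (h2 - h) / 3

end cubic

/-! ### An irreducible cubic contains no line -/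

lemma exists_coords_s13 {u v w : Fin 3 → ℂ}
    (h : ∀ a b c : ℂ, a • u + b • v + c • w = 0 → a = 0 ∧ b = 0 ∧ c = 0) (x : Fin 3 → ℂ) :
    ∃ a b c : ℂ, x = a • u + b • v + c • w := by
  have hli : LinearIndependent ℂ ![u, v, w] := by
    rw [Fintype.linearIndependent_iff]
    intro g hg
    have := h (g 0) (g 1) (g 2) (by simpa [Fin.sum_univ_three] using hg)
    intro i; fin_cases i <;> simp [this]
  have hx : x ∈ Submodule.span ℂ (Set.range ![u, v, w]) := by
    rw [hli.span_eq_top_of_card_eq_finrank' (by simp)]; trivial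
  obtain ⟨c, hc⟩ := (Submodule.mem_span_range_iff_exists_fun ℂ).1 hx
  exact ⟨c 0, c 1, c 2, by simpa [Fin.sum_univ_three] using hc.symm⟩

/-- An irreducible cubic does not vanish identically on the plane `n ⬝ᵥ v = 0`: otherwise it would
be divisible by the linear form with coefficient vector `n`. -/
lemma exists_eval_ne_zero_of_irreducible {F : MvPolynomial (Fin 3) ℂ} (hirr : Irreducible F)
    (hF : F.IsHomogeneous 3) {n : Fin 3 → ℂ} (hn : n ≠ 0) :
    ∃ v, v ⬝ᵥ n = 0 ∧ eval v F ≠ 0 := by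
  by_contra! hvan
  obtain ⟨k, hk⟩ : ∃ k, n k ≠ 0 := Function.ne_iff.1 hn
  set l : MvPolynomial (Fin 3) ℂ := ∑ i, C (n i) * X i with hl
  have hle (v : Fin 3 → ℂ) : eval v l = v ⬝ᵥ n := by
    simp [hl, dotProduct, mul_comm]
  -- the substitution projecting onto the plane along the `k`-th coordinate axis
  set φ : MvPolynomial (Fin 3) ℂ →ₐ[ℂ] MvPolynomial (Fin 3) ℂ :=
    aeval (fun i => X i - (if i = k then C (n k)⁻¹ else 0) * l) with hφ
  have hφF : φ F = 0 := by
    refine MvPolynomial.funext fun v => ?_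
    have h1 : eval v (φ F)
        = eval (fun i => v i - (if i = k then (n k)⁻¹ else 0) * (v ⬝ᵥ n)) F := by
      rw [hφ, aeval_def, eval_eval₂]
      simp only [eval, coe_eval₂Hom]
      congr 1
      · ext; simp
      · funext i
        have := hle v
        simp only [eval, coe_eval₂Hom] at this
        split_ifs <;> simp [← this]
    rw [h1, map_zero]
    apply hvan
    have h2 : (fun i => v i - (if i = k then (n k)⁻¹ else 0) * (v ⬝ᵥ n))
        = v - Pi.single k ((n k)⁻¹ * (v ⬝ᵥ n)) := by
      funext i
      by_cases hik : i = k
      · subst hik; simp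
      · simp [hik]
    rw [h2, sub_dotProduct, single_dotProduct]
    field_simp
    ring
  have hdvd : l ∣ F := by
    rw [← Ideal.mem_span_singleton, ← Ideal.Quotient.eq_zero_iff_mem]
    have hcomp : (Ideal.Quotient.mkₐ ℂ (Ideal.span {l})).comp φ
        = Ideal.Quotient.mkₐ ℂ (Ideal.span {l}) := by
      apply MvPolynomial.algHom_ext
      intro i
      have hl0 : Ideal.Quotient.mk (Ideal.span {l}) l = 0 :=
        Ideal.Quotient.eq_zero_iff_mem.2 (Ideal.mem_span_singleton_self l)
      by_cases hik : i = k <;> simp [hφ, hik, hl0]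
    have := DFunLike.congr_fun hcomp F
    simpa [hφF] using this.symm
  obtain ⟨G, hG⟩ := hdvd
  rcases hirr.isUnit_or_isUnit hG with h | h
  · have h0 := h.map (eval (0 : Fin 3 → ℂ))
    rw [hle] at h0
    simp at h0
  · -- here `F` is a scalar multiple of a linear form, so it cannot scale cubically
    obtain ⟨c, -, rfl⟩ := MvPolynomial.isUnit_iff_eq_C_of_isReduced.1 h
    refine hirr.ne_zero (MvPolynomial.funext fun v => ?_)
    have h1 : eval ((2 : ℂ) • v) F = 2 * eval v F := by
      rw [hG]; simp [hle]; ring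
    have h2 : eval ((2 : ℂ) • v) F = 8 * eval v F := by
      rw [eval_eq_polarForm hF, eval_eq_polarForm hF]; simp; ring
    rw [map_zero]
    linear_combination (h2 - h1) / (-6)

/-- An irreducible cubic contains no line `PQ`, in terms of its polarization: the four numbers
below are, up to binomial coefficients, the coefficients of the restriction of `F` to `PQ`. -/
lemma polarForm_line {F : MvPolynomial (Fin 3) ℂ} (hirr : Irreducible F)
    (hF : F.IsHomogeneous 3) {Q P : Fin 3 → ℂ} (hQP : LinearIndependent ℂ ![Q, P])
    (h0 : polarForm F Q Q Q = 0) (h1 : polarForm F Q Q P = 0) (h2 : polarForm F P P Q = 0)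
    (h3 : polarForm F P P P = 0) : False := by
  obtain ⟨v, hv, hvF⟩ := exists_eval_ne_zero_of_irreducible hirr hF
    (crossProduct_ne_zero_iff_linearIndependent.2 hQP)
  rw [triple_product_eq_det] at hv
  obtain ⟨c, hc0, hc⟩ := Matrix.exists_vecMul_eq_zero_iff.2 hv
  have hc' : c 0 • v + c 1 • Q + c 2 • P = 0 := by
    funext i
    have := congrFun hc i
    simpa [Matrix.vecMul, dotProduct, Fin.sum_univ_three] using this
  have hne : c 0 ≠ 0 := by
    intro h
    rw [h, zero_smul, zero_add] at hc'
    obtain ⟨h5, h6⟩ := LinearIndependent.pair_iff.1 hQP _ _ hc'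
    exact hc0 (by funext i; fin_cases i <;> simp [h, h5, h6])
  obtain ⟨a, b, rfl⟩ : ∃ a b : ℂ, v = a • Q + b • P := by
    refine ⟨-(c 1 / c 0), -(c 2 / c 0), ?_⟩
    have : c 0 • v = c 0 • (-(c 1 / c 0) • Q + -(c 2 / c 0) • P) := by
      rw [smul_add, smul_smul, smul_smul, mul_neg, mul_neg, mul_div_cancel₀ _ hne,
        mul_div_cancel₀ _ hne]
      rw [← sub_eq_zero, ← hc']
      module
    exact smul_right_injective _ hne this
  apply hvF
  rw [eval_eq_polarForm hF]
  have e1 : polarForm F Q P Q = 0 := by rw [polarForm_swap₂₃, h1]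
  have e2 : polarForm F P Q Q = 0 := by rw [polarForm_swap₁₂, e1]
  have e3 : polarForm F P Q P = 0 := by rw [polarForm_swap₂₃, h2]
  have e4 : polarForm F Q P P = 0 := by rw [polarForm_swap₁₂, e3]
  simp [h0, h1, h2, h3, e1, e2, e3, e4]

/-! ### Tangent lines through a point of the cubic -/

/-- If the lines `QP` and `QP'` are tangent at `P` and `P'` respectively, neither lies in the
tangent line at `Q`, and `P ≠ P'`, then the two lines are distinct: a cubic meets a line through its
point `Q` in only two further points, so it cannot be tangent to it both at `P` and at `P'`. -/
lemma indep_of_tangent {F : MvPolynomial (Fin 3) ℂ} {Q P P' : Fin 3 → ℂ}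
    (h0 : polarForm F Q Q Q = 0) (hP : polarForm F P P Q = 0) (hP' : polarForm F P' P' Q = 0)
    (hL : polarForm F Q Q P ≠ 0) (hL' : polarForm F Q Q P' ≠ 0)
    (hPP' : LinearIndependent ℂ ![P, P']) (a b c : ℂ) (h : a • Q + b • P + c • P' = 0) :
    a = 0 ∧ b = 0 ∧ c = 0 := by
  have e1 : polarForm F Q P Q = polarForm F Q Q P := polarForm_swap₂₃ ..
  have e2 : polarForm F P Q Q = polarForm F Q Q P := by rw [polarForm_swap₁₂, e1]
  have hcP : -(c • P') = a • Q + b • P := by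
    rw [neg_eq_iff_add_eq_zero, ← h]; abel
  have key : polarForm F (-(c • P')) (-(c • P')) Q = 0 := by simp [hP']
  rw [hcP] at key
  simp only [map_add, map_smul, LinearMap.add_apply, LinearMap.smul_apply, smul_eq_mul,
    h0, hP, e1, e2] at key
  have hab : a * b = 0 := by
    have : (a * b) * polarForm F Q Q P = 0 := by linear_combination key / 2
    exact (mul_eq_zero.1 this).resolve_right hL
  rcases mul_eq_zero.1 hab with rfl | rfl
  · rw [zero_smul, zero_add] at h
    exact ⟨rfl, LinearIndependent.pair_iff.1 hPP' _ _ h⟩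
  · have hc := congrArg (polarForm F Q Q) h
    simp [h0, hL'] at hc
    subst hc
    have hQ : Q ≠ 0 := by rintro rfl; simp at hL
    simpa [hQ] using h

/-- Let `v` be a singular point, and `A`, `B = b₀ Q + b₁ v + b₂ A` points of the curve whose tangent
lines contain `Q`. The discriminant of `F` along lines through `Q`, a binary quartic in the
coordinates `(b₁, b₂)` along `v` and `A`, is divisible by `b₁ b₂²` because of its roots at `A`
(simple) and `v` (double); the relation says that the remaining linear factor vanishes at `B`. -/
lemma tangency_relation {F : MvPolynomial (Fin 3) ℂ} {Q v A B : Fin 3 → ℂ}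
    (h0 : polarForm F Q Q Q = 0) (hv : ∀ w, polarForm F v v w = 0)
    (hA : polarForm F A A A = 0) (hAQ : polarForm F A A Q = 0)
    (hB : polarForm F B B B = 0) (hBQ : polarForm F B B Q = 0)
    {b₀ b₁ b₂ : ℂ} (hBe : B = b₀ • Q + b₁ • v + b₂ • A) (h₁ : b₁ ≠ 0) (h₂ : b₂ ≠ 0) :
    (polarForm F Q v A ^ 2 - polarForm F v A A * polarForm F Q Q v) * b₁
      - polarForm F v A A * polarForm F Q Q A * b₂ = 0 := by
  have q1 : polarForm F Q v Q = polarForm F Q Q v := polarForm_swap₂₃ ..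
  have q2 : polarForm F v Q Q = polarForm F Q Q v := by rw [polarForm_swap₁₂, q1]
  have q3 : polarForm F Q A Q = polarForm F Q Q A := polarForm_swap₂₃ ..
  have q4 : polarForm F A Q Q = polarForm F Q Q A := by rw [polarForm_swap₁₂, q3]
  have m1 : polarForm F Q A v = polarForm F Q v A := polarForm_swap₂₃ ..
  have m2 : polarForm F v Q A = polarForm F Q v A := polarForm_swap₁₂ ..
  have m3 : polarForm F v A Q = polarForm F Q v A := by rw [polarForm_swap₂₃, m2]
  have m4 : polarForm F A Q v = polarForm F Q v A := by rw [polarForm_swap₁₂, m1]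
  have m5 : polarForm F A v Q = polarForm F Q v A := by rw [polarForm_swap₂₃, m4]
  have n1 : polarForm F A v A = polarForm F v A A := polarForm_swap₁₂ ..
  have n2 : polarForm F A A v = polarForm F v A A := by rw [polarForm_swap₂₃, n1]
  have v1 (w) : polarForm F v w v = 0 := by rw [polarForm_swap₂₃, hv]
  have v2 (w) : polarForm F w v v = 0 := by rw [polarForm_swap₁₂, v1]
  have a1 : polarForm F A Q A = 0 := by rw [polarForm_swap₂₃, hAQ]
  have a2 : polarForm F Q A A = 0 := by rw [polarForm_swap₁₂, a1]
  subst hBe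
  simp only [map_add, map_smul, LinearMap.add_apply, LinearMap.smul_apply, smul_eq_mul,
    h0, hA, hAQ, hv, q1, q2, q3, q4, m1, m2, m3, m4, m5, n1, n2, v1, v2, a1, a2] at hB hBQ
  generalize polarForm F Q Q v = p at *
  generalize polarForm F Q Q A = q at *
  generalize polarForm F Q v A = m at *
  generalize polarForm F v A A = n at *
  have hd : b₁ * b₂ ^ 2 * ((m ^ 2 - n * p) * b₁ - n * q * b₂) = 0 := by
    linear_combination (b₀ * (b₁ * p + b₂ * q) + b₁ * b₂ * m) / 2 * hBQ
      - (b₁ * p + b₂ * q) / 3 * hB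
  exact (mul_eq_zero.1 hd).resolve_left (mul_ne_zero h₁ (pow_ne_zero 2 h₂))


/-- In the situation of `tangency_relation` for two distinct points `B` and `C`, the two linear
relations force `F` to vanish on the tangent line at `Q`. -/
lemma no_singular {F : MvPolynomial (Fin 3) ℂ} (hirr : Irreducible F)
    (hF : F.IsHomogeneous 3) {Q v A B C : Fin 3 → ℂ}
    (h0 : polarForm F Q Q Q = 0) (hv : ∀ w, polarForm F v v w = 0)
    (hA : polarForm F A A A = 0) (hAQ : polarForm F A A Q = 0)
    (hB : polarForm F B B B = 0) (hBQ : polarForm F B B Q = 0)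
    (hC : polarForm F C C C = 0) (hCQ : polarForm F C C Q = 0)
    (hLv : polarForm F Q Q v ≠ 0) (hLA : polarForm F Q Q A ≠ 0)
    (hLB : polarForm F Q Q B ≠ 0) (hLC : polarForm F Q Q C ≠ 0)
    (hvA : LinearIndependent ℂ ![v, A]) (hvB : LinearIndependent ℂ ![v, B])
    (hvC : LinearIndependent ℂ ![v, C]) (hAB : LinearIndependent ℂ ![A, B])
    (hAC : LinearIndependent ℂ ![A, C]) (hBC : LinearIndependent ℂ ![B, C]) : False := by
  have iQvA := indep_of_tangent h0 (hv Q) hAQ hLv hLA hvA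
  obtain ⟨b₀, b₁, b₂, hBe⟩ := exists_coords_s13 iQvA B
  obtain ⟨c₀, c₁, c₂, hCe⟩ := exists_coords_s13 iQvA C
  have hb₁ : b₁ ≠ 0 := by
    rintro rfl
    have := (indep_of_tangent h0 hAQ hBQ hLA hLB hAB b₀ b₂ (-1) (by rw [hBe]; module)).2.2
    norm_num at this
  have hb₂ : b₂ ≠ 0 := by
    rintro rfl
    have := (indep_of_tangent h0 (hv Q) hBQ hLv hLB hvB b₀ b₁ (-1) (by rw [hBe]; module)).2.2
    norm_num at this
  have hc₁ : c₁ ≠ 0 := by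
    rintro rfl
    have := (indep_of_tangent h0 hAQ hCQ hLA hLC hAC c₀ c₂ (-1) (by rw [hCe]; module)).2.2
    norm_num at this
  have hc₂ : c₂ ≠ 0 := by
    rintro rfl
    have := (indep_of_tangent h0 (hv Q) hCQ hLv hLC hvC c₀ c₁ (-1) (by rw [hCe]; module)).2.2
    norm_num at this
  -- `B` and `C` have different directions seen from `Q`
  have hdet : b₁ * c₂ - b₂ * c₁ ≠ 0 := by
    intro h
    have h' : (b₁ * c₀ - c₁ * b₀) • Q + c₁ • B + (-b₁) • C = 0 := by
      have e : b₁ * c₂ = b₂ * c₁ := sub_eq_zero.1 h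
      calc _ = (b₂ * c₁ - b₁ * c₂) • A := by rw [hBe, hCe]; module
        _ = 0 := by rw [e, sub_self, zero_smul]
    exact hc₁ (indep_of_tangent h0 hBQ hCQ hLB hLC hBC _ _ _ h').2.1
  have rB := tangency_relation h0 hv hA hAQ hB hBQ hBe hb₁ hb₂
  have rC := tangency_relation h0 hv hA hAQ hC hCQ hCe hc₁ hc₂
  have hn : polarForm F v A A = 0 := by
    have : polarForm F v A A * (polarForm F Q Q A * (b₁ * c₂ - b₂ * c₁)) = 0 := by
      linear_combination c₁ * rB - b₁ * rC
    exact (mul_eq_zero.1 this).resolve_right (mul_ne_zero hLA hdet)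
  have hm : polarForm F Q v A = 0 := by
    rw [hn] at rB
    simpa [hb₁] using rB
  -- `P = L(A) v - L(v) A` spans the tangent line at `Q` together with `Q`
  have hQP : LinearIndependent ℂ
      ![Q, polarForm F Q Q A • v - polarForm F Q Q v • A] := by
    rw [LinearIndependent.pair_iff]
    intro s t h
    obtain ⟨h1, h2, -⟩ := iQvA s (t * polarForm F Q Q A) (-(t * polarForm F Q Q v))
      (by rw [← h]; module)
    exact ⟨h1, (mul_eq_zero.1 h2).resolve_right hLA⟩
  have m2 : polarForm F v Q A = 0 := by rw [polarForm_swap₁₂, hm]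
  have m3 : polarForm F v A Q = 0 := by rw [polarForm_swap₂₃, m2]
  have m5 : polarForm F A v Q = 0 := by rw [polarForm_swap₁₂, m3]
  have n1 : polarForm F A v A = 0 := by rw [polarForm_swap₁₂, hn]
  have n2 : polarForm F A A v = 0 := by rw [polarForm_swap₂₃, n1]
  have v1 : polarForm F v A v = 0 := by rw [polarForm_swap₂₃, hv]
  have v2 : polarForm F A v v = 0 := by rw [polarForm_swap₁₂, v1]
  refine polarForm_line hirr hF hQP h0 ?_ ?_ ?_
  · simp [mul_comm]
  · simp [hv, hAQ, m3, m5]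
  · simp [hv, hA, hn, n1, n2, v1, v2]

/-! ### Collinear points of tangency -/

/-- If `C` is on the line `AB`, the quadratic form `T Q · ·` vanishes at three points of that
line, hence on the whole line, which makes it degenerate. -/
lemma hessian_det_eq_zero {F : MvPolynomial (Fin 3) ℂ}
    (hF : F.IsHomogeneous 3) {Q A B C : Fin 3 → ℂ}
    (h0 : polarForm F Q Q Q = 0) (hAQ : polarForm F A A Q = 0)
    (hBQ : polarForm F B B Q = 0) (hCQ : polarForm F C C Q = 0)
    (hLA : polarForm F Q Q A ≠ 0) (hLB : polarForm F Q Q B ≠ 0)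
    (hAB : LinearIndependent ℂ ![A, B])
    (hAC : LinearIndependent ℂ ![A, C]) (hBC : LinearIndependent ℂ ![B, C])
    (hdep : ¬LinearIndependent ℂ ![A, B, C]) : (hessianEval F Q).det = 0 := by
  have iQAB := indep_of_tangent h0 hAQ hBQ hLA hLB hAB
  obtain ⟨g, hg, hg0⟩ : ∃ g : Fin 3 → ℂ, g 0 • A + g 1 • B + g 2 • C = 0 ∧ g ≠ 0 := by
    rw [Fintype.linearIndependent_iff] at hdep
    push Not at hdep
    obtain ⟨g, hg, i, hi⟩ := hdep
    exact ⟨g, by simpa [Fin.sum_univ_three] using hg, fun h => hi (by simp [h])⟩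
  have g0 : g 0 ≠ 0 := by
    intro h
    rw [h, zero_smul, zero_add] at hg
    obtain ⟨h1, h2⟩ := LinearIndependent.pair_iff.1 hBC _ _ hg
    exact hg0 (by funext i; fin_cases i <;> simp [h, h1, h2])
  have g1 : g 1 ≠ 0 := by
    intro h
    rw [h, zero_smul, add_zero] at hg
    obtain ⟨h1, h2⟩ := LinearIndependent.pair_iff.1 hAC _ _ hg
    exact hg0 (by funext i; fin_cases i <;> simp [h, h1, h2])
  have e1 : polarForm F B A Q = polarForm F A B Q := polarForm_swap₁₂ ..
  have hABQ : polarForm F A B Q = 0 := by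
    have hC : -(g 2 • C) = g 0 • A + g 1 • B := by
      rw [neg_eq_iff_add_eq_zero, ← hg]; abel
    have key : polarForm F (-(g 2 • C)) (-(g 2 • C)) Q = 0 := by simp [hCQ]
    rw [hC] at key
    simp only [map_add, map_smul, LinearMap.add_apply, LinearMap.smul_apply, smul_eq_mul,
      hAQ, hBQ, e1] at key
    have : g 0 * g 1 * polarForm F A B Q = 0 := by linear_combination key / 2
    exact (mul_eq_zero.1 this).resolve_left (mul_ne_zero g0 g1)
  rw [hABQ] at e1
  -- the kernel of the Hessian is the intersection of `AB` with the tangent line at `Q`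
  set w := polarForm F Q Q B • A - polarForm F Q Q A • B with hw
  have hw0 : w ≠ 0 := by
    intro h
    have := (iQAB 0 (polarForm F Q Q B) (-polarForm F Q Q A) (by rw [← h, hw]; module)).2.1
    exact hLB this
  have hwQ : polarForm F Q Q w = 0 := by simp [hw, mul_comm]
  have hwA : polarForm F Q A w = 0 := by
    rw [polarForm_swap₁₂, polarForm_swap₂₃]; simp [hw, hAQ, hABQ]
  have hwB : polarForm F Q B w = 0 := by
    rw [polarForm_swap₁₂, polarForm_swap₂₃]; simp [hw, hBQ, e1]
  refine Matrix.exists_mulVec_eq_zero_iff.1 ⟨w, hw0, funext fun i => ?_⟩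
  obtain ⟨a, b, c, hx⟩ := exists_coords_s13 iQAB (Pi.single i 1)
  rw [hessianEval_mulVec hF, hx]
  simp [hwQ, hwA, hwB]

theorem smooth_cubic_of_three_tangents_through_point
    (F : MvPolynomial (Fin 3) ℂ) (hirr : Irreducible F) (hhom : F.IsHomogeneous 3)
    (Q A B C : Fin 3 → ℂ) (hQ0 : Q ≠ 0) (hA0 : A ≠ 0) (hB0 : B ≠ 0) (hC0 : C ≠ 0)
    (hQF : MvPolynomial.eval Q F = 0) (hAF : MvPolynomial.eval A F = 0)
    (hBF : MvPolynomial.eval B F = 0) (hCF : MvPolynomial.eval C F = 0)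
    (hAB : ¬∃ t : ℂ, A = t • B) (hAC : ¬∃ t : ℂ, A = t • C)
    (hBC : ¬∃ t : ℂ, B = t • C)
    (hAQ : ¬∃ t : ℂ, A = t • Q) (hBQ : ¬∃ t : ℂ, B = t • Q)
    (hCQ : ¬∃ t : ℂ, C = t • Q)
    (hsA : gradEval F A ≠ 0) (hsB : gradEval F B ≠ 0) (hsC : gradEval F C ≠ 0)
    (htA : ∑ i, gradEval F A i * Q i = 0)
    (htB : ∑ i, gradEval F B i * Q i = 0)
    (htC : ∑ i, gradEval F C i * Q i = 0) :
    (∀ v : Fin 3 → ℂ, v ≠ 0 → MvPolynomial.eval v F = 0 → gradEval F v ≠ 0) ∧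
    (¬LinearIndependent ℂ ![A, B, C] → (hessianEval F Q).det = 0) := by
  have lin {P P' : Fin 3 → ℂ} (h0 : P' ≠ 0) (h : ¬∃ t : ℂ, P = t • P') :
      LinearIndependent ℂ ![P', P] :=
    (LinearIndependent.pair_iff' h0).2 fun a ha => h ⟨a, ha.symm⟩
  rw [eval_eq_polarForm hhom] at hQF hAF hBF hCF
  rw [sum_gradEval_mul hhom] at htA htB htC
  have tA : polarForm F A A Q = 0 := by simpa using htA
  have tB : polarForm F B B Q = 0 := by simpa using htB
  have tC : polarForm F C C Q = 0 := by simpa using htC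
  have lA : polarForm F Q Q A ≠ 0 := fun h => polarForm_line hirr hhom (lin hQ0 hAQ) hQF h tA hAF
  have lB : polarForm F Q Q B ≠ 0 := fun h => polarForm_line hirr hhom (lin hQ0 hBQ) hQF h tB hBF
  have lC : polarForm F Q Q C ≠ 0 := fun h => polarForm_line hirr hhom (lin hQ0 hCQ) hQF h tC hCF
  have iAB := LinearIndependent.pair_symm_iff.1 (lin hB0 hAB)
  have iAC := LinearIndependent.pair_symm_iff.1 (lin hC0 hAC)
  have iBC := LinearIndependent.pair_symm_iff.1 (lin hC0 hBC)
  refine ⟨fun v hv0 _ hgv => ?_,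
    hessian_det_eq_zero hhom hQF tA tB tC lA lB iAB iAC iBC⟩
  have sv (w) : polarForm F v v w = 0 := by
    have := sum_gradEval_mul hhom v w
    simpa [hgv] using this.symm
  -- a point with nonzero gradient is not proportional to the singular point `v`
  have smooth {P : Fin 3 → ℂ} (hP : gradEval F P ≠ 0) : LinearIndependent ℂ ![v, P] := by
    refine lin hv0 ?_
    rintro ⟨t, rfl⟩
    refine hP (funext fun i => ?_)
    have := sum_gradEval_mul hhom (t • v) (Pi.single i 1)
    simpa [Pi.single_apply, sv] using this
  have hQv : LinearIndependent ℂ ![Q, v] := by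
    refine lin hQ0 ?_
    rintro ⟨t, rfl⟩
    have ht : t ≠ 0 := by rintro rfl; simp at hv0
    have := sv A
    simp [ht, lA] at this
  have lv : polarForm F Q Q v ≠ 0 := fun h =>
    polarForm_line hirr hhom hQv hQF h (sv Q) (sv v)
  exact no_singular hirr hhom hQF sv hAF tA hBF tB hCF tC lv lA lB lC
    (smooth hsA) (smooth hsB) (smooth hsC) iAB iAC iBC
end
end

section
/- Let p, r, c be real numbers with p > 0 and r > 0, and set s = c·p and p' = p·c² + r. Assume that p, p', s are pairwise distinct. Let λ = p·(1−c)/r and let μ ∈ ℂ satisfy μ² = p + r·λ² (so η := p·c + r·λ = p). Then the homogeneous cubic polynomial F(K,K',H) = (p·H² − K²)·(p·H − μ·K') − (p'·H² − K'²)·(p·H − μ·K) is irreducible in ℂ[K,K',H]. -/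
/-!
A reducible cubic has a factor of total degree one, so it vanishes on an affine plane. With
`x = K`, `y = K'`, `h = H`, the cubic is
`F = p (p - p') h³ + μ h² (p' x - p y) + p h (y² - x²) + μ x y (x - y)`, and `μ ≠ 0`.

The plane cannot be parallel to `h = 0`, since `F` restricted to a slice `h = const` keeps the
top-degree part `μ x y (x - y)`. Hence the plane meets the slice `h = 1` in a line, and on this line
`F` vanishes identically. The top-degree part forces the line to be `x = e`, `y = e` or `x = y + e`.
Comparing the remaining coefficients (`cubic_coeffs`):

* `x = e` gives `μ e = p` and `e² = p`, so `μ² = p`, hence `λ = 0`, `c = 1` and `p = s`;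
* `y = e` gives `μ e = p` and `e² = p'`, so `p' μ² = p²`, which after clearing the denominator `r`
  reads `(r - p c (1 - c))² = 0`, hence `p' = s`;
* `x = y + e` gives `e = 0` and then `p = p'`.

All three are excluded by hypothesis. Homogeneity of `F` is used only to compute its degree.
-/

open MvPolynomial

noncomputable section

/-- A polynomial of total degree at most one in three variables is an affine function. -/
lemma exists_affine_of_totalDegree_le_one (A : MvPolynomial (Fin 3) ℂ) (hA : A.totalDegree ≤ 1) :
    ∃ a b c d : ℂ, ∀ v : Fin 3 → ℂ, eval v A = a * v 0 + b * v 1 + c * v 2 + d := by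
  rw [A.as_sum]
  refine Finset.sum_induction _
    (fun q : MvPolynomial (Fin 3) ℂ => ∃ a b c d : ℂ, ∀ v : Fin 3 → ℂ,
      eval v q = a * v 0 + b * v 1 + c * v 2 + d) ?_ ?_ ?_
  · rintro q₁ q₂ ⟨a, b, c, d, h⟩ ⟨a', b', c', d', h'⟩
    refine ⟨a + a', b + b', c + c', d + d', fun v => ?_⟩
    rw [map_add, h, h']
    ring
  · exact ⟨0, 0, 0, 0, fun v => by simp⟩
  · intro m hm
    have h1 := (le_totalDegree hm).trans hA
    rw [Finsupp.sum_fintype _ _ (fun _ => rfl), Fin.sum_univ_three] at h1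
    have hev : ∀ v : Fin 3 → ℂ, eval v (monomial m (coeff m A)) =
        coeff m A * (v 0 ^ m 0 * v 1 ^ m 1 * v 2 ^ m 2) := fun v => by
      rw [eval_monomial, Finsupp.prod_fintype _ _ (fun _ => pow_zero _), Fin.prod_univ_three]
    have hcases : (m 0 = 0 ∧ m 1 = 0 ∧ m 2 = 0) ∨ (m 0 = 1 ∧ m 1 = 0 ∧ m 2 = 0) ∨
        (m 0 = 0 ∧ m 1 = 1 ∧ m 2 = 0) ∨ (m 0 = 0 ∧ m 1 = 0 ∧ m 2 = 1) := by omega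
    rcases hcases with ⟨h0, h1, h2⟩ | ⟨h0, h1, h2⟩ | ⟨h0, h1, h2⟩ | ⟨h0, h1, h2⟩
    · exact ⟨0, 0, 0, coeff m A, fun v => by rw [hev, h0, h1, h2]; ring⟩
    · exact ⟨coeff m A, 0, 0, 0, fun v => by rw [hev, h0, h1, h2]; ring⟩
    · exact ⟨0, coeff m A, 0, 0, fun v => by rw [hev, h0, h1, h2]; ring⟩
    · exact ⟨0, 0, coeff m A, 0, fun v => by rw [hev, h0, h1, h2]; ring⟩

lemma cubic_coeffs {c₃ c₂ c₁ c₀ : ℂ}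
    (h : ∀ t : ℂ, c₃ * t ^ 3 + c₂ * t ^ 2 + c₁ * t + c₀ = 0) : c₃ = 0 ∧ c₂ = 0 ∧ c₁ = 0 := by
  have h0 := h 0
  have h1 := h 1
  have h2 := h (-1)
  have h3 := h 2
  refine ⟨?_, ?_, ?_⟩
  · linear_combination (1 / 6) * h3 - (1 / 2) * h1 - (1 / 6) * h2 + (1 / 2) * h0
  · linear_combination (1 / 2) * h1 + (1 / 2) * h2 - h0
  · linear_combination h1 - (1 / 3) * h2 - (1 / 2) * h0 - (1 / 6) * h3

/-- The cubic does not vanish identically on any affine plane. -/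
lemma cubic_not_zero_on_plane
    {p r c s p' lam : ℝ} (hp : 0 < p) (hr : 0 < r)
    (hs : s = c * p) (hp'def : p' = p * c ^ 2 + r)
    (hpp' : p ≠ p') (hps : p ≠ s) (hp's : p' ≠ s) (hlam : lam = p * (1 - c) / r)
    {mu : ℂ} (hmu2 : mu ^ 2 = (p : ℂ) + (r : ℂ) * (lam : ℂ) ^ 2)
    {α β γ δ : ℂ} (hne : ¬(α = 0 ∧ β = 0 ∧ γ = 0))
    (h : ∀ x y z : ℂ, α * x + β * y + γ * z + δ = 0 →
      ((p : ℂ) * z ^ 2 - x ^ 2) * (p * z - mu * y) -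
        ((p' : ℂ) * z ^ 2 - y ^ 2) * (p * z - mu * x) = 0) : False := by
  have hpC : (p : ℂ) ≠ 0 := by exact_mod_cast hp.ne'
  have hmu : mu ≠ 0 := by
    rintro rfl
    have h1 : (0 : ℝ) = p + r * lam ^ 2 := by
      have h2 : ((0 : ℝ) : ℂ) = p + r * lam ^ 2 := by rw [← hmu2]; simp
      exact_mod_cast h2
    nlinarith [mul_nonneg hr.le (sq_nonneg lam)]
  have hrlam : r * lam = p * (1 - c) := by rw [hlam]; field_simp
  -- The two exceptional values of `μ²`, excluded for the lines `x = e` and `y = e` respectively.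
  have hx : mu ^ 2 ≠ p := by
    intro h1
    have h2 : p + r * lam ^ 2 = p := by
      rw [hmu2] at h1
      exact_mod_cast h1
    have h3 : lam = 0 := by
      have : r * lam ^ 2 = 0 := by linarith
      simpa [hr.ne'] using this
    rw [h3, mul_zero] at hrlam
    exact hps (by rw [hs]; linarith)
  have hy : (p' : ℂ) * mu ^ 2 ≠ p ^ 2 := by
    intro h1
    have h2 : p' * (p + r * lam ^ 2) = p ^ 2 := by
      rw [hmu2] at h1
      exact_mod_cast h1
    have h3 : p * (r - p * c * (1 - c)) ^ 2 = 0 := by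
      have h4 : p' * (p * r + (r * lam) ^ 2) = p ^ 2 * r := by linear_combination r * h2
      rw [hrlam, hp'def] at h4
      linear_combination h4
    have h4 : r - p * c * (1 - c) = 0 := by simpa [hp.ne'] using h3
    exact hp's (by rw [hp'def, hs]; linear_combination h4)
  by_cases hα : α = 0
  · by_cases hβ : β = 0
    · -- The plane `z = -δ / γ`, tested along the line `y = -x`, where the top part is `-2 μ x ^ 3`.
      have hγ : γ ≠ 0 := fun hγ => hne ⟨hα, hβ, hγ⟩
      obtain ⟨z, hz⟩ : ∃ z, γ * z + δ = 0 := ⟨-δ / γ, by field_simp; ring⟩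
      have h1 : -2 * mu = 0 := (cubic_coeffs (c₃ := -2 * mu) (c₂ := 0)
        (c₁ := mu * z ^ 2 * (p' + p)) (c₀ := p * (p - p') * z ^ 3) fun t => by
          linear_combination h t (-t) z (by rw [hα, hβ]; linear_combination hz)).1
      exact hmu (by linear_combination (-1 / 2) * h1)
    · obtain ⟨e, he⟩ : ∃ e, β * e + γ + δ = 0 := ⟨-(γ + δ) / β, by field_simp; ring⟩
      obtain ⟨-, h2, h1⟩ := cubic_coeffs (c₃ := 0) (c₂ := mu * e - p)
        (c₁ := mu * (p' - e ^ 2)) (c₀ := p * (p - p') - mu * p * e + p * e ^ 2) fun t => by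
          linear_combination h t e 1 (by rw [hα]; linear_combination he)
      have h3 : (p' : ℂ) - e ^ 2 = 0 := (mul_eq_zero.mp h1).resolve_left hmu
      exact hy (by linear_combination mu ^ 2 * h3 + (mu * e + p) * h2)
  · obtain ⟨b, hb⟩ : ∃ b, α * b + β = 0 := ⟨-β / α, by field_simp; ring⟩
    obtain ⟨e, he⟩ : ∃ e, α * e + γ + δ = 0 := ⟨-(γ + δ) / α, by field_simp; ring⟩
    obtain ⟨h3, h2, h1⟩ := cubic_coeffs (c₃ := mu * (b * (b - 1)))
      (c₂ := p * (1 - b ^ 2) + mu * e * (2 * b - 1))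
      (c₁ := mu * (p' * b - p) - 2 * p * b * e + mu * e ^ 2)
      (c₀ := p * (p - p') + mu * p' * e - p * e ^ 2) fun t => by
        linear_combination h (b * t + e) t 1 (by linear_combination t * hb + he)
    rcases mul_eq_zero.mp ((mul_eq_zero.mp h3).resolve_left hmu) with hb0 | hb1
    · rw [hb0] at h1 h2
      have h4 : e ^ 2 - p = 0 :=
        (mul_eq_zero.mp (show mu * (e ^ 2 - p) = 0 by linear_combination h1)).resolve_left hmu
      have h5 : (p : ℂ) * (mu ^ 2 - p) = 0 := by
        linear_combination -(mu ^ 2) * h4 - (mu * e + p) * h2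
      exact hx (sub_eq_zero.mp ((mul_eq_zero.mp h5).resolve_left hpC))
    · have hb' : b = 1 := sub_eq_zero.mp hb1
      rw [hb'] at h1 h2
      have he0 : e = 0 :=
        (mul_eq_zero.mp (show mu * e = 0 by linear_combination h2)).resolve_left hmu
      rw [he0] at h1
      have h4 : (p' : ℂ) - p = 0 :=
        (mul_eq_zero.mp (show mu * ((p' : ℂ) - p) = 0 by linear_combination h1)).resolve_left hmu
      exact hpp' (by exact_mod_cast (sub_eq_zero.mp h4).symm)

theorem cubic_irreducible_at_special_specialization
    (p r c : ℝ) (hp : 0 < p) (hr : 0 < r)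
    (s p' : ℝ) (hs : s = c * p) (hp'def : p' = p * c ^ 2 + r)
    (hpp' : p ≠ p') (hps : p ≠ s) (hp's : p' ≠ s)
    (lam : ℝ) (hlam : lam = p * (1 - c) / r)
    (mu : ℂ) (hmu2 : mu ^ 2 = (p : ℂ) + (r : ℂ) * (lam : ℂ) ^ 2) :
    Irreducible
      ((C (p : ℂ) * (X 2) ^ 2 - (X 0) ^ 2) * (C (p : ℂ) * X 2 - C mu * X 1) -
        (C (p' : ℂ) * (X 2) ^ 2 - (X 1) ^ 2) * (C (p : ℂ) * X 2 - C mu * X 0) :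
        MvPolynomial (Fin 3) ℂ) := by
  set F : MvPolynomial (Fin 3) ℂ :=
    (C (p : ℂ) * (X 2) ^ 2 - (X 0) ^ 2) * (C (p : ℂ) * X 2 - C mu * X 1) -
      (C (p' : ℂ) * (X 2) ^ 2 - (X 1) ^ 2) * (C (p : ℂ) * X 2 - C mu * X 0) with hF
  have hFev : ∀ x y z : ℂ, eval ![x, y, z] F =
      ((p : ℂ) * z ^ 2 - x ^ 2) * (p * z - mu * y) -
        ((p' : ℂ) * z ^ 2 - y ^ 2) * (p * z - mu * x) := fun x y z => by simp [hF]
  have hF0 : F ≠ 0 := fun h0 =>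
    cubic_not_zero_on_plane hp hr hs hp'def hpp' hps hp's hlam hmu2
      (α := 1) (β := 0) (γ := 0) (δ := 0) (by simp)
      fun x y z _ => by rw [← hFev, h0, map_zero]
  have hhom : F.IsHomogeneous 3 := by
    have hq : ∀ (a : ℂ) (i j : Fin 3),
        (C a * X i ^ 2 - X j ^ 2 : MvPolynomial (Fin 3) ℂ).IsHomogeneous 2 := fun a i j =>
      ((isHomogeneous_X_pow i 2).C_mul a).sub (isHomogeneous_X_pow j 2)
    have hl : ∀ (a b : ℂ) (i j : Fin 3),
        (C a * X i - C b * X j : MvPolynomial (Fin 3) ℂ).IsHomogeneous 1 := fun a b i j =>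
      ((isHomogeneous_X ℂ i).C_mul a).sub ((isHomogeneous_X ℂ j).C_mul b)
    exact ((hq _ _ _).mul (hl _ _ _ _)).sub ((hq _ _ _).mul (hl _ _ _ _))
  have hno : ∀ A B : MvPolynomial (Fin 3) ℂ, F = A * B → A.totalDegree ≠ 1 := by
    intro A B hAB hdeg
    obtain ⟨α, β, γ, δ, hA⟩ := exists_affine_of_totalDegree_le_one A hdeg.le
    refine cubic_not_zero_on_plane hp hr hs hp'def hpp' hps hp's hlam hmu2
      (α := α) (β := β) (γ := γ) (δ := δ) ?_ ?_
    · rintro ⟨rfl, rfl, rfl⟩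
      have hAC : A = C δ := MvPolynomial.funext fun v => by rw [hA, eval_C]; ring
      rw [hAC, totalDegree_C] at hdeg
      exact zero_ne_one hdeg
    · intro x y z hxyz
      have hA0 : eval ![x, y, z] A = 0 := by rw [hA]; simpa using hxyz
      rw [← hFev, hAB, map_mul, hA0, zero_mul]
  have hunit : ∀ A B : MvPolynomial (Fin 3) ℂ, F = A * B → A.totalDegree = 0 → IsUnit A := by
    intro A B hAB hdeg
    rw [totalDegree_eq_zero_iff_eq_C] at hdeg
    have hne : coeff 0 A ≠ 0 := fun h0 => hF0 (by rw [hAB, hdeg, h0, map_zero, zero_mul])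
    rw [hdeg]
    exact (isUnit_iff_ne_zero.mpr hne).map C
  refine ⟨fun hu => ?_, fun A B hAB => ?_⟩
  · have h3 := hhom.totalDegree hF0
    rw [((isUnit_iff_totalDegree_of_isReduced).mp hu).2] at h3
    omega
  · have hA0 : A ≠ 0 := by rintro rfl; exact hF0 (by rw [hAB, zero_mul])
    have hB0 : B ≠ 0 := by rintro rfl; exact hF0 (by rw [hAB, mul_zero])
    have h3 := hhom.totalDegree hF0
    rw [hAB, totalDegree_mul_of_isDomain hA0 hB0] at h3
    have hBA : F = B * A := by rw [hAB, mul_comm]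
    have h1 := hno A B hAB
    have h2 := hno B A hBA
    rcases (show A.totalDegree = 0 ∨ B.totalDegree = 0 by omega) with h | h
    · exact Or.inl (hunit A B hAB h)
    · exact Or.inr (hunit B A hBA h)
end
end

section
/- Let δ be a positive integer that is not a perfect square, and let O, P ∈ ℤ² ⊆ ℝ² be two distinct integer points of the plane. Let R = { m + n·√δ : m, n ∈ ℤ } ⊆ ℝ. Then the set of points Q ∈ ℝ² whose two coordinates both lie in R and such that the Euclidean distances d(O,Q) and d(P,Q) both lie in R is Zariski-dense in ℝ². -/
/-!
After a translation, let the two points be `(0, 0)` and `(a, b)`; exchanging the coordinates if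
necessary, `b ≠ 0`. Put `D = a² + b²` and let `u`, `v` be the distances of `Q` from the two points.
On the hyperbola `u - v = t`, the coordinate `s = u + v` satisfies
`s² - c w² = D` with `c = D - t²`, where `c w / 2` is, up to sign, the cross product of `Q` with
`(a, b)`. So points on this hyperbola are moved around by the solutions of the Pell equation
`X² - c Y² = 1` over `ℤ[√δ]`, and solutions with `X ≡ 1`, `Y ≡ 0` modulo `2D` preserve
integrality of the coordinates and of the distances.

* **Starting points.** If `m² - n²δ = 1`, then `Q = (a + b n√δ, 0)` has distance `|b m|` from
  `(a, b)`. This gives `t = a - b ε` for the unit `ε = m - n√δ`, which may be taken arbitrarily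
  small, and then `c > 0` while the conjugate of `c` is negative.
* **Relative Pell equation** (`relPell_exists`, `relPell_large`). For such `c` the equation
  `X² - c Y² = 1` has nontrivial solutions over `ℤ[√δ]`. As in the classical proof,
  one finds by the pigeonhole principle infinitely many `(X, Y)` for which `X² - c Y²` and its
  conjugate are bounded, and divides two elements with the same norm that are congruent modulo it.
* **Asymptotic directions** (`asymptotic_direction`). With `X → ∞`, the points on the hyperbola
  tend to infinity in the direction `(a t + b√c, b t - a√c)`, a vector of length `D`. As `ε` varies,
  these directions are infinite in number.
* **Density** (`leadingForm_eval_eq_zero`, `homogeneous_eq_zero`). The leading form of a polynomial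
  vanishing on all these points vanishes in all these directions, hence is zero: a nonzero binary
  form has only finitely many zeros on a circle. A nonzero polynomial has a nonzero leading form.
-/

noncomputable section

/-- Membership in the real quadratic ring `ℤ[√δ]`. -/
def InZsqrtd (δ : ℕ) (x : ℝ) : Prop := ∃ m n : ℤ, x = (m : ℝ) + (n : ℝ) * Real.sqrt δ

open Filter Topology


/-! ### The Pell equation over a ring with two real embeddings

`A` is a commutative ring with two embeddings `φ`, `ψ` into `ℝ` that make it a lattice in `ℝ²`. The
hypotheses `happ` and `hfin` say that the lattice is cocompact and discrete. -/

section RelativePell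
variable {A : Type*} [CommRing A] (φ ψ : A →+* ℝ)

/-- Dirichlet approximation: `X / Y` approximates `r` under `φ`, while `X` and `Y` stay bounded
under `ψ`. The pigeonholes are the positions of `X - r Y` in an interval of fixed length cut into
`N` parts. -/
lemma relPell_small (happ : ∃ C : ℝ, 0 < C ∧ ∀ α β : ℝ, ∃ z : A, |φ z - α| ≤ C ∧ |ψ z - β| ≤ C)
    (r : ℝ) :
    ∃ C : ℝ, 0 < C ∧ ∀ N : ℕ, 0 < N → ∃ X Y : A, Y ≠ 0 ∧ |φ Y| ≤ C * N ∧
      |φ X - r * φ Y| ≤ C / N ∧ |ψ X| ≤ C ∧ |ψ Y| ≤ C := by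
  obtain ⟨C, hC, happ⟩ := happ
  choose y hy hy' using fun k : ℕ => happ (4 * C * k) 0
  choose x hx hx' using fun k : ℕ => happ (r * φ (y k)) 0
  refine ⟨10 * C, by positivity, fun N hN => ?_⟩
  have hN' : (0 : ℝ) < N := by exact_mod_cast hN
  have hN1 : (1 : ℝ) ≤ N := by exact_mod_cast hN
  -- The deviation of `x k` from `r * y k`, normalised to lie in `[0, N]`.
  set g : ℕ → ℝ := fun k => (φ (x k) - r * φ (y k) + C) * N / (2 * C) with hg
  have hg0 : ∀ k, 0 ≤ g k := fun k => by
    have := (abs_le.1 (hx k)).1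
    have : 0 ≤ φ (x k) - r * φ (y k) + C := by linarith
    positivity
  have hgN : ∀ k, g k ≤ N := fun k => by
    have := (abs_le.1 (hx k)).2
    rw [hg]
    simp only
    rw [div_le_iff₀ (by positivity)]
    nlinarith
  obtain ⟨i, hi, j, hj, hij, hfl⟩ : ∃ i ∈ Finset.range (N + 2), ∃ j ∈ Finset.range (N + 2),
      i < j ∧ ⌊g i⌋₊ = ⌊g j⌋₊ := by
    obtain ⟨i, hi, j, hj, hne, h⟩ := Finset.exists_ne_map_eq_of_card_lt_of_maps_to
      (s := Finset.range (N + 2)) (t := Finset.range (N + 1)) (f := fun k => ⌊g k⌋₊)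
      (by simp) (fun k _ => by
        simp only [Finset.coe_range, Set.mem_Iio]
        exact Nat.lt_succ_of_le (Nat.floor_le_of_le (hgN k)))
    rcases lt_or_gt_of_ne hne with h' | h'
    · exact ⟨i, hi, j, hj, h', h⟩
    · exact ⟨j, hj, i, hi, h', h.symm⟩
  have hgap : |g j - g i| ≤ 1 := by
    have h1 := Nat.floor_le (hg0 i)
    have h2 := Nat.lt_floor_add_one (g i)
    have h3 := Nat.floor_le (hg0 j)
    have h4 := Nat.lt_floor_add_one (g j)
    rw [hfl] at h1 h2
    rw [abs_le]
    constructor <;> linarith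
  have hij' : (i : ℝ) + 1 ≤ j := by exact_mod_cast hij
  have hjN : (j : ℝ) ≤ N + 1 := by
    have := Finset.mem_range.1 hj
    exact_mod_cast (by omega : j ≤ N + 1)
  have hi0 : (0 : ℝ) ≤ i := by positivity
  have a1 := abs_le.1 (hy i)
  have a2 := abs_le.1 (hy j)
  have a3 := abs_le.1 (hy' i)
  have a4 := abs_le.1 (hy' j)
  have a5 := abs_le.1 (hx' i)
  have a6 := abs_le.1 (hx' j)
  have m1 : C * (i + 1) ≤ C * j := by gcongr
  have m2 : C * j ≤ C * (N + 1) := by gcongr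
  have m3 : 0 ≤ C * i := by positivity
  have m4 : C * 1 ≤ C * N := by gcongr
  refine ⟨x j - x i, y j - y i, ?_, ?_, ?_, ?_, ?_⟩
  · intro h
    have : φ (y j) - φ (y i) = 0 := by rw [← map_sub, h, map_zero]
    nlinarith
  · rw [map_sub, abs_le]
    constructor <;> nlinarith
  · have e : φ (x j - x i) - r * φ (y j - y i) = (g j - g i) * (2 * C / N) := by
      rw [hg]; simp only [map_sub]; field_simp; ring
    rw [e, abs_mul, abs_of_pos (show 0 < 2 * C / N by positivity)]
    calc |g j - g i| * (2 * C / N) ≤ 1 * (2 * C / N) := by gcongr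
      _ ≤ 10 * C / N := by rw [one_mul]; gcongr; norm_num
  · rw [map_sub, abs_le]
    constructor <;> linarith
  · rw [map_sub, abs_le]
    constructor <;> linarith

lemma relPell_form_ne_zero (hψ : Function.Injective ψ) (c : A) (hc' : ψ c < 0)
    (X Y : A) (hY : X ≠ 0 ∨ Y ≠ 0) : X ^ 2 - c * Y ^ 2 ≠ 0 := by
  intro h
  have h1 : ψ X ^ 2 - ψ c * ψ Y ^ 2 = 0 := by
    rw [← map_pow, ← map_pow, ← map_mul, ← map_sub, h, map_zero]
  have hX2 := sq_nonneg (ψ X)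
  have hY2 := mul_nonneg (neg_nonneg.2 hc'.le) (sq_nonneg (ψ Y))
  have hX0 : ψ X ^ 2 = 0 := by linarith
  have hY0 : ψ c * ψ Y ^ 2 = 0 := by linarith
  rcases hY with h' | h'
  · exact h' (hψ (by rw [map_zero]; exact pow_eq_zero_iff (two_ne_zero) |>.1 hX0))
  · refine h' (hψ (by
      rw [map_zero]
      exact pow_eq_zero_iff (two_ne_zero) |>.1 ((mul_eq_zero.1 hY0).resolve_left hc'.ne)))

/-- Infinitely many elements `X + Y√c` have relative norm in a fixed bounded region. -/
lemma relPell_infinite (hφ : Function.Injective φ) (hψ : Function.Injective ψ)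
    (happ : ∃ C : ℝ, 0 < C ∧ ∀ α β : ℝ, ∃ z : A, |φ z - α| ≤ C ∧ |ψ z - β| ≤ C)
    (c : A) (hc : 0 < φ c) (hc' : ψ c < 0) :
    ∃ K : ℝ, {p : A × A | p.2 ≠ 0 ∧ |φ (p.1 ^ 2 - c * p.2 ^ 2)| ≤ K ∧
      |ψ (p.1 ^ 2 - c * p.2 ^ 2)| ≤ K}.Infinite := by
  set r := √(φ c) with hr
  have hr2 : r ^ 2 = φ c := Real.sq_sqrt hc.le
  have hr0 : 0 < r := Real.sqrt_pos.2 hc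
  obtain ⟨C, hC, hs⟩ := relPell_small φ ψ happ r
  refine ⟨max (C * (2 * r * C + C)) (C ^ 2 + -ψ c * C ^ 2), fun hfin => ?_⟩
  have hev : ∀ p ∈ {p : A × A | p.2 ≠ 0 ∧ |φ (p.1 ^ 2 - c * p.2 ^ 2)| ≤
        max (C * (2 * r * C + C)) (C ^ 2 + -ψ c * C ^ 2) ∧
      |ψ (p.1 ^ 2 - c * p.2 ^ 2)| ≤ max (C * (2 * r * C + C)) (C ^ 2 + -ψ c * C ^ 2)},
      ∀ᶠ N : ℕ in atTop, C / N < |φ p.1 - r * φ p.2| := by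
    intro p hp
    refine (tendsto_const_div_atTop_nhds_zero_nat C).eventually_lt_const ?_
    rw [abs_pos]
    intro h
    refine relPell_form_ne_zero ψ hψ c hc' p.1 p.2 (Or.inr hp.1) (hφ ?_)
    rw [map_zero, map_sub, map_mul, map_pow, map_pow, ← hr2]
    linear_combination (φ p.1 + r * φ p.2) * h
  obtain ⟨N, hN, hN0⟩ := (((eventually_all_finite hfin).2 hev).and (eventually_gt_atTop 0)).exists
  obtain ⟨X, Y, hY, h1, h2, h3, h4⟩ := hs N hN0
  have hN' : (0 : ℝ) < N := by exact_mod_cast hN0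
  have hN1 : (1 : ℝ) ≤ N := by exact_mod_cast hN0
  refine absurd (hN (X, Y) ⟨hY, le_max_of_le_left ?_, le_max_of_le_right ?_⟩) (not_lt.2 h2)
  · have e : φ (X ^ 2 - c * Y ^ 2) = (φ X - r * φ Y) * ((φ X - r * φ Y) + 2 * r * φ Y) := by
      rw [map_sub, map_mul, map_pow, map_pow, ← hr2]; ring
    have h5 : |(φ X - r * φ Y) + 2 * r * φ Y| ≤ C / N + 2 * r * (C * N) := by
      refine (abs_add_le _ _).trans (add_le_add h2 ?_)
      rw [abs_mul, abs_of_pos (by positivity : 0 < 2 * r)]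
      gcongr
    calc |φ (X ^ 2 - c * Y ^ 2)| ≤ C / N * (C / N + 2 * r * (C * N)) := by
          rw [e, abs_mul]; gcongr
      _ = C * (2 * r * C + C / (N * N)) := by field_simp; ring
      _ ≤ C * (2 * r * C + C) := by
          gcongr
          exact div_le_self hC.le (by nlinarith)
  · have e : ψ (X ^ 2 - c * Y ^ 2) = ψ X ^ 2 + -ψ c * ψ Y ^ 2 := by
      rw [map_sub, map_mul, map_pow, map_pow]; ring
    have h5 : ψ X ^ 2 ≤ C ^ 2 := sq_le_sq' (abs_le.1 h3).1 (abs_le.1 h3).2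
    have h6 : ψ Y ^ 2 ≤ C ^ 2 := sq_le_sq' (abs_le.1 h4).1 (abs_le.1 h4).2
    have h7 : 0 ≤ -ψ c := by linarith
    rw [e, abs_of_nonneg (by positivity)]
    gcongr

/-- Among infinitely many elements of bounded relative norm there are two, not equal up to sign,
with the same norm `n` and congruent modulo `n`; their quotient solves the Pell equation. -/
lemma relPell_exists (hφ : Function.Injective φ) (hψ : Function.Injective ψ)
    (happ : ∃ C : ℝ, 0 < C ∧ ∀ α β : ℝ, ∃ z : A, |φ z - α| ≤ C ∧ |ψ z - β| ≤ C)
    (hfin : ∀ K : ℝ, {z : A | |φ z| ≤ K ∧ |ψ z| ≤ K}.Finite)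
    (hquot : ∀ n : A, n ≠ 0 → Finite (A ⧸ Ideal.span {n}))
    (c : A) (hc : 0 < φ c) (hc' : ψ c < 0) :
    ∃ X Y : A, X ^ 2 - c * Y ^ 2 = 1 ∧ Y ≠ 0 := by
  have : IsDomain A := hφ.isDomain φ
  obtain ⟨K, hK⟩ := relPell_infinite φ ψ hφ hψ happ c hc hc'
  set S := {p : A × A | p.2 ≠ 0 ∧ |φ (p.1 ^ 2 - c * p.2 ^ 2)| ≤ K ∧
      |ψ (p.1 ^ 2 - c * p.2 ^ 2)| ≤ K} with hS
  have := hK.to_subtype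
  have := (hfin K).to_subtype
  obtain ⟨⟨n, hn'⟩, hn⟩ := Finite.exists_infinite_fiber (fun p : S =>
    (⟨p.1.1 ^ 2 - c * p.1.2 ^ 2, p.2.2⟩ : {z : A | |φ z| ≤ K ∧ |ψ z| ≤ K}))
  set T := (fun p : S =>
    (⟨p.1.1 ^ 2 - c * p.1.2 ^ 2, p.2.2⟩ : {z : A | |φ z| ≤ K ∧ |ψ z| ≤ K})) ⁻¹' {⟨n, hn'⟩} with hT
  have hTn : ∀ p : T, p.1.1.1 ^ 2 - c * p.1.1.2 ^ 2 = n := fun p =>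
    congrArg Subtype.val p.2
  have hT0 : ∀ p : T, p.1.1.2 ≠ 0 := fun p => p.1.2.1
  have hn0 : n ≠ 0 := by
    obtain ⟨p⟩ : Nonempty T := inferInstance
    rw [← hTn p]
    exact relPell_form_ne_zero ψ hψ c hc' _ _ (Or.inr (hT0 p))
  have := hquot n hn0
  obtain ⟨q, hq⟩ := Finite.exists_infinite_fiber (fun p : T =>
    ((Ideal.Quotient.mk (Ideal.span {n}) p.1.1.1, Ideal.Quotient.mk (Ideal.span {n}) p.1.1.2) :
      (A ⧸ Ideal.span {n}) × (A ⧸ Ideal.span {n})))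
  have hqinf := Set.infinite_coe_iff.1 hq
  obtain ⟨p, hp⟩ := hqinf.nonempty
  have hneg : ({w : T | w.1.1 = -p.1.1} : Set T).Finite := by
    refine Set.Subsingleton.finite fun u hu v hv => ?_
    exact Subtype.ext (Subtype.ext (hu.trans hv.symm))
  obtain ⟨w, hw, hwp⟩ := hqinf.exists_notMem_finite (hneg.union (Set.finite_singleton p))
  have hcong := hp.trans hw.symm
  simp only [Prod.mk.injEq, Ideal.Quotient.eq, Ideal.mem_span_singleton] at hcong
  have hp1 := hTn p
  have hw1 := hTn w
  have hw0 := hT0 w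
  have hne : w.1.1 ≠ p.1.1 := fun h => hwp (Or.inr (Subtype.ext (Subtype.ext h)))
  have hne' : w.1.1 ≠ -p.1.1 := fun h => hwp (Or.inl h)
  generalize hpe : p.1.1 = P at *
  generalize hwe : w.1.1 = W at *
  obtain ⟨X₁, Y₁⟩ := P
  obtain ⟨X₂, Y₂⟩ := W
  simp only at hcong hp1 hw1 hw0
  obtain ⟨⟨u, hu⟩, ⟨v, hv⟩⟩ := hcong
  -- The quotient `(X₁ + Y₁√c) / (X₂ + Y₂√c)` is `U + V√c` with `U`, `V` as follows.
  set U := 1 + X₂ * u - c * Y₂ * v with hU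
  set V := v * X₂ - u * Y₂ with hV
  have eU : n * U = X₁ * X₂ - c * Y₁ * Y₂ := by
    rw [hU]; linear_combination -X₂ * hu + c * Y₂ * hv - hw1
  have eV : n * V = Y₁ * X₂ - X₁ * Y₂ := by
    rw [hV]; linear_combination Y₂ * hu - X₂ * hv
  have e1 : U ^ 2 - c * V ^ 2 = 1 := by
    refine mul_left_cancel₀ (pow_ne_zero 2 hn0) ?_
    calc n ^ 2 * (U ^ 2 - c * V ^ 2) = (n * U) ^ 2 - c * (n * V) ^ 2 := by ring
      _ = (X₁ ^ 2 - c * Y₁ ^ 2) * (X₂ ^ 2 - c * Y₂ ^ 2) := by rw [eU, eV]; ring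
      _ = n ^ 2 * 1 := by rw [hp1, hw1]; ring
  refine ⟨U, V, e1, fun hV0 => ?_⟩
  rw [hV0] at e1 eV
  have f1 : n * X₁ = n * (U * X₂) := by
    linear_combination -X₁ * hw1 - X₂ * eU - c * Y₂ * eV
  have f2 : n * Y₁ = n * (U * Y₂) := by
    linear_combination -Y₁ * hw1 - Y₂ * eU - X₂ * eV
  have f1 := mul_left_cancel₀ hn0 f1
  have f2 := mul_left_cancel₀ hn0 f2
  have : (U - 1) * (U + 1) = 0 := by linear_combination e1
  rcases mul_eq_zero.1 this with h | h
  · refine hne ?_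
    rw [sub_eq_zero.1 h] at f1 f2
    simp [f1, f2]
  · refine hne' ?_
    rw [eq_neg_of_add_eq_zero_left h] at f1 f2
    simp [f1, f2]

/-- Solutions of the Pell equation congruent to `(1, 0)` modulo `M` and with `φ X` arbitrarily
large. -/
lemma relPell_large (hφ : Function.Injective φ) (hψ : Function.Injective ψ)
    (happ : ∃ C : ℝ, 0 < C ∧ ∀ α β : ℝ, ∃ z : A, |φ z - α| ≤ C ∧ |ψ z - β| ≤ C)
    (hfin : ∀ K : ℝ, {z : A | |φ z| ≤ K ∧ |ψ z| ≤ K}.Finite)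
    (hquot : ∀ n : A, n ≠ 0 → Finite (A ⧸ Ideal.span {n}))
    (c : A) (hc : 0 < φ c) (hc' : ψ c < 0) (M : ℕ) (hM : 0 < M) (B : ℝ) :
    ∃ ξ η : A, (1 + M * ξ) ^ 2 - c * (M * η) ^ 2 = 1 ∧ B < 1 + M * φ ξ ∧ 0 < φ η := by
  have hM' : (0 : ℝ) < M := by exact_mod_cast hM
  have hM2 : (0 : ℝ) < (M : ℝ) ^ 2 := by positivity
  obtain ⟨X, Y, h, hY⟩ := relPell_exists φ ψ hφ hψ happ hfin hquot (c * M ^ 2)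
    (by rw [map_mul, map_pow, map_natCast]; positivity)
    (by rw [map_mul, map_pow, map_natCast]; exact mul_neg_of_neg_of_pos hc' hM2)
  have hY0 : φ Y ≠ 0 := fun h0 => hY (hφ (by rw [h0, map_zero]))
  -- Squaring `X + MY√c` gives a solution congruent to `(1, 0)` modulo `M`; squaring repeatedly,
  -- `x ↦ 2x² - 1` multiplies `x - 1` by at least `4` each time.
  obtain ⟨x, hx, hrec⟩ : ∃ x : ℝ, 1 < x ∧ ∀ k : ℕ, ∃ ξ η : A,
      (1 + M * ξ) ^ 2 - c * (M * η) ^ 2 = 1 ∧ 1 + 4 ^ k * (x - 1) ≤ 1 + M * φ ξ ∧ φ η ≠ 0 := by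
    have hcY : 0 < φ c * (M : ℝ) ^ 2 * φ Y ^ 2 := by positivity
    have hX : φ X ^ 2 = 1 + φ c * (M : ℝ) ^ 2 * φ Y ^ 2 := by
      have := congrArg φ h
      simp only [map_sub, map_mul, map_pow, map_natCast, map_one] at this
      linarith
    have hX0 : φ X ≠ 0 := by
      intro h0; rw [h0] at hX; nlinarith
    refine ⟨2 * φ X ^ 2 - 1, by linarith, fun k => ?_⟩
    induction k with
    | zero =>
      refine ⟨2 * c * M * Y ^ 2, 2 * X * Y, ?_, ?_, ?_⟩
      · linear_combination 4 * (M : A) ^ 2 * c * Y ^ 2 * (-1 : A) * h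
      · simp only [map_mul, map_pow, map_natCast, map_ofNat]
        apply le_of_eq
        linear_combination 2 * hX
      · simp only [map_mul, map_ofNat]
        positivity
    | succ k ih =>
      obtain ⟨ξ, η, h1, h2, h3⟩ := ih
      have h4 : (0 : ℝ) < 4 ^ k * (2 * φ X ^ 2 - 1 - 1) := by
        apply mul_pos (by positivity); linarith
      refine ⟨4 * ξ + 2 * M * ξ ^ 2, 2 * (1 + M * ξ) * η, ?_, ?_, ?_⟩
      · linear_combination 4 * (1 + M * ξ) ^ 2 * h1
      · simp only [map_mul, map_pow, map_natCast, map_ofNat, map_add]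
        rw [pow_succ]
        nlinarith [sq_nonneg ((M : ℝ) * φ ξ)]
      · simp only [map_mul, map_natCast, map_ofNat, map_add, map_one]
        refine mul_ne_zero (mul_ne_zero two_ne_zero ?_) h3
        linarith
  have hlim : Tendsto (fun k : ℕ => 1 + 4 ^ k * (x - 1)) atTop atTop :=
    tendsto_atTop_add_const_left _ _
      ((tendsto_pow_atTop_atTop_of_one_lt (by norm_num : (1 : ℝ) < 4)).atTop_mul_const
        (by linarith))
  obtain ⟨k, hk⟩ := (hlim.eventually_gt_atTop B).exists
  obtain ⟨ξ, η, h1, h2, h3⟩ := hrec k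
  rcases lt_or_gt_of_ne h3 with h4 | h4
  · exact ⟨ξ, -η, by linear_combination h1, hk.trans_le h2, by rw [map_neg]; linarith⟩
  · exact ⟨ξ, η, h1, hk.trans_le h2, h4⟩
end RelativePell

/-! ### The ring `ℤ[√δ]` as a lattice in the plane -/

section Zsqrt
variable {δ : ℕ}

/-- The embedding `m + n√δ ↦ m + n√δ` of the formal ring `ℤ√δ` into `ℝ`. -/
noncomputable def emb (δ : ℕ) : ℤ√(δ : ℤ) →+* ℝ := Zsqrtd.toReal (Int.natCast_nonneg δ)

/-- The conjugate embedding `m + n√δ ↦ m - n√δ`. -/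
noncomputable def embConj (δ : ℕ) : ℤ√(δ : ℤ) →+* ℝ := (emb δ).comp (starRingEnd _)

lemma emb_apply (z : ℤ√(δ : ℤ)) : emb δ z = z.re + z.im * √δ := by
  simp [emb]

lemma embConj_apply (z : ℤ√(δ : ℤ)) : embConj δ z = z.re - z.im * √δ := by
  simp [embConj, emb, starRingEnd_apply, sub_eq_add_neg]

lemma emb_injective (hsq : ¬IsSquare δ) : Function.Injective (emb δ) := by
  refine Zsqrtd.toReal_injective _ fun n h => hsq ⟨n.natAbs, ?_⟩
  zify
  rw [h, abs_mul_abs_self]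

lemma embConj_injective (hsq : ¬IsSquare δ) : Function.Injective (embConj δ) :=
  (emb_injective hsq).comp star_injective

lemma emb_approx (hδ : 0 < δ) : ∃ C : ℝ, 0 < C ∧ ∀ α β : ℝ, ∃ z : ℤ√(δ : ℤ),
    |emb δ z - α| ≤ C ∧ |embConj δ z - β| ≤ C := by
  have hs : 0 < √(δ : ℝ) := Real.sqrt_pos.2 (by exact_mod_cast hδ)
  refine ⟨1 + √δ, by positivity, fun α β =>
    ⟨⟨round ((α + β) / 2), round ((α - β) / (2 * √δ))⟩, ?_⟩⟩
  have h1 := abs_sub_round ((α + β) / 2)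
  have h2 := abs_sub_round ((α - β) / (2 * √δ))
  rw [emb_apply, embConj_apply]
  simp only
  set m : ℝ := (round ((α + β) / 2) : ℝ)
  set n : ℝ := (round ((α - β) / (2 * √δ)) : ℝ)
  have e : (α - β) / 2 = (α - β) / (2 * √δ) * √δ := by field_simp
  have h3 : |((α - β) / (2 * √δ) - n) * √δ| ≤ 1 / 2 * √δ := by
    rw [abs_mul, abs_of_pos hs]; gcongr
  rw [sub_mul, ← e] at h3
  rw [abs_le] at *
  rw [abs_le]
  refine ⟨⟨?_, ?_⟩, ?_, ?_⟩ <;> linarith [h1.1, h1.2, h3.1, h3.2]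

lemma emb_finite (hδ : 0 < δ) (K : ℝ) :
    {z : ℤ√(δ : ℤ) | |emb δ z| ≤ K ∧ |embConj δ z| ≤ K}.Finite := by
  have hs : 1 ≤ √(δ : ℝ) := Real.one_le_sqrt.2 (by exact_mod_cast hδ)
  refine Set.Finite.of_finite_image (f := fun z : ℤ√(δ : ℤ) => (z.re, z.im))
    (((Set.finite_Icc (-⌈K⌉) ⌈K⌉).prod (Set.finite_Icc (-⌈K⌉) ⌈K⌉)).subset ?_) ?_
  · rintro _ ⟨z, ⟨h1, h2⟩, rfl⟩
    rw [emb_apply] at h1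
    rw [embConj_apply] at h2
    have h3 := abs_le.1 h1
    have h4 := abs_le.1 h2
    have hre : |(z.re : ℝ)| ≤ K := by rw [abs_le]; constructor <;> linarith
    have him : |(z.im : ℝ)| ≤ K := by
      have : |(z.im : ℝ) * √δ| ≤ K := by rw [abs_le]; constructor <;> linarith
      rw [abs_mul, abs_of_pos (by linarith : 0 < √(δ : ℝ))] at this
      nlinarith [abs_nonneg (z.im : ℝ)]
    have key : ∀ m : ℤ, |(m : ℝ)| ≤ K → m ∈ Set.Icc (-⌈K⌉) ⌈K⌉ := fun m hm => by
      rw [Set.mem_Icc, ← abs_le]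
      have := hm.trans (Int.le_ceil K)
      exact_mod_cast this
    exact ⟨key _ hre, key _ him⟩
  · intro z _ w _ h
    simp only [Prod.mk.injEq] at h
    exact Zsqrtd.ext h.1 h.2

lemma zsqrtd_quot_finite (hsq : ¬IsSquare δ) (n : ℤ√(δ : ℤ)) (hn : n ≠ 0) :
    Finite ((ℤ√(δ : ℤ)) ⧸ Ideal.span {n}) := by
  -- The norm of `n` is a nonzero integer multiple of `n`, so residues of the two coordinates
  -- modulo the norm determine the class modulo `n`.
  have hnorm : (n.norm : ℤ√(δ : ℤ)) = n * star n := Zsqrtd.norm_eq_mul_conj n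
  have h0 : n.norm ≠ 0 := by
    intro h
    rw [h, Int.cast_zero] at hnorm
    have := (emb_injective hsq).isDomain (emb δ)
    rcases mul_eq_zero.1 hnorm.symm with h' | h'
    · exact hn h'
    · exact hn (by simpa using h')
  set N := n.norm.natAbs with hN
  have : NeZero N := ⟨by simpa [hN] using h0⟩
  have hex : ∀ x : (ℤ√(δ : ℤ)) ⧸ Ideal.span {n}, ∃ z : ℤ√(δ : ℤ),
    Ideal.Quotient.mk _ z = x := Ideal.Quotient.mk_surjective
  choose s hs using hex
  refine Finite.of_injective
    (fun x => (((s x).re : ZMod N), ((s x).im : ZMod N))) fun x y h => ?_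
  simp only [Prod.mk.injEq, ZMod.intCast_eq_intCast_iff_dvd_sub] at h
  rw [← hs x, ← hs y, eq_comm, Ideal.Quotient.eq, Ideal.mem_span_singleton]
  have h1 : (n.norm : ℤ√(δ : ℤ)) ∣ s y - s x := by
    rw [Zsqrtd.intCast_dvd]
    exact ⟨by simpa [hN] using h.1, by simpa [hN] using h.2⟩
  exact (hnorm ▸ Dvd.intro _ rfl : n ∣ (n.norm : ℤ√(δ : ℤ))).trans h1

/-- The powers of some `e` in `(0, 1)` are all units `m - n√δ` of norm one. -/
lemma exists_unit_seq (hδ : 0 < δ) (hsq : ¬IsSquare δ) :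
    ∃ e : ℝ, 0 < e ∧ e < 1 ∧ ∀ k : ℕ, ∃ m n : ℤ,
      (m : ℝ) ^ 2 - (n * √δ) ^ 2 = 1 ∧ m - n * √δ = e ^ k := by
  obtain ⟨a, hx, hy⟩ := Pell.Solution₁.exists_pos_of_not_isSquare (d := (δ : ℤ)) (by exact_mod_cast hδ)
    (by rintro ⟨m, hm⟩; exact hsq ⟨m.natAbs, by zify; rw [hm, abs_mul_abs_self]⟩)
  have hs : √(δ : ℝ) ^ 2 = δ := Real.sq_sqrt (by positivity)
  have hs0 : 0 < √(δ : ℝ) := Real.sqrt_pos.2 (by exact_mod_cast hδ)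
  have hp : (a.x : ℝ) ^ 2 - δ * (a.y : ℝ) ^ 2 = 1 := by exact_mod_cast a.prop
  have hx' : (1 : ℝ) < a.x := by exact_mod_cast hx
  have hy' : (0 : ℝ) < a.y * √δ := by
    have : (0 : ℝ) < a.y := by exact_mod_cast hy
    positivity
  have hp2 : (a.x - a.y * √δ) * (a.x + a.y * √δ) = 1 := by
    rw [← hp]; linear_combination -(a.y : ℝ) ^ 2 * hs
  refine ⟨a.x - a.y * √δ, ?_, ?_, fun k => ?_⟩
  · exact pos_of_mul_pos_left (by rw [hp2]; exact one_pos) (by linarith)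
  · nlinarith
  · induction k with
    | zero => exact ⟨1, 0, by simp, by simp⟩
    | succ k ih =>
      obtain ⟨m, n, h1, h2⟩ := ih
      refine ⟨a.x * m + δ * a.y * n, a.x * n + a.y * m, ?_, ?_⟩
      · push_cast
        calc _ = ((a.x : ℝ) ^ 2 - δ * (a.y : ℝ) ^ 2) * ((m : ℝ) ^ 2 - (n * √δ) ^ 2) := by
              linear_combination (-δ * (a.y : ℝ) ^ 2 * n ^ 2
                 - (a.y : ℝ) ^ 2 * m ^ 2 - 2 * a.x * n * a.y * m) * hs
          _ = 1 := by rw [hp, h1]; ring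
      · push_cast
        rw [pow_succ, ← h2]
        linear_combination -(n : ℝ) * a.y * hs
end Zsqrt

/-! ### Leading forms and asymptotic directions -/

section Density
open MvPolynomial

lemma homogeneousComponent_totalDegree_ne_zero (f : MvPolynomial (Fin 2) ℝ) (hf : f ≠ 0) :
    homogeneousComponent f.totalDegree f ≠ 0 := by
  obtain ⟨s, hs, h⟩ := Finset.exists_mem_eq_sup f.support (support_nonempty.2 hf)
    (fun s => s.degree)
  intro h0
  have := coeff_homogeneousComponent f.totalDegree f s
  rw [h0, coeff_zero, if_pos] at this
  · exact (mem_support_iff.1 hs) this.symm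
  · rw [← h]; rfl

lemma IsHomogeneous_eval_smul {d : ℕ} {f : MvPolynomial (Fin 2) ℝ} (hf : f.IsHomogeneous d)
    (l : ℝ) (v : Fin 2 → ℝ) : eval (fun i => l * v i) f = l ^ d * eval v f := by
  rw [eval_eq, eval_eq, Finset.mul_sum]
  refine Finset.sum_congr rfl fun s hs => ?_
  have := hf (mem_support_iff.1 hs)
  simp only [mul_pow, Finset.prod_mul_distrib, Finset.prod_pow_eq_pow_sum]
  have h2 : ∑ i ∈ s.support, s i = d := by
    rw [← this, Finsupp.weight_apply]; simp [Finsupp.sum]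
  rw [h2]; ring

/-- A polynomial whose zeros escape to infinity in the asymptotic direction `v` has a leading
form vanishing at `v`. -/
lemma leadingForm_eval_eq_zero (f : MvPolynomial (Fin 2) ℝ) (v : Fin 2 → ℝ)
    (Q : ℕ → Fin 2 → ℝ) (l : ℕ → ℝ) (hl : Tendsto l atTop atTop)
    (hQ : Tendsto (fun n i => (l n)⁻¹ * Q n i) atTop (𝓝 v))
    (h0 : ∀ n, eval (Q n) f = 0) : eval v (homogeneousComponent f.totalDegree f) = 0 := by
  set d := f.totalDegree with hd
  have key : ∀ i ∈ Finset.range (d + 1), Tendsto (fun n => ((l n)⁻¹) ^ (d - i) *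
      eval (fun j => (l n)⁻¹ * Q n j) (homogeneousComponent i f)) atTop
      (𝓝 ((0 : ℝ) ^ (d - i) * eval v (homogeneousComponent i f))) := fun i _ =>
    ((tendsto_inv_atTop_zero.comp hl).pow _).mul
      (((homogeneousComponent i f).continuous_eval.tendsto v).comp hQ)
  have hsum := tendsto_finsetSum _ key
  have hlim : ∑ i ∈ Finset.range (d + 1), (0 : ℝ) ^ (d - i) * eval v (homogeneousComponent i f)
      = eval v (homogeneousComponent d f) := by
    rw [Finset.sum_range_succ, Finset.sum_eq_zero]
    · simp
    · intro i hi
      rw [zero_pow (Nat.sub_ne_zero_of_lt (Finset.mem_range.1 hi)), zero_mul]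
  rw [hlim] at hsum
  refine tendsto_nhds_unique hsum (tendsto_const_nhds.congr fun n => ?_)
  calc (0 : ℝ) = ((l n)⁻¹) ^ d * eval (Q n) f := by rw [h0, mul_zero]
    _ = ((l n)⁻¹) ^ d * ∑ i ∈ Finset.range (d + 1), eval (Q n) (homogeneousComponent i f) := by
        rw [← map_sum, sum_homogeneousComponent]
    _ = _ := by
        rw [Finset.mul_sum]
        refine Finset.sum_congr rfl fun i hi => ?_
        rw [IsHomogeneous_eval_smul (homogeneousComponent_isHomogeneous i f), ← mul_assoc,
          ← pow_add, Nat.sub_add_cancel (Nat.lt_succ_iff.1 (Finset.mem_range.1 hi))]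

/-- A binary form with infinitely many zeros on a circle is zero, since each of its finitely many
zero slopes accounts for two points of the circle. -/
lemma homogeneous_eq_zero {d : ℕ} {f : MvPolynomial (Fin 2) ℝ} (hf : f.IsHomogeneous d)
    (ρ : ℝ) (V : Set (Fin 2 → ℝ)) (hV : V.Infinite)
    (hc : ∀ v ∈ V, v 0 ^ 2 + v 1 ^ 2 = ρ ^ 2) (h0 : ∀ v ∈ V, eval v f = 0) : f = 0 := by
  -- The dehomogenization `f(1, Y)`.
  set g : Polynomial ℝ := aeval ![1, Polynomial.X] f with hg
  have hgev : ∀ y : ℝ, g.eval y = eval ![1, y] f := fun y => by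
    rw [hg, aeval_def, ← Polynomial.coe_evalRingHom, Polynomial.algebraMap_eq, hom_eval₂]
    rw [← coe_eval₂Hom]
    congr 1
    ext i
    · simp
    · fin_cases i <;> simp
  have hfg : ∀ v : Fin 2 → ℝ, v 0 ≠ 0 → eval v f = v 0 ^ d * g.eval (v 1 / v 0) := by
    intro v hv
    rw [hgev, ← IsHomogeneous_eval_smul hf]
    congr 2
    ext i
    fin_cases i <;> simp [mul_div_cancel₀, hv]
  have hg0 : g = 0 := by
    by_contra hne
    have hfin : {m : ℝ | g.eval m = 0}.Finite := Polynomial.finite_setOfPred_isRoot hne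
    refine hV ((((Set.Finite.prod hfin (Set.toFinite ({1, -1} : Set ℝ))).image
      (fun q => ![q.2 * (|ρ| / √(1 + q.1 ^ 2)), q.1 * (q.2 * (|ρ| / √(1 + q.1 ^ 2)))])).union
      (Set.toFinite ({![0, ρ], ![0, -ρ]} : Set (Fin 2 → ℝ)))).subset ?_)
    intro v hv
    have hcv := hc v hv
    by_cases hv0 : v 0 = 0
    · right
      rw [hv0, zero_pow two_ne_zero, zero_add, sq_eq_sq_iff_eq_or_eq_neg] at hcv
      rcases hcv with h | h
      · left; ext i; fin_cases i <;> simp [hv0, h]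
      · right; ext i; fin_cases i <;> simp [hv0, h]
    · left
      have hz := h0 v hv
      rw [hfg v hv0] at hz
      have hm := (mul_eq_zero.1 hz).resolve_left (pow_ne_zero d hv0)
      have hpos : 0 < 1 + (v 1 / v 0) ^ 2 := by positivity
      have hv2 : v 0 ^ 2 = (|ρ| / √(1 + (v 1 / v 0) ^ 2)) ^ 2 := by
        rw [div_pow, Real.sq_sqrt hpos.le, sq_abs, ← hcv]
        field_simp
      rcases sq_eq_sq_iff_eq_or_eq_neg.1 hv2 with h | h
      · refine ⟨(v 1 / v 0, 1), ⟨hm, by simp⟩, ?_⟩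
        ext i
        fin_cases i
        · simp [← h]
        · simp only [one_mul, ← h]
          simp [hv0]
      · refine ⟨(v 1 / v 0, -1), ⟨hm, by simp⟩, ?_⟩
        rw [eq_neg_iff_add_eq_zero, add_comm, ← eq_neg_iff_add_eq_zero] at h
        ext i
        fin_cases i
        · simp [h]
        · simp only [h]
          simp [hv0]
  have : X 0 * f = 0 := by
    refine MvPolynomial.funext fun v => ?_
    rw [map_mul, eval_X, map_zero]
    by_cases hv : v 0 = 0
    · rw [hv, zero_mul]
    · rw [hfg v hv, hg0]; simp
  exact (mul_eq_zero.1 this).resolve_left (X_ne_zero 0)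
end Density

/-! ### Points on a hyperbola with given foci -/

section Geometry

/-- The points of the plane with coordinates in `ℤ[√δ]` whose distances to `(0, 0)` and to
`(a, b)` are, up to sign, in `ℤ[√δ]`. -/
def IntegralPts (δ : ℕ) (a b : ℝ) : Set (Fin 2 → ℝ) :=
  {Q | (∀ i, InZsqrtd δ (Q i)) ∧ (∃ u, InZsqrtd δ u ∧ Q 0 ^ 2 + Q 1 ^ 2 = u ^ 2) ∧
    ∃ v, InZsqrtd δ v ∧ (Q 0 - a) ^ 2 + (Q 1 - b) ^ 2 = v ^ 2}

/-- Algebra on the hyperbola `u - v = t` with foci `(0, 0)` and `(a, b)`. The point `(κ, 0)` lies on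
it, with `u = κ`, `v = b m`, `s = u + v`. Multiplying `s + w√c` by `X + Y√c`, where
`X = 1 + 2Dξ`, `Y = 2Dη`, `D = a² + b²` and `X² - c Y² = 1` (which is `hE`), replaces `s` by
`s + 2Dσ` and `w` by `w + 2Dω`; the last two identities compute the distances of the resulting point
from the foci. -/
lemma hyperbola_points (a b m h ξ η t c s w κ σ ω : ℝ)
    (hm : m ^ 2 - h ^ 2 = 1) (hκ : κ = a + b * h) (ht : t = a - b * (m - h))
    (hs : s = a + b * (m + h)) (hw : w = m + h) (hc : c = a ^ 2 + b ^ 2 - t ^ 2)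
    (hE : ξ + (a ^ 2 + b ^ 2) * ξ ^ 2 = (a ^ 2 + b ^ 2) * c * η ^ 2)
    (hσ : σ = s * ξ + c * w * η) (hω : ω = w * ξ + s * η) :
    s ^ 2 - c * w ^ 2 = a ^ 2 + b ^ 2 ∧
    (κ + a * t * σ + b * c * ω) ^ 2 + (b * t * σ - a * c * ω) ^ 2 =
      (κ + (a ^ 2 + b ^ 2) * σ) ^ 2 ∧
    (κ + a * t * σ + b * c * ω - a) ^ 2 + (b * t * σ - a * c * ω - b) ^ 2 =
      (b * m + (a ^ 2 + b ^ 2) * σ) ^ 2 := by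
  have hst : 2 * κ = s + t := by rw [hκ, hs, ht]; ring
  have hv : κ - b * m = t := by rw [hκ, ht]; ring
  have hp : 2 * a * κ = s * t + (a ^ 2 + b ^ 2) := by
    rw [hκ, hs, ht]; linear_combination b ^ 2 * hm
  have hq : c * w = 2 * b * κ := by
    rw [hc, hκ, ht, hw]; linear_combination (2 * a * b - b ^ 2 * (m - h)) * hm
  have hD : s ^ 2 - c * w ^ 2 = a ^ 2 + b ^ 2 := by
    rw [mul_comm c, pow_two w, mul_assoc, mul_comm w c, hq, hκ, hw, hs]
    linear_combination b ^ 2 * hm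
  have h3 : 2 * κ * (a * t - (a ^ 2 + b ^ 2)) + c * s = 0 := by
    rw [hc]; linear_combination t * hp - (a ^ 2 + b ^ 2) * hst
  have first : (κ + a * t * σ + b * c * ω) ^ 2 + (b * t * σ - a * c * ω) ^ 2 =
      (κ + (a ^ 2 + b ^ 2) * σ) ^ 2 := by
    have e1 : (a ^ 2 + b ^ 2) * (σ ^ 2 - c * ω ^ 2) = - (a ^ 2 + b ^ 2) * ξ := by
      rw [hσ, hω]
      linear_combination (a ^ 2 + b ^ 2) * (ξ ^ 2 - c * η ^ 2) * hD + (a ^ 2 + b ^ 2) * hE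
    have e2 : c * w * ω - s * σ = -(a ^ 2 + b ^ 2) * ξ := by
      rw [hσ, hω]; linear_combination -ξ * hD
    linear_combination h3 * σ - hq * c * ω + c * e2 - c * e1
      + (a ^ 2 + b ^ 2) * σ ^ 2 * hc
  refine ⟨hD, first, ?_⟩
  linear_combination first - hp + (κ + b * m + 2 * (a ^ 2 + b ^ 2) * σ) * hv + t * hst - t * hv

/-- For a unit `m - n√δ` with the stated sign conditions on `c` and its conjugate, the integral
points go to infinity in the direction `(a t + b√c, b t - a√c)` of an asymptote of the hyperbola
`u - v = t`. The scalar `μ` only depends on the normalisation of `l`. -/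
lemma asymptotic_direction {δ : ℕ} (hδ : 0 < δ) (hsq : ¬IsSquare δ) (a b m n : ℤ) (hb : b ≠ 0)
    (hm : (m : ℝ) ^ 2 - (n * √δ) ^ 2 = 1) (t c : ℝ) (ht : t = a - b * (m - n * √δ))
    (hc : c = (a : ℝ) ^ 2 + (b : ℝ) ^ 2 - t ^ 2) (hc0 : 0 < c)
    (hc1 : (a : ℝ) ^ 2 + (b : ℝ) ^ 2 - (a - b * (m + n * √δ)) ^ 2 < 0) :
    ∃ (Q : ℕ → Fin 2 → ℝ) (l : ℕ → ℝ) (μ : ℝ), μ ≠ 0 ∧ Tendsto l atTop atTop ∧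
      (∀ k, Q k ∈ IntegralPts δ a b) ∧
      Tendsto (fun k i => (l k)⁻¹ * Q k i) atTop
        (𝓝 (fun i => μ * ![a * t + b * √c, b * t - a * √c] i)) := by
  have hbR : (b : ℝ) ≠ 0 := by exact_mod_cast hb
  set D : ℝ := (a : ℝ) ^ 2 + (b : ℝ) ^ 2 with hD
  have hD0 : 0 < D := by positivity
  set h : ℝ := n * √δ with hh
  -- Elements of `ℤ√δ` with the real values `h`, `t`, `c`.
  set hA : ℤ√(δ : ℤ) := ⟨0, n⟩ with hhA
  set tA : ℤ√(δ : ℤ) := a - b * (m - hA) with htA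
  set cA : ℤ√(δ : ℤ) := a ^ 2 + b ^ 2 - tA ^ 2 with hcA
  have eh : emb δ hA = h := by simp [emb_apply, hhA, hh]
  have eh' : embConj δ hA = -h := by simp [embConj_apply, hhA, hh]
  have et : emb δ tA = t := by simp [htA, eh, ht]
  have ec : emb δ cA = c := by simp [hcA, et, hc, hD]
  have ec' : embConj δ cA < 0 := by
    refine lt_of_eq_of_lt ?_ hc1
    simp [hcA, htA, eh', hD]
  set M : ℕ := 2 * (a ^ 2 + b ^ 2).natAbs with hM
  have hMR : (M : ℝ) = 2 * D := by
    have : (M : ℤ) = 2 * (a ^ 2 + b ^ 2) := by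
      rw [hM]; push_cast; rw [abs_of_nonneg (by positivity)]
    rw [hD]; exact_mod_cast this
  have hM0 : 0 < M := by
    have : (0 : ℝ) < M := by rw [hMR]; positivity
    exact_mod_cast this
  choose ξA ηA hpell hbig hpos using fun k : ℕ => relPell_large (emb δ) (embConj δ)
    (emb_injective hsq) (embConj_injective hsq) (emb_approx hδ) (emb_finite hδ)
    (zsqrtd_quot_finite hsq) cA (by rw [ec]; exact hc0) ec' M hM0 (k : ℝ)
  set ξ : ℕ → ℝ := fun k => emb δ (ξA k) with hξ
  set η : ℕ → ℝ := fun k => emb δ (ηA k) with hη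
  set X : ℕ → ℝ := fun k => 1 + M * ξ k with hX
  have hXt : Tendsto X atTop atTop :=
    tendsto_atTop_mono (fun k => (hbig k).le) tendsto_natCast_atTop_atTop
  have hX0 : ∀ k, 0 < X k := fun k => lt_of_le_of_lt (Nat.cast_nonneg k) (hbig k)
  have hpellR : ∀ k, X k ^ 2 - c * (M * η k) ^ 2 = 1 := fun k => by
    have := congrArg (emb δ) (hpell k)
    simpa [ec] using this
  set s : ℝ := a + b * (m + h) with hs
  set w : ℝ := m + h with hw
  set κ : ℝ := a + b * h with hκ
  have hE : ∀ k, ξ k + D * ξ k ^ 2 = D * c * η k ^ 2 := fun k => by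
    have h1 := hpellR k
    simp only [hX, hMR] at h1
    have : 4 * D * (ξ k + D * ξ k ^ 2) = 4 * D * (D * c * η k ^ 2) := by linear_combination h1
    exact mul_left_cancel₀ (by positivity) this
  have hyp := fun k => hyperbola_points a b m h (ξ k) (η k) t c s w κ (s * ξ k + c * w * η k)
    (w * ξ k + s * η k) hm hκ ht hs hw hc (hE k) rfl rfl
  have hsw : s ^ 2 - c * w ^ 2 = D := (hyp 0).1
  set r := √c with hr
  have hr2 : r ^ 2 = c := Real.sq_sqrt hc0.le
  have hr0 : 0 < r := Real.sqrt_pos.2 hc0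
  have hlam : s + w * r ≠ 0 := by
    intro h0
    have : D = 0 := by rw [← hsw, ← hr2]; linear_combination (s - w * r) * h0
    exact hD0.ne' this
  refine ⟨fun k => ![κ + a * t * (s * ξ k + c * w * η k) + b * c * (w * ξ k + s * η k),
    b * t * (s * ξ k + c * w * η k) - a * c * (w * ξ k + s * η k)], X,
    (s + w * r) / (2 * D), div_ne_zero hlam (by positivity), hXt, fun k => ?_, ?_⟩
  · have hin : ∀ z : ℤ√(δ : ℤ), InZsqrtd δ (emb δ z) := fun z => ⟨z.re, z.im, emb_apply z⟩
    refine ⟨fun i => ?_, ⟨_, ?_, (hyp k).2.1⟩, ⟨_, ?_, (hyp k).2.2⟩⟩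
    · fin_cases i
      · convert hin ((a + b * hA) + a * tA * ((a + b * (m + hA)) * ξA k + cA * (m + hA) * ηA k)
          + b * cA * ((m + hA) * ξA k + (a + b * (m + hA)) * ηA k)) using 1
        simp [eh, et, ec, hs, hw, hκ, hξ, hη]
      · convert hin (b * tA * ((a + b * (m + hA)) * ξA k + cA * (m + hA) * ηA k)
          - a * cA * ((m + hA) * ξA k + (a + b * (m + hA)) * ηA k)) using 1
        simp [eh, et, ec, hs, hw, hξ, hη]
    · convert hin ((a + b * hA) + (a ^ 2 + b ^ 2) *
        ((a + b * (m + hA)) * ξA k + cA * (m + hA) * ηA k)) using 1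
      simp [eh, ec, hs, hw, hκ, hξ, hη]
    · convert hin (b * m + (a ^ 2 + b ^ 2) *
        ((a + b * (m + hA)) * ξA k + cA * (m + hA) * ηA k)) using 1
      simp [eh, ec, hs, hw, hξ, hη]
  · have l0 : Tendsto (fun k => (X k)⁻¹) atTop (𝓝 0) := tendsto_inv_atTop_zero.comp hXt
    have l1 : Tendsto (fun k => (X k)⁻¹ * ξ k) atTop (𝓝 (1 / (2 * D))) := by
      have : Tendsto (fun k => (1 - (X k)⁻¹) / (2 * D)) atTop (𝓝 ((1 - 0) / (2 * D))) :=
        (l0.const_sub 1).div_const _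
      rw [sub_zero] at this
      refine this.congr fun k => ?_
      have := (hX0 k).ne'
      field_simp
      simp only [hX, hMR]
      ring
    have l2 : Tendsto (fun k => (X k)⁻¹ * η k) atTop (𝓝 (1 / (2 * D * r))) := by
      have : Tendsto (fun k => √(1 - (X k)⁻¹ ^ 2) / (2 * D * r)) atTop
          (𝓝 (√(1 - 0 ^ 2) / (2 * D * r))) :=
        (((l0.pow 2).const_sub 1).sqrt).div_const _
      rw [zero_pow two_ne_zero, sub_zero, Real.sqrt_one] at this
      refine this.congr fun k => ?_
      have hx := (hX0 k).ne'
      have hηk : 0 < η k := hpos k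
      have e : 1 - (X k)⁻¹ ^ 2 = ((X k)⁻¹ * η k * (2 * D * r)) ^ 2 := by
        have h1 := hpellR k
        rw [hMR, ← hr2] at h1
        field_simp
        linear_combination h1
      have := hX0 k
      rw [e, Real.sqrt_sq (by positivity)]
      field_simp
    rw [tendsto_pi_nhds]
    intro i
    fin_cases i
    · have := ((l0.const_mul κ).add (((l1.const_mul s).add (l2.const_mul (c * w))).const_mul
        (a * t))).add (((l1.const_mul w).add (l2.const_mul s)).const_mul (b * c))
      convert this using 1
      · ext k; simp; ring
      · congr 1
        simp only [Fin.zero_eta, Matrix.cons_val_zero]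
        rw [← hr2]
        field_simp
        ring
    · have := (((l1.const_mul s).add (l2.const_mul (c * w))).const_mul
        (b * t)).sub (((l1.const_mul w).add (l2.const_mul s)).const_mul (a * c))
      convert this using 1
      · ext k; simp; ring
      · congr 1
        simp only [Fin.mk_one, Matrix.cons_val_one, Matrix.cons_val_fin_one]
        rw [← hr2]
        field_simp
        ring

/-- Zariski density of a translate of `IntegralPts`; the translate of a set has the same asymptotic
directions, so it is carried through at no cost. -/
lemma integralPts_dense {δ : ℕ} (hδ : 0 < δ) (hsq : ¬IsSquare δ) (a b : ℤ) (hb : b ≠ 0)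
    (o : Fin 2 → ℝ) (f : MvPolynomial (Fin 2) ℝ)
    (hf : ∀ Q ∈ IntegralPts δ a b, MvPolynomial.eval (fun i => o i + Q i) f = 0) : f = 0 := by
  obtain ⟨e, he0, he1, hseq⟩ := exists_unit_seq hδ hsq
  choose m n hmn hen using hseq
  have hbR : (b : ℝ) ≠ 0 := by exact_mod_cast hb
  have hb2 : 0 < (b : ℝ) ^ 2 := by positivity
  have le : Tendsto (fun k : ℕ => e ^ k) atTop (𝓝 0) :=
    tendsto_pow_atTop_nhds_zero_of_lt_one he0.le he1
  -- Along the sequence, `c` tends to `b²`, and its conjugate times `e ^ (2 * k)` to `-b²`.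
  have ev1 : ∀ᶠ k in atTop, 0 < (a : ℝ) ^ 2 + (b : ℝ) ^ 2 - (a - b * e ^ k) ^ 2 := by
    have : Tendsto (fun k : ℕ => (a : ℝ) ^ 2 + (b : ℝ) ^ 2 - (a - b * e ^ k) ^ 2) atTop
        (𝓝 ((a : ℝ) ^ 2 + (b : ℝ) ^ 2 - (a - b * 0) ^ 2)) :=
      (((le.const_mul (b : ℝ)).const_sub (a : ℝ)).pow 2).const_sub _
    refine this.eventually_const_lt ?_
    linarith
  have ev2 : ∀ᶠ k in atTop,
      (a : ℝ) ^ 2 + (b : ℝ) ^ 2 - (a - b * (m k + n k * √δ)) ^ 2 < 0 := by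
    have : Tendsto (fun k : ℕ => ((a : ℝ) ^ 2 + (b : ℝ) ^ 2) * (e ^ k) ^ 2 - (a * e ^ k - b) ^ 2)
        atTop (𝓝 (((a : ℝ) ^ 2 + (b : ℝ) ^ 2) * 0 ^ 2 - (a * 0 - b) ^ 2)) :=
      ((le.pow 2).const_mul _).sub (((le.const_mul (a : ℝ)).sub_const _).pow 2)
    filter_upwards [this.eventually_lt_const (u := 0) (by linarith)] with k hk
    have hek : 0 < e ^ k := pow_pos he0 k
    have h1 : e ^ k * (m k + n k * √δ) = 1 := by
      rw [← hen k]; linear_combination hmn k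
    have h2 : (e ^ k) ^ 2 * ((a : ℝ) ^ 2 + (b : ℝ) ^ 2 - (a - b * (m k + n k * √δ)) ^ 2) < 0 := by
      refine lt_of_eq_of_lt ?_ hk
      linear_combination (2 * (a : ℝ) * b * e ^ k - (b : ℝ) ^ 2 *
        (e ^ k * (m k + n k * √δ) + 1)) * h1
    exact (pos_iff_neg_of_mul_neg h2).1 (by positivity)
  obtain ⟨k₀, hk₀⟩ := eventually_atTop.1 (ev1.and ev2)
  by_contra hne
  set t : ℕ → ℝ := fun k => a - b * e ^ (k₀ + k) with ht
  set c : ℕ → ℝ := fun k => (a : ℝ) ^ 2 + (b : ℝ) ^ 2 - t k ^ 2 with hc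
  have hc0 : ∀ k, 0 < c k := fun k => (hk₀ _ (Nat.le_add_right k₀ k)).1
  set v : ℕ → Fin 2 → ℝ := fun k => ![a * t k + b * √(c k), b * t k - a * √(c k)] with hv
  have hvinj : Function.Injective v := by
    intro i j hij
    have h0 := congrFun hij 0
    have h1 := congrFun hij 1
    simp only [hv, Matrix.cons_val_zero, Matrix.cons_val_one] at h0 h1
    have h2 : ((a : ℝ) ^ 2 + (b : ℝ) ^ 2) * b * e ^ (k₀ + i) =
        ((a : ℝ) ^ 2 + (b : ℝ) ^ 2) * b * e ^ (k₀ + j) := by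
      simp only [ht] at h0 h1
      linear_combination -(a : ℝ) * h0 - b * h1
    have h3 := mul_left_cancel₀ (mul_ne_zero (by positivity) hbR) h2
    have := (pow_right_strictAnti₀ he0 he1).injective h3
    omega
  refine homogeneousComponent_totalDegree_ne_zero f hne
    (homogeneous_eq_zero (MvPolynomial.homogeneousComponent_isHomogeneous _ f)
      ((a : ℝ) ^ 2 + (b : ℝ) ^ 2) (Set.range v) (Set.infinite_range_of_injective hvinj) ?_ ?_)
  · rintro _ ⟨k, rfl⟩
    have := Real.sq_sqrt (hc0 k).le
    simp only [hv, Matrix.cons_val_zero, Matrix.cons_val_one]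
    simp only [hc] at this ⊢
    linear_combination ((a : ℝ) ^ 2 + (b : ℝ) ^ 2) * this
  · rintro _ ⟨k, rfl⟩
    obtain ⟨Q, l, μ, hμ, hl, hQ, hlim⟩ := asymptotic_direction hδ hsq a b (m (k₀ + k))
      (n (k₀ + k)) hb (hmn _) (t k) (c k) (by rw [hen]) rfl (hc0 k)
      (hk₀ _ (Nat.le_add_right k₀ k)).2
    have hlim' : Tendsto (fun j i => (l j)⁻¹ * (o i + Q j i)) atTop
        (𝓝 (fun i => μ * v k i)) := by
      rw [tendsto_pi_nhds] at hlim ⊢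
      intro i
      have := ((tendsto_inv_atTop_zero.comp hl).mul_const (o i)).add (hlim i)
      rw [zero_mul, zero_add] at this
      exact this.congr fun j => by simp [mul_add]
    have := leadingForm_eval_eq_zero f _ (fun j i => o i + Q j i) l hl hlim'
      (fun j => hf _ (hQ j))
    rw [IsHomogeneous_eval_smul (MvPolynomial.homogeneousComponent_isHomogeneous _ f)] at this
    exact (mul_eq_zero.1 this).resolve_left (pow_ne_zero _ hμ)

end Geometry

/-! ### Conclusion -/

lemma InZsqrtd.abs {δ : ℕ} {x : ℝ} (hx : InZsqrtd δ x) : InZsqrtd δ |x| := by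
  rcases abs_choice x with h | h
  · rwa [h]
  · obtain ⟨m, n, rfl⟩ := hx
    exact ⟨-m, -n, by rw [h]; push_cast; ring⟩

lemma InZsqrtd.int_add {δ : ℕ} {x : ℝ} (hx : InZsqrtd δ x) (k : ℤ) : InZsqrtd δ (k + x) := by
  obtain ⟨m, n, rfl⟩ := hx
  exact ⟨k + m, n, by push_cast; ring⟩

theorem integral_quadratic_distances_two_points_zariski_dense
    (δ : ℕ) (hδ : 0 < δ) (hsq : ¬IsSquare δ)
    (O P : EuclideanSpace ℝ (Fin 2))
    (hO : ∀ i, ∃ m : ℤ, (m : ℝ) = O i) (hP : ∀ i, ∃ m : ℤ, (m : ℝ) = P i)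
    (hOP : O ≠ P) :
    ZariskiDense {Q : EuclideanSpace ℝ (Fin 2) |
      (∀ i, InZsqrtd δ (Q i)) ∧ InZsqrtd δ (dist O Q) ∧ InZsqrtd δ (dist P Q)} := by
  intro f hf
  choose o ho using hO
  choose p hp using hP
  have key : ∀ Q : Fin 2 → ℝ, (∀ i, InZsqrtd δ (Q i)) →
      (∃ u, InZsqrtd δ u ∧ Q 0 ^ 2 + Q 1 ^ 2 = u ^ 2) →
      (∃ v, InZsqrtd δ v ∧ (Q 0 - (p 0 - o 0 : ℤ)) ^ 2 + (Q 1 - (p 1 - o 1 : ℤ)) ^ 2 = v ^ 2) →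
      MvPolynomial.eval (fun i => (o i : ℝ) + Q i) f = 0 := by
    rintro Q hQ ⟨u, hu, hu2⟩ ⟨v, hv, hv2⟩
    refine hf (WithLp.toLp 2 (fun i => (o i : ℝ) + Q i)) ⟨fun i => (hQ i).int_add _, ?_, ?_⟩
    · have : dist O (WithLp.toLp 2 (fun i => (o i : ℝ) + Q i)) = |u| := by
        rw [EuclideanSpace.dist_eq, ← Real.sqrt_sq_eq_abs, ← hu2]
        simp [Fin.sum_univ_two, ← ho]
      rw [this]; exact hu.abs
    · have : dist P (WithLp.toLp 2 (fun i => (o i : ℝ) + Q i)) = |v| := by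
        rw [EuclideanSpace.dist_eq, ← Real.sqrt_sq_eq_abs, ← hv2]
        simp only [Fin.sum_univ_two, Real.dist_eq, ← hp, sq_abs]
        push_cast
        congr 1
        ring
      rw [this]; exact hv.abs
  by_cases hb : p 1 - o 1 = 0
  · -- Exchanging the two coordinates reduces to a nonzero second coordinate of `P - O`.
    have ha : p 0 - o 0 ≠ 0 := by
      intro ha
      refine hOP (PiLp.ext fun i => ?_)
      rw [← ho, ← hp]
      fin_cases i
      · simp [sub_eq_zero.1 ha]
      · simp [sub_eq_zero.1 hb]
    have := integralPts_dense hδ hsq (p 1 - o 1) (p 0 - o 0) ha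
      (fun i => (o (Equiv.swap 0 1 i) : ℝ)) (MvPolynomial.rename (Equiv.swap 0 1) f) ?_
    · exact MvPolynomial.rename_injective _ (Equiv.injective _) (by rw [this, map_zero])
    · rintro Q ⟨h1, ⟨u, hu, hu2⟩, ⟨v, hv, hv2⟩⟩
      rw [MvPolynomial.eval_rename]
      have := key (fun i => Q (Equiv.swap 0 1 i)) (fun i => h1 _)
        ⟨u, hu, by simpa [add_comm] using hu2⟩ ⟨v, hv, by
          rw [← hv2]; simp only [Equiv.swap_apply_left, Equiv.swap_apply_right]; ring⟩
      simpa [Function.comp_def] using this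
  · exact integralPts_dense hδ hsq (p 0 - o 0) (p 1 - o 1) hb (fun i => (o i : ℝ)) f
      fun Q hQ => key Q hQ.1 hQ.2.1 hQ.2.2
end
end

section
/- Let a, b ∈ ℤ with (a,b) ≠ (0,0), and let ℤ[i] denote the ring of Gaussian integers. Let S = { (x,y) ∈ ℤ[i] × ℤ[i] : there exist z, u ∈ ℤ[i] with x² + y² = z² and (x−a)² + (y−b)² = u² }. Then S is Zariski-dense in the affine plane: the only polynomial in two variables with complex coefficients vanishing at every point of S is the zero polynomial. -/
/-!
Put `α = a + bi`, `β = a - bi` and use the coordinates `s = x + iy`, `t = x - iy`. The two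
conditions become `s t = □` and `(s - α)(t - β) = □`. For a fixed `d` they hold as soon as
`s = d p²`, `t = d q²` with `d p² + α m² = α` and `d q² + α l² = β`. These are two independent
equations of Pell type for the same quadratic form `d P² + α M²`. Taking `d = β - α n²`, the first
one is solved by `(0, 1)` and the second one by `(1, n)`.

If `2 n = β Y` and `X = α n Y - 1`, then `X² + α d Y² = 1`, so
`(P, M) ↦ (X P + α Y M, X M - d Y P)` preserves the form (`pellStep`, `pellStep_form`). When
`‖X‖ ≥ 2`, the first coordinates along an orbit strictly grow in norm (`norm_pellOrbit_lt`), so each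
equation has infinitely many solutions. The solution set therefore contains, in the coordinates
`(s, t)`, a product of two infinite sets, and such a product is Zariski-dense
(`eq_zero_of_vanish`).

For `x` and `y` to be Gaussian integers it is enough that `2 ∣ d`. The choice of `n` depends on the
parity of `a + b`: if it is odd, `n = 3β` and `Y = 6`; if it is even, `n = β / (1 + i)` and
`Y = 1 - i`.
-/

noncomputable section

/-- Membership in the ring of Gaussian integers, viewed inside `ℂ`. -/
def IsGaussInt (x : ℂ) : Prop := ∃ m n : ℤ, x = (m : ℂ) + (n : ℂ) * Complex.I

lemma IsGaussInt.add {x y : ℂ} (hx : IsGaussInt x) (hy : IsGaussInt y) : IsGaussInt (x + y) := by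
  obtain ⟨m, n, rfl⟩ := hx
  obtain ⟨k, l, rfl⟩ := hy
  exact ⟨m + k, n + l, by push_cast; ring⟩

lemma IsGaussInt.mul {x y : ℂ} (hx : IsGaussInt x) (hy : IsGaussInt y) : IsGaussInt (x * y) := by
  obtain ⟨m, n, rfl⟩ := hx
  obtain ⟨k, l, rfl⟩ := hy
  exact ⟨m * k - n * l, m * l + n * k, by
    push_cast; linear_combination (n * l : ℂ) * Complex.I_sq⟩

lemma isGaussInt_intCast (m : ℤ) : IsGaussInt (m : ℂ) := ⟨m, 0, by simp⟩

lemma isGaussInt_I : IsGaussInt Complex.I := ⟨0, 1, by simp⟩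

lemma IsGaussInt.neg {x : ℂ} (hx : IsGaussInt x) : IsGaussInt (-x) := by
  simpa using (isGaussInt_intCast (-1)).mul hx

lemma IsGaussInt.sub {x y : ℂ} (hx : IsGaussInt x) (hy : IsGaussInt y) : IsGaussInt (x - y) := by
  simpa [sub_eq_add_neg] using hx.add hy.neg

/-- The action of `X + Y √(-α d)` on pairs `(P, M)`; it is an automorphism of the form
`d P² + α M²` when `X² + α d Y² = 1`. -/
def pellStep (α d X Y : ℂ) (v : ℂ × ℂ) : ℂ × ℂ :=
  (X * v.1 + α * Y * v.2, X * v.2 - d * Y * v.1)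

/-- The orbit of `v` under `pellStep`. -/
def pellOrbit (α d X Y : ℂ) (v : ℂ × ℂ) : ℕ → ℂ × ℂ
  | 0 => v
  | j + 1 => pellStep α d X Y (pellOrbit α d X Y v j)

section Pell

variable {α d X Y : ℂ} {v : ℂ × ℂ}

lemma pellStep_form (h : X ^ 2 + α * d * Y ^ 2 = 1) (v : ℂ × ℂ) :
    d * (pellStep α d X Y v).1 ^ 2 + α * (pellStep α d X Y v).2 ^ 2 =
      d * v.1 ^ 2 + α * v.2 ^ 2 := by
  simp only [pellStep]
  linear_combination (d * v.1 ^ 2 + α * v.2 ^ 2) * h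

lemma pellOrbit_form (h : X ^ 2 + α * d * Y ^ 2 = 1) (v : ℂ × ℂ) (j : ℕ) :
    d * (pellOrbit α d X Y v j).1 ^ 2 + α * (pellOrbit α d X Y v j).2 ^ 2 =
      d * v.1 ^ 2 + α * v.2 ^ 2 := by
  induction j with
  | zero => rfl
  | succ j ih => rw [← ih]; exact pellStep_form h _

lemma isGaussInt_pellOrbit (hα : IsGaussInt α) (hd : IsGaussInt d) (hX : IsGaussInt X)
    (hY : IsGaussInt Y) (hv : IsGaussInt v.1 ∧ IsGaussInt v.2) (j : ℕ) :
    IsGaussInt (pellOrbit α d X Y v j).1 ∧ IsGaussInt (pellOrbit α d X Y v j).2 := by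
  induction j with
  | zero => exact hv
  | succ j ih =>
    exact ⟨(hX.mul ih.1).add ((hα.mul hY).mul ih.2), (hX.mul ih.2).sub ((hd.mul hY).mul ih.1)⟩

/-- By Cayley–Hamilton the first coordinates satisfy `P (j + 2) = 2 X P (j + 1) - P j`, so an
initial growth of the norm propagates along the orbit when `‖X‖ ≥ 2`. -/
lemma norm_pellOrbit_lt (h : X ^ 2 + α * d * Y ^ 2 = 1) (hX : 2 ≤ ‖X‖)
    (h0 : ‖v.1‖ < ‖(pellStep α d X Y v).1‖) (j : ℕ) :
    ‖(pellOrbit α d X Y v j).1‖ < ‖(pellOrbit α d X Y v (j + 1)).1‖ := by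
  induction j with
  | zero => exact h0
  | succ j ih =>
    have hrec : 2 * X * (pellOrbit α d X Y v (j + 1)).1 =
        (pellOrbit α d X Y v (j + 2)).1 + (pellOrbit α d X Y v j).1 := by
      simp only [pellOrbit, pellStep]
      linear_combination (pellOrbit α d X Y v j).1 * h
    have h1 := norm_add_le (pellOrbit α d X Y v (j + 2)).1 (pellOrbit α d X Y v j).1
    rw [← hrec, norm_mul, norm_mul, Complex.norm_two] at h1
    nlinarith [norm_nonneg (pellOrbit α d X Y v (j + 1)).1,
      norm_nonneg (pellOrbit α d X Y v j).1]

lemma infinite_range_pellOrbit (h : X ^ 2 + α * d * Y ^ 2 = 1) (hX : 2 ≤ ‖X‖) (hd : d ≠ 0)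
    (h0 : ‖v.1‖ < ‖(pellStep α d X Y v).1‖) :
    (Set.range fun j => d * (pellOrbit α d X Y v j).1 ^ 2).Infinite := by
  have hm : StrictMono fun j => ‖(pellOrbit α d X Y v j).1‖ :=
    strictMono_nat_of_lt_succ (norm_pellOrbit_lt h hX h0)
  refine Set.infinite_range_of_injective fun i j hij => hm.injective ?_
  have h1 := congrArg norm (mul_left_cancel₀ hd hij)
  rw [norm_pow, norm_pow] at h1
  exact (pow_left_inj₀ (norm_nonneg _) (norm_nonneg _) two_ne_zero).1 h1

end Pell

/-- A product of two infinite sets in the coordinates `s = x + iy`, `t = x - iy` is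
Zariski-dense. -/
lemma eq_zero_of_vanish (f : MvPolynomial (Fin 2) ℂ) (A B : Set ℂ) (hA : A.Infinite)
    (hB : B.Infinite)
    (h : ∀ s ∈ A, ∀ t ∈ B,
      MvPolynomial.eval ![(s + t) / 2, -Complex.I * ((s - t) / 2)] f = 0) : f = 0 := by
  open MvPolynomial in
  let φ : Fin 2 → MvPolynomial (Fin 2) ℂ :=
    ![C (1 / 2) * (X 0 + X 1), C (-Complex.I / 2) * (X 0 - X 1)]
  have hev (s t : ℂ) : eval ![s, t] (bind₁ φ f) =
      eval ![(s + t) / 2, -Complex.I * ((s - t) / 2)] f := by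
    change eval₂Hom (RingHom.id ℂ) ![s, t] (bind₁ φ f) = _
    rw [eval₂Hom_bind₁]
    change eval _ f = _
    congr 2
    funext i
    fin_cases i <;> simp [φ] <;> ring
  have hg : bind₁ φ f = 0 := by
    refine funext_set ![A, B] (fun i => by fin_cases i <;> simpa) fun x hx => ?_
    have hx0 : x 0 ∈ A := by simpa using hx 0 (Set.mem_univ _)
    have hx1 : x 1 ∈ B := by simpa using hx 1 (Set.mem_univ _)
    have hxx : x = ![x 0, x 1] := by funext i; fin_cases i <;> rfl
    rw [hxx, hev, h _ hx0 _ hx1, map_zero]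
  refine MvPolynomial.funext fun x => ?_
  have h1 := hev (x 0 + Complex.I * x 1) (x 0 - Complex.I * x 1)
  have hxx : ![(x 0 + Complex.I * x 1 + (x 0 - Complex.I * x 1)) / 2,
      -Complex.I * ((x 0 + Complex.I * x 1 - (x 0 - Complex.I * x 1)) / 2)] = x := by
    funext i
    fin_cases i
    · simp
    · simp only [Fin.mk_one, Matrix.cons_val_one, Matrix.cons_val_fin_one]
      linear_combination (-x 1) * Complex.I_sq
  rw [hg, hxx, map_zero] at h1
  rw [← h1, map_zero]

/-- The arithmetic input: a Gaussian integer `n` with `2 ∣ d = β - α n²` and `β ∣ 2 n`, for which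
the resulting Pell unit has `‖X‖ ≥ 2`. Here `2 e` stands for `d`. -/
lemma exists_parameters (a b : ℤ) (hab : (a, b) ≠ (0, 0)) :
    ∃ n Y e : ℂ, IsGaussInt n ∧ IsGaussInt Y ∧ IsGaussInt e ∧
      2 * n = (a - b * Complex.I) * Y ∧
      2 * e = (a - b * Complex.I) - (a + b * Complex.I) * n ^ 2 ∧
      2 ≤ ‖(a + b * Complex.I) * n * Y - 1‖ := by
  have hN : 1 ≤ a ^ 2 + b ^ 2 := by
    by_contra! hlt
    apply hab
    have ha : a = 0 := by nlinarith [sq_nonneg a, sq_nonneg b]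
    have hb : b = 0 := by nlinarith [sq_nonneg a, sq_nonneg b]
    rw [ha, hb]
  have hI := Complex.I_sq
  rcases Int.even_or_odd' (a + b) with ⟨c, hc | hc⟩
  · -- With `g = c - b` one has `a - bi = (1 + i)(g - ci)`.
    obtain ⟨g, rfl⟩ : ∃ g, b = c - g := ⟨c - b, by ring⟩
    obtain rfl : a = c + g := by linarith
    have hM : 1 ≤ g ^ 2 + c ^ 2 := by nlinarith
    obtain ⟨u, hu⟩ : (2 : ℤ) ∣ (c + g) + (c - g) * (g ^ 2 + c ^ 2) := by
      rcases Int.even_or_odd' c with ⟨k, rfl | rfl⟩ <;>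
      rcases Int.even_or_odd' g with ⟨l, rfl | rfl⟩ <;>
      · apply Int.dvd_of_emod_eq_zero; ring_nf; omega
    obtain ⟨w, hw⟩ : (2 : ℤ) ∣ (c + g) * (g ^ 2 + c ^ 2) - (c - g) := by
      rcases Int.even_or_odd' c with ⟨k, rfl | rfl⟩ <;>
      rcases Int.even_or_odd' g with ⟨l, rfl | rfl⟩ <;>
      · apply Int.dvd_of_emod_eq_zero; ring_nf; omega
    have hu' := congrArg (Int.cast : ℤ → ℂ) hu
    have hw' := congrArg (Int.cast : ℤ → ℂ) hw
    push_cast at hu' hw'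
    refine ⟨g - c * Complex.I, 1 - Complex.I, u + w * Complex.I, ⟨g, -c, by push_cast; ring⟩,
      ⟨1, -1, by push_cast; ring⟩, ⟨u, w, rfl⟩, ?_, ?_, ?_⟩
    · push_cast
      linear_combination (g - c : ℂ) * hI
    · push_cast
      rw [mul_add, ← hu', ← mul_assoc, ← hw']
      have hI3 : Complex.I ^ 3 = -Complex.I := by rw [pow_succ, hI]; ring
      ring_nf
      rw [hI3, hI]
      ring
    · refine le_trans ?_ (Complex.abs_im_le_norm _)
      have him : ((((c + g : ℤ) : ℂ) + ((c - g : ℤ) : ℂ) * Complex.I) * (g - c * Complex.I) *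
          (1 - Complex.I) - 1).im = ((-2 * (g ^ 2 + c ^ 2) : ℤ) : ℝ) := by
        simp
        ring
      rw [him, ← Int.cast_abs]
      have : (2 : ℤ) ≤ |-2 * (g ^ 2 + c ^ 2)| := by
        rw [abs_of_neg (by linarith)]; linarith
      exact_mod_cast this
  · obtain ⟨k, hk⟩ : (2 : ℤ) ∣ 1 - 9 * (a ^ 2 + b ^ 2) := by
      obtain rfl : a = 2 * c + 1 - b := by linarith
      exact ⟨-4 - 18 * c ^ 2 - 18 * c + 18 * c * b + 9 * b - 9 * b ^ 2, by ring⟩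
    have hk' := congrArg (Int.cast : ℤ → ℂ) hk
    push_cast at hk'
    have hβ : IsGaussInt (a - b * Complex.I) := ⟨a, -b, by push_cast; ring⟩
    refine ⟨3 * (a - b * Complex.I), 6, k * (a - b * Complex.I),
      (isGaussInt_intCast 3).mul hβ, isGaussInt_intCast 6, (isGaussInt_intCast k).mul hβ,
      by ring, ?_, ?_⟩
    · linear_combination
        -(a - b * Complex.I) * hk' - 9 * (a - b * Complex.I) * (b : ℂ) ^ 2 * hI
    · refine le_trans ?_ (Complex.abs_re_le_norm _)
      have hre : (((a : ℂ) + b * Complex.I) * (3 * (a - b * Complex.I)) * 6 - 1).re =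
          ((18 * (a ^ 2 + b ^ 2) - 1 : ℤ) : ℝ) := by
        simp
        ring
      rw [hre, ← Int.cast_abs]
      have : (2 : ℤ) ≤ |18 * (a ^ 2 + b ^ 2) - 1| := le_trans (by linarith) (le_abs_self _)
      exact_mod_cast this

theorem gaussian_integral_points_S2_zariski_dense
    (a b : ℤ) (hab : (a, b) ≠ (0, 0)) :
    ∀ f : MvPolynomial (Fin 2) ℂ,
      (∀ z : ℂ × ℂ,
        (IsGaussInt z.1 ∧ IsGaussInt z.2 ∧
          ∃ w u : ℂ, IsGaussInt w ∧ IsGaussInt u ∧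
            z.1 ^ 2 + z.2 ^ 2 = w ^ 2 ∧
            (z.1 - (a : ℂ)) ^ 2 + (z.2 - (b : ℂ)) ^ 2 = u ^ 2) →
        MvPolynomial.eval ![z.1, z.2] f = 0) → f = 0 := by
  intro f hf
  obtain ⟨n, Y, e, hn, hY, he, hnY, hed, hX⟩ := exists_parameters a b hab
  set α : ℂ := a + b * Complex.I with hα
  set β : ℂ := a - b * Complex.I with hβ
  set X : ℂ := α * n * Y - 1 with hXdef
  have hI := Complex.I_sq
  have gα : IsGaussInt α := ⟨a, b, rfl⟩
  have g1 : IsGaussInt 1 := by simpa using isGaussInt_intCast 1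
  have g0 : IsGaussInt 0 := by simpa using isGaussInt_intCast 0
  have gX : IsGaussInt X := ((gα.mul hn).mul hY).sub g1
  have gd : IsGaussInt (2 * e) := (isGaussInt_intCast 2).mul he
  have hpell : X ^ 2 + α * (2 * e) * Y ^ 2 = 1 := by
    rw [hed, hXdef]
    linear_combination (-α * Y) * hnY
  have hαY : α * Y ≠ 0 := by
    intro h0
    have : X = -1 := by rw [hXdef]; linear_combination n * h0
    rw [this] at hX
    norm_num at hX
  have hd : 2 * e ≠ 0 := by
    intro h0
    rw [h0] at hpell
    have h2 := congrArg norm (show X ^ 2 = 1 by linear_combination hpell)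
    rw [norm_pow, norm_one] at h2
    nlinarith
  have hp0 : ‖((0, 1) : ℂ × ℂ).1‖ < ‖(pellStep α (2 * e) X Y (0, 1)).1‖ := by
    simpa only [pellStep, mul_zero, zero_add, mul_one, norm_zero] using norm_pos_iff.2 hαY
  have hq0 : ‖((1, n) : ℂ × ℂ).1‖ < ‖(pellStep α (2 * e) X Y (1, n)).1‖ := by
    -- The new first coordinate is `X + α n Y = 2 X + 1`.
    have h1 : 2 * X = (pellStep α (2 * e) X Y (1, n)).1 - 1 := by
      simp only [pellStep]; rw [hXdef]; ring
    have h2 := norm_sub_le (pellStep α (2 * e) X Y (1, n)).1 1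
    rw [← h1, norm_mul, Complex.norm_two, norm_one] at h2
    simp only [norm_one]
    linarith
  refine eq_zero_of_vanish f _ _ (infinite_range_pellOrbit hpell hX hd hp0)
    (infinite_range_pellOrbit hpell hX hd hq0) ?_
  rintro _ ⟨i, rfl⟩ _ ⟨j, rfl⟩
  have fp := pellOrbit_form hpell (0, 1) i
  have fq := pellOrbit_form hpell (1, n) j
  obtain ⟨gp, gm⟩ := isGaussInt_pellOrbit (v := (0, 1)) gα gd gX hY ⟨g0, g1⟩ i
  obtain ⟨gq, gl⟩ := isGaussInt_pellOrbit (v := (1, n)) gα gd gX hY ⟨g1, hn⟩ j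
  simp only at fp fq ⊢
  generalize pellOrbit α (2 * e) X Y (0, 1) i = P at *
  generalize pellOrbit α (2 * e) X Y (1, n) j = Q at *
  obtain ⟨p, m⟩ := P
  obtain ⟨q, l⟩ := Q
  simp only at fp fq gp gm gq gl ⊢
  have gpp := gp.mul gp
  have gqq := gq.mul gq
  have ex : (2 * e * p ^ 2 + 2 * e * q ^ 2) / 2 = e * (p * p + q * q) := by ring
  have ey : -Complex.I * ((2 * e * p ^ 2 - 2 * e * q ^ 2) / 2) =
      -Complex.I * (e * (p * p - q * q)) := by ring
  rw [ex, ey]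
  refine hf (e * (p * p + q * q), -Complex.I * (e * (p * p - q * q)))
    ⟨he.mul (gpp.add gqq), isGaussInt_I.neg.mul (he.mul (gpp.sub gqq)),
      2 * e * (p * q), α * (m * l), gd.mul (gp.mul gq), gα.mul (gm.mul gl), ?_, ?_⟩
  · simp only
    linear_combination (e * (p * p - q * q)) ^ 2 * hI
  · simp only
    have hs : 2 * e * p ^ 2 - α = -α * m ^ 2 := by linear_combination fp
    have ht : 2 * e * q ^ 2 - β = -α * l ^ 2 := by linear_combination fq + hed
    have hfac : (e * (p * p + q * q) - (a : ℂ)) ^ 2 +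
        (-Complex.I * (e * (p * p - q * q)) - (b : ℂ)) ^ 2 =
        (2 * e * p ^ 2 - α) * (2 * e * q ^ 2 - β) := by
      rw [hα, hβ]
      linear_combination ((e * (p * p - q * q)) ^ 2 + (b : ℂ) ^ 2) * hI
    rw [hfac, hs, ht]
    ring
end
end
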